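/- Let (v,u,θ) be a classical solution of the one-dimensional compressible Navier–Stokes system on ℝ whose initial data are (M,m)-bounded for some M, m > 0 and which is K-volume-bounded for some K ≥ 1. Then lim_{t→∞} ‖v_x(·,t)‖_{L²(ℝ)} = 0. -/

import Mathlib

/-!
The proof is an energy method in which every constant is uniform in time, although no positive lower
bound and no upper bound for the temperature are available uniformly in time.

The relative entropy `u² / 2 + R (v - log v - 1) + c_v (θ - log θ - 1)` decreases (`balance_en`) and
its dissipation bounds the space-time integrals of `u_x² / θ` and `(θ_x / θ)²`. A Poincaré-type
inequality (`temp_bound`) bounds the high part `(θ - 2)₊²` of the temperature by `(θ_x / θ)²`, with a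
constant depending on the entropy only. Multiplying the energy equation by `gg θ`, the derivative of
the truncated temperature `GG θ = (θ - 2)₊³ / θ²`, gives control of `u_x²` at high temperatures, hence
of the space-time integral of `u_x²` (`dU_bound`).

For the gradient of `v` the equation `(v_x / v)_t = (u_x / v)_x` combines with the momentum equation
into a balance for `μ/2 (v_x / v)² - u v_x / v`, which dissipates `θ v_x²` but produces `θ_x v_x`. At
high temperatures this production is not controlled by the entropy dissipation, and it is cancelled by
adding `(R c_v / κ) GG(θ) log v` to the functional (`fv`, `balance_fv`). It follows that `v_x` is
bounded in `L²` uniformly in time and square integrable over space-time (`vx_bound`).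

For the decay (`vx_small`), fix a large `t`. The total dissipation over `[t - 1, t]` is small, so at
some time `s` in this interval `u_x`, `v_x` and `θ_x / θ` are small in `L²`. The functional `fv` is
then small at `s`, hence at `t`. The term `∫ u v_x / v` at time `t` is small because `u` changes little
between `s` and `t` (`balance_vel`), while `∫ u(s) (log v)_x(t) = -∫ u_x(s) log v(t)`; the term with
`GG` is small by `balance_gg_upper`. What remains is `∫ (v_x / v)²` at time `t`.

The definition of a classical solution provides neither mixed derivatives nor joint continuity, so all
balance laws are derived in integrated form (`balance`), and the equation for `v_x / v` is obtained by
testing against smooth functions (`prim_q`).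
-/

open MeasureTheory Filter Set

noncomputable section

/-- Partial derivative in the spatial variable. -/
def pdx (f : ℝ → ℝ → ℝ) (x t : ℝ) : ℝ := deriv (fun y => f y t) x

/-- Partial derivative in the time variable. -/
def pdt (f : ℝ → ℝ → ℝ) (x t : ℝ) : ℝ := deriv (fun s => f x s) t

/-- The `L²(ℝ)` norm, valued in `ℝ≥0∞`. -/
def L2 (f : ℝ → ℝ) : ENNReal := eLpNorm f 2 volume

/-- The `H¹(ℝ)` norm, valued in `ℝ≥0∞`. -/
def H1 (f : ℝ → ℝ) : ENNReal := L2 f + L2 (deriv f)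

/-- The `H²(ℝ)` norm, valued in `ℝ≥0∞`. -/
def H2 (f : ℝ → ℝ) : ENNReal := L2 f + L2 (deriv f) + L2 (deriv (deriv f))

/-- A classical solution of the 1-D compressible Navier–Stokes system in Lagrangian
coordinates on `ℝ`, together with the regularity and far-field conditions. -/
structure IsClassicalSolution (μ κ R cv : ℝ) (v u θ : ℝ → ℝ → ℝ) : Prop where
  v_pos : ∀ x t : ℝ, 0 ≤ t → 0 < v x t
  θ_pos : ∀ x t : ℝ, 0 ≤ t → 0 < θ x t
  smooth_x_v : ∀ t : ℝ, 0 ≤ t → ContDiff ℝ 2 (fun x => v x t)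
  smooth_x_u : ∀ t : ℝ, 0 ≤ t → ContDiff ℝ 2 (fun x => u x t)
  smooth_x_θ : ∀ t : ℝ, 0 ≤ t → ContDiff ℝ 2 (fun x => θ x t)
  smooth_t_v : ∀ x t : ℝ, 0 ≤ t → DifferentiableAt ℝ (fun s => v x s) t
  smooth_t_u : ∀ x t : ℝ, 0 ≤ t → DifferentiableAt ℝ (fun s => u x s) t
  smooth_t_θ : ∀ x t : ℝ, 0 ≤ t → DifferentiableAt ℝ (fun s => θ x s) t
  eq_mass : ∀ x t : ℝ, 0 ≤ t → pdt v x t = pdx u x t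
  eq_momentum : ∀ x t : ℝ, 0 ≤ t →
    pdt u x t + pdx (fun y s => R * θ y s / v y s) x t
      = μ * pdx (fun y s => pdx u y s / v y s) x t
  eq_energy : ∀ x t : ℝ, 0 ≤ t →
    cv * pdt θ x t + (R * θ x t / v x t) * pdx u x t
      = κ * pdx (fun y s => pdx θ y s / v y s) x t + μ * (pdx u x t) ^ 2 / v x t
  reg_H1 : ∀ T : ℝ, 0 ≤ T → ∃ B : ℝ, ∀ t ∈ Icc (0 : ℝ) T,
    H1 (fun x => v x t - 1) + H1 (fun x => u x t) + H1 (fun x => θ x t - 1)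
      ≤ ENNReal.ofReal B
  reg_H2 : ∀ T : ℝ, 0 < T →
    (∫⁻ t in Icc (0 : ℝ) T,
      (H2 (fun x => u x t) ^ 2 + H2 (fun x => θ x t - 1) ^ 2)) < ⊤
  farfield_v : ∀ t : ℝ, 0 ≤ t → Tendsto (fun x => v x t) (cocompact ℝ) (nhds 1)
  farfield_u : ∀ t : ℝ, 0 ≤ t → Tendsto (fun x => u x t) (cocompact ℝ) (nhds 0)
  farfield_θ : ∀ t : ℝ, 0 ≤ t → Tendsto (fun x => θ x t) (cocompact ℝ) (nhds 1)

/-- The initial data of `(v, u, θ)` are `(M, m)`-bounded. -/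
def InitBounded (M m : ℝ) (v u θ : ℝ → ℝ → ℝ) : Prop :=
  H1 (fun x => v x 0 - 1) + H1 (fun x => u x 0) + H1 (fun x => θ x 0 - 1)
      ≤ ENNReal.ofReal M
    ∧ (∀ x : ℝ, m ≤ v x 0) ∧ (∀ x : ℝ, m ≤ θ x 0)

/-- The solution is `K`-volume-bounded. -/
def VolBounded (K : ℝ) (v : ℝ → ℝ → ℝ) : Prop :=
  ∀ x t : ℝ, 0 ≤ t → K⁻¹ ≤ v x t ∧ v x t ≤ K

end

namespace NSDecay

/-! ### Calculus on the line -/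

/-- The fundamental theorem of calculus from `-∞`, where an integrable `F` with integrable derivative
vanishes. -/
theorem sup_bound {F F' : ℝ → ℝ} (h : ∀ x, HasDerivAt F (F' x) x)
    (hF : Integrable F) (hF' : Integrable F') (x : ℝ) : |F x| ≤ ∫ y, |F' y| := by
  have ht : Tendsto F atBot (nhds 0) :=
    tendsto_zero_of_hasDerivAt_of_integrableOn_Iic (a := x) (fun y _ => h y)
      hF'.integrableOn hF.integrableOn
  have := integral_Iic_of_hasDerivAt_of_tendsto' (a := x) (fun y _ => h y) hF'.integrableOn ht
  rw [sub_zero] at this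
  rw [← this]
  calc |∫ y in Iic x, F' y| ≤ ∫ y in Iic x, |F' y| := abs_integral_le_integral_abs
    _ ≤ ∫ y, |F' y| := setIntegral_le_integral hF'.abs (Eventually.of_forall fun _ => abs_nonneg _)

/-- An inequality between densities that holds up to an exact derivative `Φ'` passes to the
integrals, since the flux `Φ` vanishes at infinity. -/
theorem integral_le_of_flux {f Φ Φ' r : ℝ → ℝ} (h : ∀ x, HasDerivAt Φ (Φ' x) x)
    (hΦ : Integrable Φ) (hΦ' : Integrable Φ') (hf : Integrable f) (hr : Integrable r)
    (hle : ∀ x, f x ≤ Φ' x + r x) : ∫ x, f x ≤ ∫ x, r x := by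
  have h0 : ∫ x, Φ' x = 0 := integral_eq_zero_of_hasDerivAt_of_integrable h hΦ' hΦ
  calc ∫ x, f x ≤ ∫ x, (Φ' x + r x) := integral_mono hf (hΦ'.add hr) hle
    _ = ∫ x, r x := by rw [integral_add hΦ' hr, h0, zero_add]

theorem mul_int {α : Type*} [MeasurableSpace α] {m : Measure α} {f g : α → ℝ}
    (hf : MemLp f 2 m) (hg : MemLp g 2 m) : Integrable (fun x => f x * g x) m :=
  hf.integrable_mul hg

theorem sq_int {α : Type*} [MeasurableSpace α] {m : Measure α} {f : α → ℝ}
    (hf : MemLp f 2 m) : Integrable (fun x => f x ^ 2) m := hf.integrable_sq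

/-- The one-dimensional Sobolev embedding, with a free weight `l`. -/
theorem sobolev_eps {f f' : ℝ → ℝ} (h : ∀ x, HasDerivAt f (f' x) x)
    (hf : MemLp f 2 volume) (hf' : MemLp f' 2 volume) (x : ℝ) {l : ℝ} (hl : 0 < l) :
    f x ^ 2 ≤ l⁻¹ * (∫ y, f y ^ 2) + l * ∫ y, f' y ^ 2 := by
  have h1 := sup_bound (F := fun y => f y ^ 2) (F' := fun y => 2 * f y * f' y)
    (fun y => by simpa using (h y).fun_pow 2) (sq_int hf)
    (((mul_int hf hf').const_mul 2).congr (Eventually.of_forall fun y => by ring)) x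
  rw [abs_of_nonneg (sq_nonneg _)] at h1
  refine h1.trans ?_
  rw [← integral_const_mul, ← integral_const_mul,
    ← integral_add ((sq_int hf).const_mul _) ((sq_int hf').const_mul _)]
  refine integral_mono ?_ (((sq_int hf).const_mul _).add ((sq_int hf').const_mul _)) ?_
  · exact (((mul_int hf hf').const_mul 2).congr (Eventually.of_forall fun y => by ring)).abs
  · intro y
    have h2 : l * l⁻¹ = 1 := mul_inv_cancel₀ hl.ne'
    have h3 : 0 < l⁻¹ := inv_pos.2 hl
    have e1 : l⁻¹ * f y ^ 2 + l * f' y ^ 2 - 2 * f y * f' y = l⁻¹ * (f y - l * f' y) ^ 2 := by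
      field_simp
      ring
    have e2 : l⁻¹ * f y ^ 2 + l * f' y ^ 2 + 2 * f y * f' y = l⁻¹ * (f y + l * f' y) ^ 2 := by
      field_simp
      ring
    have := mul_nonneg h3.le (sq_nonneg (f y - l * f' y))
    have := mul_nonneg h3.le (sq_nonneg (f y + l * f' y))
    simp only
    rw [abs_le]
    constructor <;> linarith

theorem sobolev {f f' : ℝ → ℝ} (h : ∀ x, HasDerivAt f (f' x) x)
    (hf : MemLp f 2 volume) (hf' : MemLp f' 2 volume) (x : ℝ) :
    f x ^ 2 ≤ (∫ y, f y ^ 2) + ∫ y, f' y ^ 2 := by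
  simpa using sobolev_eps h hf hf' x one_pos

/-! ### Elementary inequalities for the relative entropy and the truncations -/

/-- The relative entropy is quadratic near `1` and grows linearly; at `a = b ^ 2` the bound reduces to
`log b ≤ b - 1`. -/
theorem ent_lower {a : ℝ} (ha : 0 < a) : (a - 1) ^ 2 / (2 * (1 + a)) ≤ a - Real.log a - 1 := by
  obtain ⟨b, hb, rfl⟩ : ∃ b, 0 < b ∧ a = b ^ 2 := ⟨√a, Real.sqrt_pos.2 ha, (Real.sq_sqrt ha.le).symm⟩
  have h1 := Real.log_le_sub_one_of_pos hb
  have h2 : Real.log (b ^ 2) = 2 * Real.log b := by rw [Real.log_pow]; norm_num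
  rw [div_le_iff₀ (by positivity), h2]
  have h3 : b ^ 2 - 2 * Real.log b - 1 ≥ (b - 1) ^ 2 := by nlinarith
  have h4 : (b ^ 2 - 1) ^ 2 ≤ (b - 1) ^ 2 * (2 * (1 + b ^ 2)) := by
    have : (b - 1) ^ 2 * (2 * (1 + b ^ 2)) - (b ^ 2 - 1) ^ 2 = ((b - 1) ^ 2) ^ 2 := by ring
    nlinarith [sq_nonneg ((b - 1) ^ 2)]
  have h5 : (0 : ℝ) ≤ 2 * (1 + b ^ 2) := by positivity
  nlinarith [mul_le_mul_of_nonneg_right h3 h5]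

theorem ent_upper {a : ℝ} (ha : 0 < a) : a - Real.log a - 1 ≤ (a - 1) ^ 2 / a := by
  have h1 := Real.one_sub_inv_le_log_of_pos ha
  have : (a - 1) ^ 2 / a = a - 1 - (1 - a⁻¹) := by field_simp
  rw [this]; linarith

theorem ent_nonneg {a : ℝ} (ha : 0 < a) : 0 ≤ a - Real.log a - 1 := by
  linarith [Real.log_le_sub_one_of_pos ha]

theorem abs_log_le {a K : ℝ} (hK : 1 ≤ K) (ha : K⁻¹ ≤ a) : |Real.log a| ≤ K * |a - 1| := by
  have hK0 : 0 < K := by linarith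
  have ha0 : 0 < a := (inv_pos.2 hK0).trans_le ha
  have h1 := Real.log_le_sub_one_of_pos ha0
  have h2 := Real.one_sub_inv_le_log_of_pos ha0
  have h3 : 1 - a⁻¹ = (a - 1) * a⁻¹ := by field_simp
  have h4 : a⁻¹ ≤ K := inv_le_of_inv_le₀ hK0 ha
  have h5 : 0 < a⁻¹ := inv_pos.2 ha0
  rw [abs_le]
  have h6 : (a - 1) ≤ |a - 1| := le_abs_self _
  have h7 : -(a - 1) ≤ |a - 1| := neg_le_abs _
  have h8 := abs_nonneg (a - 1)
  constructor
  · rw [h3] at h2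
    nlinarith
  · nlinarith

/-- The positive part of `a - 2`; it cuts off temperatures near the equilibrium value `1`. -/
noncomputable def sp (a : ℝ) : ℝ := max (a - 2) 0

/-- The truncated linear function `(a - 2)₊³ / a²`, of class `C²` on `(0, ∞)`. -/
noncomputable def GG (a : ℝ) : ℝ := sp a ^ 3 / a ^ 2

/-- The derivative of `GG`. -/
noncomputable def gg (a : ℝ) : ℝ := 3 * sp a ^ 2 / a ^ 2 - 2 * sp a ^ 3 / a ^ 3

/-- The derivative of `gg`. -/
noncomputable def dgg (a : ℝ) : ℝ := 6 * sp a * (a - sp a) ^ 2 / a ^ 4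

/-- A function of the temperature that vanishes to fourth order at the equilibrium and grows
linearly. -/
noncomputable def HH (a : ℝ) : ℝ := (a - 1) ^ 4 / (1 + a) ^ 3

/-- The derivative of `HH`. -/
noncomputable def dHH (a : ℝ) : ℝ := 4 * (a - 1) ^ 3 / (1 + a) ^ 3 - 3 * (a - 1) ^ 4 / (1 + a) ^ 4

/-- A function of the temperature that vanishes to sixth order at the equilibrium and grows
quadratically. -/
noncomputable def jj (a : ℝ) : ℝ := (a - 1) ^ 6 / (1 + a) ^ 4

theorem sp_nonneg (a : ℝ) : 0 ≤ sp a := le_max_right _ _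

theorem sp_cases (a : ℝ) : (a ≤ 2 ∧ sp a = 0) ∨ (2 < a ∧ sp a = a - 2) := by
  rcases le_or_gt a 2 with h | h
  · exact Or.inl ⟨h, max_eq_right (by linarith)⟩
  · exact Or.inr ⟨h, max_eq_left (by linarith)⟩

theorem continuous_sp : Continuous sp := by unfold sp; fun_prop

theorem hasDerivAt_sp_pow (n : ℕ) (a : ℝ) :
    HasDerivAt (fun b => sp b ^ (n + 2)) ((n + 2) * sp a ^ (n + 1)) a := by
  rcases lt_trichotomy a 2 with h | h | h
  · have h1 : sp a = 0 := max_eq_right (by linarith)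
    rw [h1]
    have : (fun b => sp b ^ (n + 2)) =ᶠ[nhds a] fun _ => 0 := by
      filter_upwards [gt_mem_nhds h] with b hb
      have : sp b = 0 := max_eq_right (by linarith)
      simp [this]
    simpa using (hasDerivAt_const a (0 : ℝ)).congr_of_eventuallyEq this
  · subst h
    have h1 : sp 2 = 0 := by simp [sp]
    rw [h1, hasDerivAt_iff_isLittleO]
    have : (fun b : ℝ => sp b ^ (n + 2) - sp 2 ^ (n + 2) - (b - 2) • (((n : ℝ) + 2) * 0 ^ (n + 1)))
        =O[nhds 2] fun b => (b - 2) ^ (n + 2) := by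
      refine Asymptotics.IsBigO.of_bound 1 (Eventually.of_forall fun b => ?_)
      simp only [h1, ne_eq, Nat.add_eq_zero_iff, one_ne_zero, and_false, not_false_eq_true,
        zero_pow, mul_zero, smul_zero, sub_zero, norm_pow, one_mul, OfNat.ofNat_ne_zero]
      refine pow_le_pow_left₀ (norm_nonneg _) ?_ _
      rw [Real.norm_eq_abs, Real.norm_eq_abs, abs_of_nonneg (sp_nonneg b)]
      exact max_le (le_abs_self _) (abs_nonneg _)
    refine this.trans_isLittleO ?_
    have h2 := Asymptotics.isLittleO_pow_sub_sub (2 : ℝ) (m := n + 2) (by omega)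
    refine Asymptotics.IsLittleO.of_norm_left ?_
    simpa using h2
  · have h1 : sp a = a - 2 := max_eq_left (by linarith)
    rw [h1]
    have : (fun b => sp b ^ (n + 2)) =ᶠ[nhds a] fun b => (b - 2) ^ (n + 2) := by
      filter_upwards [lt_mem_nhds h] with b hb
      have : sp b = b - 2 := max_eq_left (by linarith)
      rw [this]
    have h3 := (((hasDerivAt_id a).sub_const (2 : ℝ)).fun_pow (n + 2))
    refine (h3.congr_of_eventuallyEq this).congr_deriv ?_
    simp

theorem hasDerivAt_GG {a : ℝ} (ha : 0 < a) : HasDerivAt GG (gg a) a := by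
  have h3 := hasDerivAt_sp_pow 1 a
  have := h3.fun_div ((hasDerivAt_id a).fun_pow 2) (by simp [ha.ne'])
  refine this.congr_deriv ?_
  simp [gg]
  field_simp
  ring

theorem hasDerivAt_gg {a : ℝ} (ha : 0 < a) : HasDerivAt gg (dgg a) a := by
  have h2 := hasDerivAt_sp_pow 0 a
  have h3 := hasDerivAt_sp_pow 1 a
  have := ((h2.const_mul 3).fun_div ((hasDerivAt_id a).fun_pow 2) (by simp [ha.ne'])).fun_sub
    ((h3.const_mul 2).fun_div ((hasDerivAt_id a).fun_pow 3) (by simp [ha.ne']))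
  refine this.congr_deriv ?_
  simp [dgg]
  field_simp
  ring

theorem hasDerivAt_HH {a : ℝ} (ha : 0 < a) : HasDerivAt HH (dHH a) a := by
  have h1 : (1 + a) ≠ 0 := by positivity
  have := (((hasDerivAt_id a).sub_const (1 : ℝ)).fun_pow 4).fun_div
    (((hasDerivAt_id a).const_add (1 : ℝ)).fun_pow 3) (by simp [h1])
  refine this.congr_deriv ?_
  simp [dHH]
  field_simp

theorem gg_nonneg {a : ℝ} (ha : 0 < a) : 0 ≤ gg a := by
  unfold gg
  rcases sp_cases a with ⟨h, e⟩ | ⟨h, e⟩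
  · simp [e]
  · rw [e]
    have : 3 * (a - 2) ^ 2 / a ^ 2 - 2 * (a - 2) ^ 3 / a ^ 3 = (a - 2) ^ 2 * (a + 4) / a ^ 3 := by
      field_simp; ring
    rw [this]; positivity

theorem one_sub_gg {a : ℝ} (h : 2 < a) : 1 - gg a = 4 * (3 * a - 4) / a ^ 3 := by
  have ha : 0 < a := by linarith
  rcases sp_cases a with ⟨h', e⟩ | ⟨h', e⟩
  · linarith
  · unfold gg
    rw [e]; field_simp; ring

theorem gg_le_one {a : ℝ} : gg a ≤ 1 := by
  rcases sp_cases a with ⟨h, e⟩ | ⟨h, e⟩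
  · simp [gg, e]
  · have := one_sub_gg h
    have h2 : 0 ≤ 4 * (3 * a - 4) / a ^ 3 := div_nonneg (by linarith) (by positivity)
    linarith

theorem gg_mul_sq_le {a : ℝ} (ha : 0 < a) : gg a * a ^ 2 ≤ 3 * sp a ^ 2 := by
  have : gg a * a ^ 2 = 3 * sp a ^ 2 - 2 * sp a ^ 3 / a := by
    unfold gg; field_simp
  rw [this]
  have : 0 ≤ 2 * sp a ^ 3 / a := by have := sp_nonneg a; positivity
  linarith

theorem one_sub_gg_sq_le {a : ℝ} (ha : 0 < a) : (1 - gg a) ^ 2 * a ≤ 18 := by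
  rcases sp_cases a with ⟨h, e⟩ | ⟨h, e⟩
  · simp [gg, e]; linarith
  · rw [one_sub_gg h]
    have h1 : 0 ≤ 4 * (3 * a - 4) / a ^ 3 := div_nonneg (by linarith) (by positivity)
    have h2 : 4 * (3 * a - 4) / a ^ 3 ≤ 12 / a ^ 2 := by
      rw [div_le_div_iff₀ (by positivity) (by positivity)]
      have : 0 < a ^ 2 := by positivity
      nlinarith
    calc (4 * (3 * a - 4) / a ^ 3) ^ 2 * a ≤ (12 / a ^ 2) ^ 2 * a := by gcongr
      _ = 144 / a ^ 3 := by field_simp; norm_num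
      _ ≤ 18 := by
        rw [div_le_iff₀ (by positivity)]
        have : (2 : ℝ) ^ 3 ≤ a ^ 3 := pow_le_pow_left₀ (by norm_num) h.le 3
        linarith

theorem dgg_nonneg {a : ℝ} (ha : 0 < a) : 0 ≤ dgg a := by
  have := sp_nonneg a
  unfold dgg; positivity

theorem dgg_le {a : ℝ} (ha : 0 < a) : dgg a ≤ 12 / a ^ 2 := by
  unfold dgg
  rcases sp_cases a with ⟨h, e⟩ | ⟨h, e⟩
  · simp [e]; positivity
  · rw [e, div_le_div_iff₀ (by positivity) (by positivity)]
    have : 0 < a ^ 2 := by positivity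
    have h1 : 2 * (a - 2) ≤ a ^ 2 := by nlinarith [sq_nonneg (a - 1)]
    have h2 : a - (a - 2) = 2 := by ring
    rw [h2]
    nlinarith

theorem GG_nonneg {a : ℝ} : 0 ≤ GG a := by
  have := sp_nonneg a
  unfold GG; positivity

theorem GG_le_sp {a : ℝ} (ha : 0 < a) : GG a ≤ sp a := by
  unfold GG
  rw [div_le_iff₀ (by positivity)]
  have h0 := sp_nonneg a
  have h1 : sp a ≤ a := by rcases sp_cases a with ⟨h, e⟩ | ⟨h, e⟩ <;> rw [e] <;> linarith
  have := pow_le_pow_left₀ h0 h1 2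
  nlinarith

theorem GG_le_sp_sq {a : ℝ} (ha : 0 < a) : GG a ≤ sp a ^ 2 := by
  unfold GG
  rw [div_le_iff₀ (by positivity)]
  have h1 : sp a ≤ a ^ 2 := by
    rcases sp_cases a with ⟨h, e⟩ | ⟨h, e⟩ <;> rw [e]
    · positivity
    · nlinarith
  nlinarith [sq_nonneg (sp a)]

theorem sp_le {a : ℝ} (ha : 0 < a) : sp a ≤ 3 * ((a - 1) ^ 2 / (1 + a)) := by
  rw [← mul_div_assoc, le_div_iff₀ (by positivity)]
  rcases sp_cases a with ⟨h, e⟩ | ⟨h, e⟩ <;> rw [e]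
  · rw [zero_mul]; positivity
  · nlinarith

theorem sp_sq_le_jj {a : ℝ} (ha : 0 < a) : sp a ^ 2 ≤ 729 * jj a := by
  unfold jj
  rw [← mul_div_assoc, le_div_iff₀ (by positivity)]
  rcases sp_cases a with ⟨h, e⟩ | ⟨h, e⟩ <;> rw [e]
  · simp; positivity
  · have h1 : (1 + a) ^ 4 ≤ (3 * (a - 1)) ^ 4 := pow_le_pow_left₀ (by linarith) (by linarith) 4
    have h2 : (a - 2) ^ 2 ≤ (a - 1) ^ 2 := pow_le_pow_left₀ (by linarith) (by linarith) 2
    calc (a - 2) ^ 2 * (1 + a) ^ 4 ≤ (a - 1) ^ 2 * (3 * (a - 1)) ^ 4 := by gcongr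
      _ = 81 * (a - 1) ^ 6 := by ring
      _ ≤ 729 * (a - 1) ^ 6 := by
        have : 0 ≤ (a - 1) ^ 6 := by positivity
        linarith

theorem sp_le_abs {a : ℝ} : sp a ≤ |a - 1| := by
  rcases sp_cases a with ⟨h, e⟩ | ⟨h, e⟩ <;> rw [e]
  · positivity
  · rw [abs_of_nonneg] <;> linarith

/-- The weights `1 / a` and `gg a` together dominate a constant, so that dissipation weighted by them
controls unweighted dissipation. -/
theorem one_le_inv_gg {a : ℝ} (ha : 0 < a) : 1 ≤ 4 / a + 2 * gg a := by
  rcases le_or_gt a 4 with h | h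
  · have : 1 ≤ 4 / a := by rw [le_div_iff₀ ha]; linarith
    linarith [gg_nonneg ha]
  · have h1 := one_sub_gg (a := a) (by linarith)
    have : 4 * (3 * a - 4) / a ^ 3 ≤ 1 / 2 := by
      rw [div_le_iff₀ (by positivity)]
      have : 16 * a ≤ a ^ 3 := by nlinarith [sq_nonneg (a - 4), mul_pos ha ha]
      nlinarith [sq_nonneg (a - 4)]
    have : 0 < 4 / a := by positivity
    linarith

theorem HH_nonneg {a : ℝ} (ha : 0 < a) : 0 ≤ HH a := by unfold HH; positivity

theorem jj_nonneg {a : ℝ} : 0 ≤ jj a := by unfold jj; positivity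

theorem jj_eq {a : ℝ} (ha : 0 < a) : jj a = HH a * ((a - 1) ^ 2 / (1 + a)) := by
  unfold jj HH; field_simp

/-- The chain-rule factor in `(HH θ)_x = (dHH θ * θ) (θ_x / θ)` is square integrable with `jj`. -/
theorem dHH_sq_le {a : ℝ} (ha : 0 < a) : (dHH a * a) ^ 2 ≤ 49 * jj a := by
  have e : dHH a * a = ((a - 1) ^ 3 / (1 + a) ^ 2) * ((4 - 3 * ((a - 1) / (1 + a))) * (a / (1 + a))) := by
    unfold dHH; field_simp
  have h1 : |(a - 1) / (1 + a)| ≤ 1 := by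
    rw [abs_le]
    constructor
    · rw [le_div_iff₀ (by positivity)]; linarith
    · rw [div_le_iff₀ (by positivity)]; linarith
  have h2 : a / (1 + a) ≤ 1 := by rw [div_le_iff₀ (by positivity)]; linarith
  have h2' : 0 ≤ a / (1 + a) := by positivity
  have h3 : (4 - 3 * ((a - 1) / (1 + a))) ^ 2 ≤ 7 ^ 2 := by
    rw [abs_le] at h1
    apply pow_le_pow_left₀ <;> linarith
  have h4 : (a / (1 + a)) ^ 2 ≤ 1 := pow_le_one₀ h2' h2
  have h5 : jj a = ((a - 1) ^ 3 / (1 + a) ^ 2) ^ 2 := by unfold jj; field_simp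
  rw [e, h5, mul_pow _ (_ * _) 2, mul_pow _ _ 2, mul_comm 49]
  refine mul_le_mul_of_nonneg_left ?_ (sq_nonneg _)
  nlinarith [sq_nonneg (a / (1 + a)), sq_nonneg (4 - 3 * ((a - 1) / (1 + a)))]

/-- Near vanishing temperature, where the weight `a` degenerates, `HH a` is bounded below. -/
theorem one_le_HH {a : ℝ} (ha : 0 < a) : 1 ≤ 2 * a + 54 * HH a := by
  rcases le_or_gt (1 / 2) a with h | h
  · linarith [HH_nonneg ha]
  · have : 1 / 54 ≤ HH a := by
      unfold HH
      rw [le_div_iff₀ (by positivity)]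
      have h1 : (1 / 2 : ℝ) ^ 4 ≤ (1 - a) ^ 4 := pow_le_pow_left₀ (by norm_num) (by linarith) 4
      have h2 : (1 + a) ^ 3 ≤ (3 / 2 : ℝ) ^ 3 := pow_le_pow_left₀ (by linarith) (by linarith) 3
      have h3 : (a - 1) ^ 4 = (1 - a) ^ 4 := by ring
      rw [h3]; norm_num at *; linarith
    linarith

/-- The squared deviation is controlled by the relative entropy up to `a = 2` and by `jj` beyond. -/
theorem sq_le_ent_jj {a : ℝ} (ha : 0 < a) :
    (a - 1) ^ 2 ≤ 3 * ((a - 1) ^ 2 / (1 + a)) + 81 * jj a := by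
  rcases le_or_gt a 2 with h | h
  · have : (a - 1) ^ 2 ≤ 3 * ((a - 1) ^ 2 / (1 + a)) := by
      rw [← mul_div_assoc, le_div_iff₀ (by positivity)]
      nlinarith [sq_nonneg (a - 1)]
    linarith [jj_nonneg (a := a)]
  · have : (a - 1) ^ 2 ≤ 81 * jj a := by
      unfold jj
      rw [← mul_div_assoc, le_div_iff₀ (by positivity)]
      have h1 : (1 + a) ^ 4 ≤ (3 * (a - 1)) ^ 4 := pow_le_pow_left₀ (by linarith) (by linarith) 4
      calc (a - 1) ^ 2 * (1 + a) ^ 4 ≤ (a - 1) ^ 2 * (3 * (a - 1)) ^ 4 := by gcongr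
        _ = 81 * (a - 1) ^ 6 := by ring
    have : 0 ≤ (a - 1) ^ 2 / (1 + a) := by positivity
    linarith

end NSDecay

namespace NSDecay

/-! ### The solution as a family of spatial slices -/

/-- The space-time measure on `[0, T] × ℝ`; the first coordinate is time. -/
noncomputable def slab (T : ℝ) : Measure (ℝ × ℝ) := (volume.restrict (Icc 0 T)).prod volume

/-- A solution in time-first notation, together with its spatial derivatives. All functions are
defined for all real times; for negative times they are frozen at their value at time zero, so only
the evolution equations `tv`, `tu`, `tθ` are restricted to positive times. -/
structure Flow where
  (μ κ R cv K : ℝ)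
  (v u θ vx ux θx uxx θxx : ℝ → ℝ → ℝ)
  hμ : 0 < μ
  hκ : 0 < κ
  hR : 0 < R
  hcv : 0 < cv
  hK : 1 ≤ K
  mv : Measurable (Function.uncurry v)
  mu : Measurable (Function.uncurry u)
  mθ : Measurable (Function.uncurry θ)
  mvx : Measurable (Function.uncurry vx)
  mux : Measurable (Function.uncurry ux)
  mθx : Measurable (Function.uncurry θx)
  muxx : Measurable (Function.uncurry uxx)
  mθxx : Measurable (Function.uncurry θxx)
  dv : ∀ t x, HasDerivAt (v t) (vx t x) x
  du : ∀ t x, HasDerivAt (u t) (ux t x) x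
  dθ : ∀ t x, HasDerivAt (θ t) (θx t x) x
  dux : ∀ t x, HasDerivAt (ux t) (uxx t x) x
  dθx : ∀ t x, HasDerivAt (θx t) (θxx t x) x
  contv : ∀ x, Continuous fun t => v t x
  contu : ∀ x, Continuous fun t => u t x
  contθ : ∀ x, Continuous fun t => θ t x
  tv : ∀ t x, 0 < t → HasDerivAt (fun s => v s x) (ux t x) t
  tu : ∀ t x, 0 < t → HasDerivAt (fun s => u s x)
    (μ * (uxx t x / v t x - ux t x * vx t x / v t x ^ 2)
      - R * (θx t x / v t x - θ t x * vx t x / v t x ^ 2)) t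
  tθ : ∀ t x, 0 < t → HasDerivAt (fun s => θ s x)
    ((κ * (θxx t x / v t x - θx t x * vx t x / v t x ^ 2) + μ * ux t x ^ 2 / v t x
      - R * θ t x / v t x * ux t x) / cv) t
  vlo : ∀ t x, K⁻¹ ≤ v t x
  vhi : ∀ t x, v t x ≤ K
  θpos : ∀ t x, 0 < θ t x
  Lv : ∀ t, MemLp (fun x => v t x - 1) 2 volume
  Lu : ∀ t, MemLp (u t) 2 volume
  Lθ : ∀ t, MemLp (fun x => θ t x - 1) 2 volume
  Lvx : ∀ t, MemLp (vx t) 2 volume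
  Lux : ∀ t, MemLp (ux t) 2 volume
  Lθx : ∀ t, MemLp (θx t) 2 volume
  bd : ∀ T, ∃ B : ℝ, ∀ t ≤ T, ∫ x, (v t x - 1) ^ 2 ≤ B ∧ ∫ x, u t x ^ 2 ≤ B ∧
    ∫ x, (θ t x - 1) ^ 2 ≤ B ∧ ∫ x, vx t x ^ 2 ≤ B ∧ ∫ x, ux t x ^ 2 ≤ B ∧ ∫ x, θx t x ^ 2 ≤ B
  Muxx : ∀ T, MemLp (Function.uncurry uxx) 2 (slab T)
  Mθxx : ∀ T, MemLp (Function.uncurry θxx) 2 (slab T)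
  far : ∀ t, Tendsto (θ t) (cocompact ℝ) (nhds 1)

theorem measurable_slices {f : ℝ → ℝ → ℝ} (h1 : ∀ t, Continuous (f t))
    (h2 : ∀ x, Measurable fun t => f t x) : Measurable (Function.uncurry f) := by
  have := measurable_uncurry_of_continuous_of_measurable (u := fun x t => f t x) h1 h2
  exact this.comp measurable_swap

/-- A spatial derivative is a limit of difference quotients, hence measurable in time. -/
theorem measurable_slice_deriv {f f' : ℝ → ℝ → ℝ} (h : ∀ t x, HasDerivAt (f t) (f' t x) x)
    (h2 : ∀ x, Measurable fun t => f t x) (x : ℝ) : Measurable fun t => f' t x := by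
  refine measurable_of_tendsto_metrizable
    (f := fun (n : ℕ) t => ((1 : ℝ) / (n + 1))⁻¹ • (f t (x + 1 / (n + 1)) - f t x)) ?_ ?_
  · intro n
    simp only [smul_eq_mul]; exact ((h2 _).sub (h2 _)).const_mul _
  · rw [tendsto_pi_nhds]
    intro t
    have := (h t x).tendsto_slope_zero_right
    refine this.comp ?_
    refine tendsto_nhdsWithin_iff.2 ⟨tendsto_one_div_add_atTop_nhds_zero_nat, ?_⟩
    exact Eventually.of_forall fun n => by simp only [mem_Ioi]; positivity

theorem L2_bound {f : ℝ → ℝ} (hf : AEStronglyMeasurable f volume) {B : ℝ}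
    (h : L2 f ≤ ENNReal.ofReal B) : MemLp f 2 volume ∧ ∫ x, f x ^ 2 ≤ (max B 0) ^ 2 := by
  have hm : MemLp f 2 volume := ⟨hf, h.trans_lt ENNReal.ofReal_lt_top⟩
  refine ⟨hm, ?_⟩
  unfold L2 at h
  rw [hm.eLpNorm_eq_integral_rpow_norm (by norm_num) (by norm_num)] at h
  simp only [ENNReal.toReal_ofNat, Real.rpow_ofNat, Real.norm_eq_abs, sq_abs] at h
  have h0 : 0 ≤ ∫ x, f x ^ 2 := integral_nonneg fun _ => sq_nonneg _
  have h1 : (∫ x, f x ^ 2) ^ (2 : ℝ)⁻¹ ≤ max B 0 := by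
    have := ENNReal.toReal_mono ENNReal.ofReal_ne_top h
    rwa [ENNReal.toReal_ofReal (by positivity), ENNReal.toReal_ofReal'] at this
  have h2 : (∫ x, f x ^ 2) = ((∫ x, f x ^ 2) ^ (2 : ℝ)⁻¹) ^ 2 := by
    rw [← Real.rpow_natCast, ← Real.rpow_mul h0]; norm_num
  rw [h2]
  exact pow_le_pow_left₀ (by positivity) h1 2

theorem L2_sq_eq (f : ℝ → ℝ) : L2 f ^ 2 = ∫⁻ x, ‖f x‖ₑ ^ 2 := by
  unfold L2
  rw [eLpNorm_eq_lintegral_rpow_enorm_toReal (by norm_num) (by norm_num)]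
  simp only [ENNReal.toReal_ofNat, ENNReal.rpow_ofNat]
  rw [← ENNReal.rpow_natCast, ← ENNReal.rpow_mul]
  norm_num

theorem memLp_slab {f : ℝ → ℝ → ℝ} (hm : Measurable (Function.uncurry f)) {T : ℝ}
    (h : ∫⁻ t in Icc (0 : ℝ) T, L2 (f t) ^ 2 < ⊤) : MemLp (Function.uncurry f) 2 (slab T) := by
  refine ⟨hm.aestronglyMeasurable, ?_⟩
  rw [eLpNorm_eq_lintegral_rpow_enorm_toReal (by norm_num) (by norm_num)]
  simp only [ENNReal.toReal_ofNat, ENNReal.rpow_ofNat]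
  refine ENNReal.rpow_lt_top_of_nonneg (by norm_num) ?_
  unfold slab
  rw [lintegral_prod _ (by fun_prop)]
  simpa only [L2_sq_eq, Function.uncurry_apply_pair] using h.ne

variable {μ κ R cv M m K : ℝ} {v u θ : ℝ → ℝ → ℝ}

/-- A classical solution gives a `Flow` by freezing it at time zero for negative times. -/
theorem exists_flow (hμ : 0 < μ) (hκ : 0 < κ) (hR : 0 < R) (hcv : 0 < cv) (hK : 1 ≤ K)
    (hsol : IsClassicalSolution μ κ R cv v u θ) (hvol : VolBounded K v) :
    ∃ S : Flow, ∀ t x, 0 ≤ t → S.vx t x = pdx v x t := by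
  have p0 : ∀ t : ℝ, 0 ≤ max t 0 := fun t => le_max_right _ _
  -- spatial differentiability of a `C²` slice and of its derivative
  have d1 : ∀ f : ℝ → ℝ → ℝ, (∀ t : ℝ, 0 ≤ t → ContDiff ℝ 2 (fun x => f x t)) → ∀ t x,
      HasDerivAt (fun y => f y (max t 0)) (pdx f x (max t 0)) x := fun f hf t x =>
    (((hf _ (p0 t)).differentiable (by norm_num)) x).hasDerivAt
  have c2 : ∀ f : ℝ → ℝ → ℝ, (∀ t : ℝ, 0 ≤ t → ContDiff ℝ 2 (fun x => f x t)) → ∀ t,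
      ContDiff ℝ 1 (fun y => pdx f y (max t 0)) := fun f hf t => by
    have : ContDiff ℝ (1 + 1) (fun x => f x (max t 0)) := by simpa [one_add_one_eq_two] using hf _ (p0 t)
    exact (contDiff_succ_iff_deriv.1 this).2.2
  have d2 : ∀ f : ℝ → ℝ → ℝ, (∀ t : ℝ, 0 ≤ t → ContDiff ℝ 2 (fun x => f x t)) → ∀ t x,
      HasDerivAt (fun y => pdx f y (max t 0)) (deriv (fun y => pdx f y (max t 0)) x) x :=
    fun f hf t x => (((c2 f hf t).differentiable (by norm_num)) x).hasDerivAt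
  have c0 : ∀ f : ℝ → ℝ → ℝ, (∀ x t : ℝ, 0 ≤ t → DifferentiableAt ℝ (fun s => f x s) t) → ∀ x,
      Continuous fun t => f x (max t 0) := fun f hf x => by
    rw [continuous_iff_continuousAt]
    intro t
    have h1 : ContinuousAt (fun s => f x s) (max t 0) := (hf x _ (p0 t)).continuousAt
    exact ContinuousAt.comp (f := fun t : ℝ => max t 0) h1 (by fun_prop)
  have m0 : ∀ f : ℝ → ℝ → ℝ, (∀ t : ℝ, 0 ≤ t → ContDiff ℝ 2 (fun x => f x t)) →
      (∀ x t : ℝ, 0 ≤ t → DifferentiableAt ℝ (fun s => f x s) t) →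
      Measurable (Function.uncurry fun t x => f x (max t 0)) := fun f hf hf' =>
    measurable_slices (fun t => (hf _ (p0 t)).continuous) fun x => (c0 f hf' x).measurable
  have m1' : ∀ f : ℝ → ℝ → ℝ, (∀ t : ℝ, 0 ≤ t → ContDiff ℝ 2 (fun x => f x t)) →
      (∀ x t : ℝ, 0 ≤ t → DifferentiableAt ℝ (fun s => f x s) t) → ∀ x,
      Measurable fun t => pdx f x (max t 0) := fun f hf hf' =>
    measurable_slice_deriv (f := fun t x => f x (max t 0)) (d1 f hf) fun x => (c0 f hf' x).measurable
  have m1 : ∀ f : ℝ → ℝ → ℝ, (∀ t : ℝ, 0 ≤ t → ContDiff ℝ 2 (fun x => f x t)) →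
      (∀ x t : ℝ, 0 ≤ t → DifferentiableAt ℝ (fun s => f x s) t) →
      Measurable (Function.uncurry fun t x => pdx f x (max t 0)) := fun f hf hf' =>
    measurable_slices (fun t => (c2 f hf t).continuous) (m1' f hf hf')
  have m2 : ∀ f : ℝ → ℝ → ℝ, (∀ t : ℝ, 0 ≤ t → ContDiff ℝ 2 (fun x => f x t)) →
      (∀ x t : ℝ, 0 ≤ t → DifferentiableAt ℝ (fun s => f x s) t) →
      Measurable (Function.uncurry fun t x => deriv (fun y => pdx f y (max t 0)) x) :=
    fun f hf hf' => measurable_slices (fun t => (c2 f hf t).continuous_deriv (by norm_num))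
      (measurable_slice_deriv (d2 f hf) (m1' f hf hf'))
  have dt : ∀ f : ℝ → ℝ → ℝ, (∀ x t : ℝ, 0 ≤ t → DifferentiableAt ℝ (fun s => f x s) t) →
      ∀ t x, 0 < t → HasDerivAt (fun s => f x (max s 0)) (pdt f x t) t := fun f hf t x ht => by
    have h1 : HasDerivAt (fun s => f x s) (pdt f x t) t := (hf x t ht.le).hasDerivAt
    refine h1.congr_of_eventuallyEq ?_
    filter_upwards [lt_mem_nhds ht] with s hs
    rw [max_eq_left hs.le]
  have ds : ∀ (f : ℝ → ℝ → ℝ) t, deriv (fun x => f x t - 1) = fun x => pdx f x t := fun f t => by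
    funext x; simp [pdx]
  have de : ∀ (f : ℝ → ℝ → ℝ) t, deriv (fun x => f x t) = fun x => pdx f x t := fun f t => rfl
  have Lall : ∀ T, ∃ B : ℝ, ∀ t ≤ T,
      (L2 (fun x => v x (max t 0) - 1) ≤ ENNReal.ofReal B ∧
      L2 (fun x => u x (max t 0)) ≤ ENNReal.ofReal B ∧
      L2 (fun x => θ x (max t 0) - 1) ≤ ENNReal.ofReal B ∧
      L2 (fun x => pdx v x (max t 0)) ≤ ENNReal.ofReal B ∧
      L2 (fun x => pdx u x (max t 0)) ≤ ENNReal.ofReal B ∧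
      L2 (fun x => pdx θ x (max t 0)) ≤ ENNReal.ofReal B) := by
    intro T
    obtain ⟨B, hB⟩ := hsol.reg_H1 (max T 0) (p0 T)
    refine ⟨B, fun t ht => ?_⟩
    have := hB (max t 0) ⟨p0 t, max_le_max_right 0 ht⟩
    unfold H1 at this
    rw [ds, ds, de] at this
    refine ⟨?_, ?_, ?_, ?_, ?_, ?_⟩ <;> refine le_trans ?_ this
    · exact le_add_right (le_add_right (le_add_right le_rfl))
    · exact le_add_right (le_add_left (le_add_right le_rfl))
    · exact (le_add_left (le_add_right le_rfl))
    · exact le_add_right (le_add_right (le_add_left le_rfl))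
    · exact le_add_right (le_add_left (le_add_left le_rfl))
    · exact (le_add_left (le_add_left le_rfl))
  have ac0 : ∀ f : ℝ → ℝ → ℝ, (∀ t : ℝ, 0 ≤ t → ContDiff ℝ 2 (fun x => f x t)) → ∀ t,
      AEStronglyMeasurable (fun x => f x (max t 0)) volume := fun f hf t =>
    (hf _ (p0 t)).continuous.aestronglyMeasurable
  have ac1 : ∀ f : ℝ → ℝ → ℝ, (∀ t : ℝ, 0 ≤ t → ContDiff ℝ 2 (fun x => f x t)) → ∀ t,
      AEStronglyMeasurable (fun x => pdx f x (max t 0)) volume := fun f hf t =>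
    (c2 f hf t).continuous.aestronglyMeasurable
  have sv := hsol.smooth_x_v
  have su := hsol.smooth_x_u
  have sθ := hsol.smooth_x_θ
  have ac0' : ∀ f : ℝ → ℝ → ℝ, (∀ t : ℝ, 0 ≤ t → ContDiff ℝ 2 (fun x => f x t)) → ∀ t,
      AEStronglyMeasurable (fun x => f x (max t 0) - 1) volume := fun f hf t =>
    (ac0 f hf t).sub aestronglyMeasurable_const
  have H2fin : ∀ T : ℝ,
      (∫⁻ t in Icc (0 : ℝ) T, (H2 (fun x => u x t) ^ 2 + H2 (fun x => θ x t - 1) ^ 2)) < ⊤ := by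
    intro T
    refine lt_of_le_of_lt ?_ (hsol.reg_H2 (max T 1) (by positivity))
    exact lintegral_mono_set (Icc_subset_Icc_right (le_max_left _ _))
  have M2u : ∀ T, MemLp (Function.uncurry fun t x => deriv (fun y => pdx u y (max t 0)) x) 2 (slab T) := by
    intro T
    refine memLp_slab (m2 u su hsol.smooth_t_u) (lt_of_le_of_lt ?_ (H2fin T))
    refine setLIntegral_mono' measurableSet_Icc fun t ht => le_trans ?_ (le_add_right le_rfl)
    rw [max_eq_left ht.1]
    gcongr
    exact le_add_left le_rfl
  have M2θ : ∀ T, MemLp (Function.uncurry fun t x => deriv (fun y => pdx θ y (max t 0)) x) 2 (slab T) := by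
    intro T
    refine memLp_slab (m2 θ sθ hsol.smooth_t_θ) (lt_of_le_of_lt ?_ (H2fin T))
    refine setLIntegral_mono' measurableSet_Icc fun t ht => le_trans ?_ (le_add_left le_rfl)
    rw [max_eq_left ht.1]
    gcongr
    unfold H2
    rw [ds]
    exact le_add_left le_rfl
  refine ⟨{
    μ := μ, κ := κ, R := R, cv := cv, K := K
    v := fun t x => v x (max t 0)
    u := fun t x => u x (max t 0)
    θ := fun t x => θ x (max t 0)
    vx := fun t x => pdx v x (max t 0)
    ux := fun t x => pdx u x (max t 0)
    θx := fun t x => pdx θ x (max t 0)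
    uxx := fun t x => deriv (fun y => pdx u y (max t 0)) x
    θxx := fun t x => deriv (fun y => pdx θ y (max t 0)) x
    hμ := hμ, hκ := hκ, hR := hR, hcv := hcv, hK := hK
    mv := m0 v sv hsol.smooth_t_v
    mu := m0 u su hsol.smooth_t_u
    mθ := m0 θ sθ hsol.smooth_t_θ
    mvx := m1 v sv hsol.smooth_t_v
    mux := m1 u su hsol.smooth_t_u
    mθx := m1 θ sθ hsol.smooth_t_θ
    muxx := m2 u su hsol.smooth_t_u
    mθxx := m2 θ sθ hsol.smooth_t_θ
    dv := d1 v sv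
    du := d1 u su
    dθ := d1 θ sθ
    dux := d2 u su
    dθx := d2 θ sθ
    contv := c0 v hsol.smooth_t_v
    contu := c0 u hsol.smooth_t_u
    contθ := c0 θ hsol.smooth_t_θ
    tv := ?_
    tu := ?_
    tθ := ?_
    vlo := fun t x => (hvol x _ (p0 t)).1
    vhi := fun t x => (hvol x _ (p0 t)).2
    θpos := fun t x => hsol.θ_pos x _ (p0 t)
    Lv := fun t => (L2_bound (ac0' v sv t) ((Lall t).choose_spec t le_rfl).1).1
    Lu := fun t => (L2_bound (ac0 u su t) ((Lall t).choose_spec t le_rfl).2.1).1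
    Lθ := fun t => (L2_bound (ac0' θ sθ t) ((Lall t).choose_spec t le_rfl).2.2.1).1
    Lvx := fun t => (L2_bound (ac1 v sv t) ((Lall t).choose_spec t le_rfl).2.2.2.1).1
    Lux := fun t => (L2_bound (ac1 u su t) ((Lall t).choose_spec t le_rfl).2.2.2.2.1).1
    Lθx := fun t => (L2_bound (ac1 θ sθ t) ((Lall t).choose_spec t le_rfl).2.2.2.2.2).1
    bd := ?_
    Muxx := M2u
    Mθxx := M2θ
    far := fun t => hsol.farfield_θ _ (p0 t) }, ?_⟩
  · intro t x ht
    have := dt v hsol.smooth_t_v t x ht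
    rw [hsol.eq_mass x t ht.le] at this
    simpa only [max_eq_left ht.le] using this
  · intro t x ht
    have h := dt u hsol.smooth_t_u t x ht
    have e := hsol.eq_momentum x t ht.le
    have hv := d1 v sv t x
    have hθ := d1 θ sθ t x
    have hux := d2 u su t x
    simp only [max_eq_left ht.le] at hv hθ hux ⊢
    have hv0 : v x t ≠ 0 := (hsol.v_pos x t ht.le).ne'
    have e1 : pdx (fun y s => R * θ y s / v y s) x t
        = R * (pdx θ x t / v x t - θ x t * pdx v x t / v x t ^ 2) := by
      have := ((hθ.const_mul R).fun_div hv hv0).deriv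
      rw [pdx, this]; field_simp
    have e2 : pdx (fun y s => pdx u y s / v y s) x t
        = deriv (fun y => pdx u y t) x / v x t - pdx u x t * pdx v x t / v x t ^ 2 := by
      have := (hux.fun_div hv hv0).deriv
      rw [pdx, this]; field_simp
    rw [e1, e2] at e
    convert h using 1
    linarith
  · intro t x ht
    have h := dt θ hsol.smooth_t_θ t x ht
    have e := hsol.eq_energy x t ht.le
    have hv := d1 v sv t x
    have hθx := d2 θ sθ t x
    simp only [max_eq_left ht.le] at hv hθx ⊢
    have hv0 : v x t ≠ 0 := (hsol.v_pos x t ht.le).ne'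
    have e2 : pdx (fun y s => pdx θ y s / v y s) x t
        = deriv (fun y => pdx θ y t) x / v x t - pdx θ x t * pdx v x t / v x t ^ 2 := by
      have := (hθx.fun_div hv hv0).deriv
      rw [pdx, this]; field_simp
    rw [e2] at e
    convert h using 1
    rw [div_eq_iff hcv.ne']
    linarith
  · intro T
    obtain ⟨B, hB⟩ := Lall T
    refine ⟨(max B 0) ^ 2, fun t ht => ?_⟩
    obtain ⟨h1, h2, h3, h4, h5, h6⟩ := hB t ht
    exact ⟨(L2_bound (ac0' v sv t) h1).2, (L2_bound (ac0 u su t) h2).2,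
      (L2_bound (ac0' θ sθ t) h3).2, (L2_bound (ac1 v sv t) h4).2,
      (L2_bound (ac1 u su t) h5).2, (L2_bound (ac1 θ sθ t) h6).2⟩
  · intro t x ht
    simp only [max_eq_left ht]

end NSDecay

namespace NSDecay

/-! ### Integration over space-time slabs -/

theorem ae_slab (T : ℝ) : ∀ᵐ p ∂(slab T), p.1 ∈ Icc 0 T := by
  unfold slab
  exact Measure.quasiMeasurePreserving_fst.ae (ae_restrict_mem measurableSet_Icc)

/-- A family of slices bounded in `L²` uniformly in time is square integrable on the slab. -/
theorem M2_of_slices {f : ℝ → ℝ → ℝ} {T B : ℝ} (hm : Measurable (Function.uncurry f))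
    (h : ∀ t, MemLp (f t) 2 volume) (hB : ∀ t ≤ T, ∫ x, f t x ^ 2 ≤ B) :
    MemLp (Function.uncurry f) 2 (slab T) := by
  rw [memLp_two_iff_integrable_sq hm.aestronglyMeasurable]
  unfold slab
  rw [integrable_prod_iff (by fun_prop)]
  refine ⟨Eventually.of_forall fun t => sq_int (h t), ?_⟩
  have hsm : StronglyMeasurable fun t => ∫ x, ‖Function.uncurry f (t, x) ^ 2‖ :=
    StronglyMeasurable.integral_prod_right (f := fun t x => ‖Function.uncurry f (t, x) ^ 2‖)
      (by apply Measurable.stronglyMeasurable; fun_prop)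
  refine Integrable.of_bound hsm.aestronglyMeasurable B ?_
  filter_upwards [ae_restrict_mem measurableSet_Icc] with t ht
  rw [Real.norm_of_nonneg (integral_nonneg fun _ => norm_nonneg _)]
  simpa using hB t ht.2

theorem M2_mul_bdd {f g : ℝ → ℝ → ℝ} {T C : ℝ} (hf : MemLp (Function.uncurry f) 2 (slab T))
    (hg : Measurable (Function.uncurry g)) (hC : ∀ t ∈ Icc 0 T, ∀ x, |g t x| ≤ C) :
    MemLp (Function.uncurry fun t x => g t x * f t x) 2 (slab T) := by
  refine MemLp.of_le_mul (c := C) hf (hg.aestronglyMeasurable.mul hf.aestronglyMeasurable) ?_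
  filter_upwards [ae_slab T] with p hp
  simp only [Function.uncurry, norm_mul, Real.norm_eq_abs]
  exact mul_le_mul_of_nonneg_right (hC _ hp _) (abs_nonneg _)

theorem int_mul_bdd {f g : ℝ → ℝ → ℝ} {T C : ℝ} (hf : Integrable (Function.uncurry f) (slab T))
    (hg : Measurable (Function.uncurry g)) (hC : ∀ t ∈ Icc 0 T, ∀ x, |g t x| ≤ C) :
    Integrable (Function.uncurry fun t x => g t x * f t x) (slab T) := by
  refine Integrable.mono' (hf.norm.const_mul C)
    (hg.aestronglyMeasurable.mul hf.aestronglyMeasurable) ?_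
  filter_upwards [ae_slab T] with p hp
  simp only [Function.uncurry, norm_mul, Real.norm_eq_abs]
  exact mul_le_mul_of_nonneg_right (hC _ hp _) (abs_nonneg _)

theorem M2_slice {f : ℝ → ℝ → ℝ} {T : ℝ} (hm : Measurable (Function.uncurry f))
    (hf : MemLp (Function.uncurry f) 2 (slab T)) :
    (∀ᵐ t ∂(volume.restrict (Icc 0 T)), MemLp (f t) 2 volume) ∧
      Integrable (fun t => ∫ x, f t x ^ 2) (volume.restrict (Icc 0 T)) := by
  have h := hf.integrable_sq
  unfold slab at h
  refine ⟨?_, h.integral_prod_left⟩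
  filter_upwards [h.prod_right_ae] with t ht
  exact (memLp_two_iff_integrable_sq (by
    exact (hm.comp measurable_prodMk_left).aestronglyMeasurable)).2 ht

/-- One-dimensional Sobolev embedding in each slice: if `f` is in `L²(H¹)` and `g` is in
`L^∞(L²)`, then `f g` is in `L²(L²)`. -/
theorem M2_mul {f f' g : ℝ → ℝ → ℝ} {T B : ℝ}
    (mf : Measurable (Function.uncurry f)) (mf' : Measurable (Function.uncurry f'))
    (mg : Measurable (Function.uncurry g))
    (hd : ∀ t x, HasDerivAt (f t) (f' t x) x)
    (hf : MemLp (Function.uncurry f) 2 (slab T)) (hf' : MemLp (Function.uncurry f') 2 (slab T))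
    (hg : ∀ t, MemLp (g t) 2 volume) (hgB : ∀ t ≤ T, ∫ x, g t x ^ 2 ≤ B) :
    MemLp (Function.uncurry fun t x => f t x * g t x) 2 (slab T) := by
  have hm : Measurable (Function.uncurry fun t x => f t x * g t x) := mf.mul mg
  rw [memLp_two_iff_integrable_sq hm.aestronglyMeasurable]
  obtain ⟨s1, i1⟩ := M2_slice mf hf
  obtain ⟨s2, i2⟩ := M2_slice mf' hf'
  have key : ∀ᵐ t ∂(volume.restrict (Icc 0 T)),
      Integrable (fun x => (f t x * g t x) ^ 2) volume ∧
      ∫ x, (f t x * g t x) ^ 2 ≤ B * ((∫ x, f t x ^ 2) + ∫ x, f' t x ^ 2) := by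
    filter_upwards [s1, s2, ae_restrict_mem measurableSet_Icc] with t h1 h2 ht
    have hs := sobolev (hd t) h1 h2
    set N := (∫ x, f t x ^ 2) + ∫ x, f' t x ^ 2
    have hN : 0 ≤ N := (sq_nonneg _).trans (hs 0)
    have hb : ∀ x, (f t x * g t x) ^ 2 ≤ N * g t x ^ 2 := fun x => by
      rw [mul_pow]; exact mul_le_mul_of_nonneg_right (hs x) (sq_nonneg _)
    have hi : Integrable (fun x => (f t x * g t x) ^ 2) volume := by
      refine Integrable.mono' ((sq_int (hg t)).const_mul N)
        ((hm.comp measurable_prodMk_left).pow_const 2).aestronglyMeasurable ?_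
      exact Eventually.of_forall fun x => by
        rw [Real.norm_of_nonneg (sq_nonneg _)]; exact hb x
    refine ⟨hi, (integral_mono hi ((sq_int (hg t)).const_mul N) hb).trans ?_⟩
    rw [integral_const_mul, mul_comm]
    exact mul_le_mul_of_nonneg_right (hgB t ht.2) hN
  unfold slab
  rw [integrable_prod_iff (by fun_prop)]
  refine ⟨key.mono fun t h => h.1, ?_⟩
  have hsm : StronglyMeasurable fun t =>
      ∫ x, ‖Function.uncurry (fun t x => f t x * g t x) (t, x) ^ 2‖ :=
    StronglyMeasurable.integral_prod_right
      (f := fun t x => ‖Function.uncurry (fun t x => f t x * g t x) (t, x) ^ 2‖)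
      (by apply Measurable.stronglyMeasurable; fun_prop)
  refine Integrable.mono' ((i1.add i2).const_mul B) hsm.aestronglyMeasurable ?_
  filter_upwards [key] with t ht
  rw [Real.norm_of_nonneg (integral_nonneg fun _ => norm_nonneg _)]
  have e : ∀ x, ‖Function.uncurry (fun t x => f t x * g t x) (t, x) ^ 2‖ = (f t x * g t x) ^ 2 :=
    fun x => Real.norm_of_nonneg (sq_nonneg _)
  simp only [e]
  exact ht.2

theorem slab_restrict {F : ℝ → ℝ → ℝ} {s t : ℝ} (hs : 0 ≤ s)
    (hF : Integrable (Function.uncurry F) (slab t)) :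
    Integrable (Function.uncurry F) ((volume.restrict (Ioc s t)).prod volume) :=
  hF.mono_measure (Measure.prod_mono (Measure.restrict_mono
    (fun x (h : x ∈ Ioc s t) => (⟨hs.trans h.1.le, h.2⟩ : x ∈ Icc 0 t)) le_rfl) le_rfl)

theorem slab_ae_time {F : ℝ → ℝ → ℝ} {s t : ℝ} (hs : 0 ≤ s) (hst : s ≤ t)
    (hF : Integrable (Function.uncurry F) (slab t)) :
    ∀ᵐ x, IntervalIntegrable (fun τ => F τ x) volume s t := by
  filter_upwards [(slab_restrict hs hF).prod_left_ae] with x hx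
  exact (intervalIntegrable_iff_integrableOn_Ioc_of_le hst).2 hx

/-- Differentiation of a spatial integral in time, in integrated form. -/
theorem evol {F F' : ℝ → ℝ → ℝ} {s t : ℝ} (hs : 0 ≤ s) (hst : s ≤ t)
    (hF' : Integrable (Function.uncurry F') (slab t))
    (h1 : Integrable (F s)) (h2 : Integrable (F t))
    (h : ∀ᵐ x, IntervalIntegrable (fun τ => F' τ x) volume s t →
      F t x - F s x = ∫ τ in s..t, F' τ x) :
    (∫ x, F t x) - ∫ x, F s x = ∫ τ in s..t, ∫ x, F' τ x := by
  rw [← integral_sub h2 h1]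
  have : (fun x => F t x - F s x) =ᵐ[volume] fun x => ∫ τ in s..t, F' τ x := by
    filter_upwards [h, slab_ae_time hs hst hF'] with x hx hi using hx hi
  rw [integral_congr_ae this]
  simp only [intervalIntegral.integral_of_le hst]
  exact (integral_integral_swap (slab_restrict hs hF')).symm

/-- `evol` combined with a bound `ρ` for the spatial integral of the time derivative. -/
theorem evol_le {F F' : ℝ → ℝ → ℝ} {ρ : ℝ → ℝ} {s t : ℝ} (hs : 0 ≤ s) (hst : s ≤ t)
    (hF' : Integrable (Function.uncurry F') (slab t))
    (h1 : Integrable (F s)) (h2 : Integrable (F t))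
    (h : ∀ᵐ x, IntervalIntegrable (fun τ => F' τ x) volume s t →
      F t x - F s x = ∫ τ in s..t, F' τ x)
    (hρ : IntervalIntegrable ρ volume s t)
    (hle : ∀ᵐ τ ∂(volume.restrict (Icc 0 t)), ∫ x, F' τ x ≤ ρ τ) :
    ∫ x, F t x ≤ (∫ x, F s x) + ∫ τ in s..t, ρ τ := by
  have h0 := evol hs hst hF' h1 h2 h
  have : ∫ τ in s..t, ∫ x, F' τ x ≤ ∫ τ in s..t, ρ τ := by
    refine intervalIntegral.integral_mono_ae_restrict hst ?_ hρ ?_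
    · exact (intervalIntegrable_iff_integrableOn_Ioc_of_le hst).2
        (slab_restrict hs hF').integral_prod_left
    · exact ae_restrict_of_ae_restrict_of_subset (t := Icc 0 t)
        (fun τ (h : τ ∈ Icc s t) => (⟨hs.trans h.1, h.2⟩ : τ ∈ Icc 0 t)) hle
  linarith

/-- The pointwise hypothesis of `evol_le` for a function differentiable in time. -/
theorem ftc_time {F F' : ℝ → ℝ → ℝ} {s t : ℝ} (hs : 0 ≤ s) (hst : s ≤ t) (x : ℝ)
    (hc : Continuous fun τ => F τ x)
    (hd : ∀ τ, 0 < τ → HasDerivAt (fun τ => F τ x) (F' τ x) τ)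
    (hi : IntervalIntegrable (fun τ => F' τ x) volume s t) :
    F t x - F s x = ∫ τ in s..t, F' τ x :=
  (intervalIntegral.integral_eq_sub_of_hasDerivAt_of_le hst hc.continuousOn
    (fun τ h => hd τ (hs.trans_lt h.1)) hi).symm

/-- `A` is, for almost every `x`, a primitive in time of `a` on `[s, t]`, where the exceptional set
may depend on time. -/
def Prim (s t : ℝ) (A a : ℝ → ℝ → ℝ) : Prop :=
  ∀ τ ∈ Icc s t, ∀ᵐ x, A τ x = A s x + ∫ σ in s..τ, a σ x

theorem measurable_prim {a : ℝ → ℝ → ℝ} (ma : Measurable (Function.uncurry a)) (s : ℝ) :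
    Measurable fun p : ℝ × ℝ => ∫ σ in s..p.1, a σ p.2 := by
  have key : ∀ b c : ℝ × ℝ → ℝ, Measurable b → Measurable c →
      Measurable fun p : ℝ × ℝ => ∫ σ in Ioc (b p) (c p), a σ p.2 := by
    intro b c hb hc
    have e : (fun p : ℝ × ℝ => ∫ σ in Ioc (b p) (c p), a σ p.2) =
        fun p => ∫ σ, (Ioc (b p) (c p)).indicator (fun σ => a σ p.2) σ := by
      funext p; rw [integral_indicator measurableSet_Ioc]
    rw [e]
    refine (StronglyMeasurable.integral_prod_right
      (f := fun p σ => (Ioc (b p) (c p)).indicator (fun σ => a σ p.2) σ) ?_).measurable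
    apply Measurable.stronglyMeasurable
    have hset : MeasurableSet {z : (ℝ × ℝ) × ℝ | b z.1 < z.2 ∧ z.2 ≤ c z.1} :=
      (measurableSet_lt (hb.comp measurable_fst) measurable_snd).inter
        (measurableSet_le measurable_snd (hc.comp measurable_fst))
    have hma : Measurable fun z : (ℝ × ℝ) × ℝ => a z.2 z.1.2 :=
      ma.comp (measurable_snd.prodMk (measurable_snd.comp measurable_fst))
    exact (hma.indicator hset : Measurable
      (({z : (ℝ × ℝ) × ℝ | b z.1 < z.2 ∧ z.2 ≤ c z.1}).indicator fun z => a z.2 z.1.2))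
  simp only [intervalIntegral]
  exact (key _ _ measurable_const measurable_fst).sub (key _ _ measurable_fst measurable_const)

theorem Prim.ae {s t : ℝ} {A a : ℝ → ℝ → ℝ} (h : Prim s t A a)
    (mA : Measurable (Function.uncurry A)) (ma : Measurable (Function.uncurry a)) :
    ∀ᵐ x, ∀ᵐ τ ∂(volume.restrict (Icc s t)), A τ x = A s x + ∫ σ in s..τ, a σ x := by
  rw [Measure.ae_ae_comm]
  · filter_upwards [ae_restrict_mem measurableSet_Icc] with τ hτ using h τ hτ
  · have h1 : Measurable fun p : ℝ × ℝ => A s p.1 + ∫ σ in s..p.2, a σ p.1 :=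
      ((mA.comp measurable_prodMk_left).comp measurable_fst).add
        ((measurable_prim ma s).comp measurable_swap)
    exact measurableSet_eq_fun (mA.comp measurable_swap) h1

/-- The product rule in time for two functions that are primitives in time. -/
theorem Prim.mul {s t : ℝ} (hst : s ≤ t) {A a B b : ℝ → ℝ → ℝ}
    (hA : Prim s t A a) (hB : Prim s t B b)
    (mA : Measurable (Function.uncurry A)) (ma : Measurable (Function.uncurry a))
    (mB : Measurable (Function.uncurry B)) (mb : Measurable (Function.uncurry b))
    (ia : ∀ᵐ x, IntervalIntegrable (fun τ => a τ x) volume s t)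
    (ib : ∀ᵐ x, IntervalIntegrable (fun τ => b τ x) volume s t) :
    ∀ᵐ x, A t x * B t x - A s x * B s x = ∫ τ in s..t, (a τ x * B τ x + A τ x * b τ x) := by
  filter_upwards [hA.ae mA ma, hB.ae mB mb, hA t ⟨hst, le_rfl⟩, hB t ⟨hst, le_rfl⟩, ia, ib]
    with x h1 h2 h3 h4 h5 h6
  have acA : AbsolutelyContinuousOnInterval (fun τ => A s x + ∫ σ in s..τ, a σ x) s t := by
    have h := h5.absolutelyContinuousOnInterval_intervalIntegral (c := s) (by simp)
    have hc : AbsolutelyContinuousOnInterval (fun _ : ℝ => A s x) s t :=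
      (LipschitzWith.const (A s x)).lipschitzOnWith.absolutelyContinuousOnInterval
    exact hc.add h
  have acB : AbsolutelyContinuousOnInterval (fun τ => B s x + ∫ σ in s..τ, b σ x) s t := by
    have h := h6.absolutelyContinuousOnInterval_intervalIntegral (c := s) (by simp)
    have hc : AbsolutelyContinuousOnInterval (fun _ : ℝ => B s x) s t :=
      (LipschitzWith.const (B s x)).lipschitzOnWith.absolutelyContinuousOnInterval
    exact hc.add h
  have e := acA.integral_deriv_mul_eq_sub acB
  simp only [intervalIntegral.integral_same, add_zero] at e
  rw [← h3, ← h4] at e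
  rw [← e]
  refine intervalIntegral.integral_congr_ae ?_
  have h1' := (ae_restrict_iff' measurableSet_Icc).1 h1
  have h2' := (ae_restrict_iff' measurableSet_Icc).1 h2
  filter_upwards [h1', h2', h5.ae_hasDerivAt_integral, h6.ae_hasDerivAt_integral]
    with τ k1 k2 k3 k4 hτ
  have hτ' : τ ∈ uIcc s t := uIoc_subset_uIcc hτ
  have hτ'' : τ ∈ Icc s t := by rwa [uIcc_of_le hst] at hτ'
  rw [((k3 hτ' s (by simp)).const_add (A s x)).deriv, ((k4 hτ' s (by simp)).const_add (B s x)).deriv,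
    ← k1 hτ'', ← k2 hτ'']

end NSDecay

namespace NSDecay
namespace Flow

variable (S : Flow)

/-! ### Local-in-time regularity -/

/-- The logarithmic gradient `v_x / v`. -/
noncomputable def q (t x : ℝ) : ℝ := S.vx t x / S.v t x

/-- The derivative `(u_x / v)_x`. -/
noncomputable def r (t x : ℝ) : ℝ := S.uxx t x / S.v t x - S.ux t x * S.vx t x / S.v t x ^ 2

/-- The derivative `(θ_x / v)_x`. -/
noncomputable def hh (t x : ℝ) : ℝ := S.θxx t x / S.v t x - S.θx t x * S.vx t x / S.v t x ^ 2

/-- The derivative `(θ / v)_x`. -/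
noncomputable def px (t x : ℝ) : ℝ := S.θx t x / S.v t x - S.θ t x * S.vx t x / S.v t x ^ 2

/-- The time derivative of the velocity. -/
noncomputable def ut (t x : ℝ) : ℝ := S.μ * S.r t x - S.R * S.px t x

/-- The time derivative of the temperature, multiplied by the heat capacity. -/
noncomputable def ht (t x : ℝ) : ℝ :=
  S.κ * S.hh t x + S.μ * S.ux t x ^ 2 / S.v t x - S.R * S.θ t x / S.v t x * S.ux t x

theorem tu' (t x : ℝ) (h : 0 < t) : HasDerivAt (fun s => S.u s x) (S.ut t x) t := S.tu t x h

theorem tθ' (t x : ℝ) (h : 0 < t) : HasDerivAt (fun s => S.θ s x) (S.ht t x / S.cv) t := S.tθ t x h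

theorem Kpos : 0 < S.K := by linarith [S.hK]

theorem vpos (t x : ℝ) : 0 < S.v t x := (inv_pos.2 S.Kpos).trans_le (S.vlo t x)

theorem inv_v_le (t x : ℝ) : (S.v t x)⁻¹ ≤ S.K :=
  inv_le_of_inv_le₀ S.Kpos (S.vlo t x)

theorem le_inv_v (t x : ℝ) : S.K⁻¹ ≤ (S.v t x)⁻¹ :=
  inv_anti₀ (S.vpos t x) (S.vhi t x)

theorem abs_inv_v (t x : ℝ) : |(S.v t x)⁻¹| ≤ S.K := by
  rw [abs_of_pos (inv_pos.2 (S.vpos t x))]; exact S.inv_v_le t x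

theorem abs_inv_v_sq (t x : ℝ) : |(S.v t x ^ 2)⁻¹| ≤ S.K ^ 2 := by
  rw [← inv_pow, abs_pow]; exact pow_le_pow_left₀ (abs_nonneg _) (S.abs_inv_v t x) 2

theorem dq (t x : ℝ) : HasDerivAt (fun y => Real.log (S.v t y)) (S.q t x) x :=
  (S.dv t x).log (S.vpos t x).ne'

theorem dr (t x : ℝ) : HasDerivAt (fun y => S.ux t y / S.v t y) (S.r t x) x := by
  refine ((S.dux t x).fun_div (S.dv t x) (S.vpos t x).ne').congr_deriv ?_
  have := (S.vpos t x).ne'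
  unfold r; field_simp

theorem dhh (t x : ℝ) : HasDerivAt (fun y => S.θx t y / S.v t y) (S.hh t x) x := by
  refine ((S.dθx t x).fun_div (S.dv t x) (S.vpos t x).ne').congr_deriv ?_
  have := (S.vpos t x).ne'
  unfold hh; field_simp

theorem dpx (t x : ℝ) : HasDerivAt (fun y => S.θ t y / S.v t y) (S.px t x) x := by
  refine ((S.dθ t x).fun_div (S.dv t x) (S.vpos t x).ne').congr_deriv ?_
  have := (S.vpos t x).ne'
  unfold px; field_simp

theorem miv : Measurable (Function.uncurry fun t x => (S.v t x)⁻¹) := S.mv.inv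
theorem miv2 : Measurable (Function.uncurry fun t x => (S.v t x ^ 2)⁻¹) := (S.mv.pow_const 2).inv
theorem mq : Measurable (Function.uncurry S.q) := S.mvx.div S.mv
theorem mr : Measurable (Function.uncurry S.r) :=
  (S.muxx.div S.mv).sub ((S.mux.mul S.mvx).div (S.mv.pow_const 2))
theorem mhh : Measurable (Function.uncurry S.hh) :=
  (S.mθxx.div S.mv).sub ((S.mθx.mul S.mvx).div (S.mv.pow_const 2))
theorem mpx : Measurable (Function.uncurry S.px) :=
  (S.mθx.div S.mv).sub ((S.mθ.mul S.mvx).div (S.mv.pow_const 2))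
theorem mut_ : Measurable (Function.uncurry S.ut) := (S.mr.const_mul _).sub (S.mpx.const_mul _)
theorem mht : Measurable (Function.uncurry S.ht) :=
  ((S.mhh.const_mul _).add (((S.mux.pow_const 2).const_mul _).div S.mv)).sub
    (((S.mθ.const_mul _).div S.mv).mul S.mux)

theorem cv_ (t : ℝ) : Continuous (S.v t) :=
  continuous_iff_continuousAt.2 fun x => (S.dv t x).continuousAt
theorem cu_ (t : ℝ) : Continuous (S.u t) :=
  continuous_iff_continuousAt.2 fun x => (S.du t x).continuousAt
theorem cθ_ (t : ℝ) : Continuous (S.θ t) :=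
  continuous_iff_continuousAt.2 fun x => (S.dθ t x).continuousAt

/-- Sup-norm bounds on compact time intervals, from the Sobolev embedding. -/
theorem local_bounds (T : ℝ) : ∃ N : ℝ, 1 ≤ N ∧ ∀ t ≤ T, ∀ x, |S.u t x| ≤ N ∧ |S.θ t x - 1| ≤ N
    ∧ |S.θ t x| ≤ N := by
  obtain ⟨B, hB⟩ := S.bd T
  have hB0 : 0 ≤ B := (integral_nonneg fun _ => sq_nonneg _).trans (hB T le_rfl).1
  refine ⟨2 + 2 * B, by linarith, fun t ht x => ?_⟩
  obtain ⟨-, h2, h3, -, h5, h6⟩ := hB t ht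
  have hu := sobolev (S.du t) (S.Lu t) (S.Lux t) x
  have hθ := sobolev (fun x => (S.dθ t x).sub_const 1) (S.Lθ t) (S.Lθx t) x
  have e1 : |S.u t x| ≤ 1 + 2 * B := abs_le_of_sq_le_sq (by nlinarith) (by linarith)
  have e2 : |S.θ t x - 1| ≤ 1 + 2 * B := abs_le_of_sq_le_sq (by nlinarith) (by linarith)
  refine ⟨by linarith, by linarith, ?_⟩
  rw [abs_le] at e2 ⊢
  constructor <;> linarith

variable (T : ℝ)

theorem Mv : MemLp (Function.uncurry fun t x => S.v t x - 1) 2 (slab T) := by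
  obtain ⟨B, hB⟩ := S.bd T
  exact M2_of_slices (S.mv.sub_const 1) S.Lv fun t ht => (hB t ht).1

theorem Mu : MemLp (Function.uncurry S.u) 2 (slab T) := by
  obtain ⟨B, hB⟩ := S.bd T
  exact M2_of_slices S.mu S.Lu fun t ht => (hB t ht).2.1

theorem Mθ : MemLp (Function.uncurry fun t x => S.θ t x - 1) 2 (slab T) := by
  obtain ⟨B, hB⟩ := S.bd T
  exact M2_of_slices (S.mθ.sub_const 1) S.Lθ fun t ht => (hB t ht).2.2.1

theorem Mvx : MemLp (Function.uncurry S.vx) 2 (slab T) := by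
  obtain ⟨B, hB⟩ := S.bd T
  exact M2_of_slices S.mvx S.Lvx fun t ht => (hB t ht).2.2.2.1

theorem Mux : MemLp (Function.uncurry S.ux) 2 (slab T) := by
  obtain ⟨B, hB⟩ := S.bd T
  exact M2_of_slices S.mux S.Lux fun t ht => (hB t ht).2.2.2.2.1

theorem Mθx : MemLp (Function.uncurry S.θx) 2 (slab T) := by
  obtain ⟨B, hB⟩ := S.bd T
  exact M2_of_slices S.mθx S.Lθx fun t ht => (hB t ht).2.2.2.2.2

theorem Muxvx : MemLp (Function.uncurry fun t x => S.ux t x * S.vx t x) 2 (slab T) := by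
  obtain ⟨B, hB⟩ := S.bd T
  exact M2_mul S.mux S.muxx S.mvx S.dux (S.Mux T) (S.Muxx T) S.Lvx fun t ht => (hB t ht).2.2.2.1

theorem Mθxvx : MemLp (Function.uncurry fun t x => S.θx t x * S.vx t x) 2 (slab T) := by
  obtain ⟨B, hB⟩ := S.bd T
  exact M2_mul S.mθx S.mθxx S.mvx S.dθx (S.Mθx T) (S.Mθxx T) S.Lvx fun t ht => (hB t ht).2.2.2.1

theorem Mux2 : MemLp (Function.uncurry fun t x => S.ux t x * S.ux t x) 2 (slab T) := by
  obtain ⟨B, hB⟩ := S.bd T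
  exact M2_mul S.mux S.muxx S.mux S.dux (S.Mux T) (S.Muxx T) S.Lux fun t ht => (hB t ht).2.2.2.2.1

theorem Mq : MemLp (Function.uncurry S.q) 2 (slab T) := by
  have := M2_mul_bdd (S.Mvx T) S.miv fun t _ x => S.abs_inv_v t x
  refine (memLp_congr_ae (Eventually.of_forall fun p => ?_)).1 this
  simp only [Function.uncurry, q]; ring

theorem Mr : MemLp (Function.uncurry S.r) 2 (slab T) := by
  have := (M2_mul_bdd (S.Muxx T) S.miv fun t _ x => S.abs_inv_v t x).sub
    (M2_mul_bdd (S.Muxvx T) S.miv2 fun t _ x => S.abs_inv_v_sq t x)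
  refine (memLp_congr_ae (Eventually.of_forall fun p => ?_)).1 this
  simp only [Function.uncurry, r, Pi.sub_apply]; ring

theorem Mhh : MemLp (Function.uncurry S.hh) 2 (slab T) := by
  have := (M2_mul_bdd (S.Mθxx T) S.miv fun t _ x => S.abs_inv_v t x).sub
    (M2_mul_bdd (S.Mθxvx T) S.miv2 fun t _ x => S.abs_inv_v_sq t x)
  refine (memLp_congr_ae (Eventually.of_forall fun p => ?_)).1 this
  simp only [Function.uncurry, hh, Pi.sub_apply]; ring

theorem Mpx : MemLp (Function.uncurry S.px) 2 (slab T) := by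
  obtain ⟨N, hN, h⟩ := S.local_bounds T
  have := (M2_mul_bdd (S.Mθx T) S.miv fun t _ x => S.abs_inv_v t x).sub
    (M2_mul_bdd (M2_mul_bdd (S.Mvx T) S.mθ fun t ht x => (h t ht.2 x).2.2) S.miv2
      fun t _ x => S.abs_inv_v_sq t x)
  refine (memLp_congr_ae (Eventually.of_forall fun p => ?_)).1 this
  simp only [Function.uncurry, px, Pi.sub_apply]; ring

theorem Mut : MemLp (Function.uncurry S.ut) 2 (slab T) :=
  ((S.Mr T).const_mul S.μ).sub ((S.Mpx T).const_mul S.R)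

theorem Mht : MemLp (Function.uncurry S.ht) 2 (slab T) := by
  obtain ⟨N, hN, h⟩ := S.local_bounds T
  have := (((S.Mhh T).const_mul S.κ).add
    ((M2_mul_bdd (S.Mux2 T) S.miv fun t _ x => S.abs_inv_v t x).const_mul S.μ)).sub
    ((M2_mul_bdd (M2_mul_bdd (S.Mux T) S.mθ fun t ht x => (h t ht.2 x).2.2) S.miv
      fun t _ x => S.abs_inv_v t x).const_mul S.R)
  refine (memLp_congr_ae (Eventually.of_forall fun p => ?_)).1 this
  simp only [Function.uncurry, ht, Pi.sub_apply, Pi.add_apply]; ring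

/-- Modulus of continuity in time, uniform in space, for the temperature. -/
theorem θ_modulus {η : ℝ} (hη : 0 < η) : ∃ ε > 0, ∀ s t, 0 ≤ s → s ≤ t → t ≤ T → t - s ≤ ε →
    ∀ x, (S.θ t x - S.θ s x) ^ 2 ≤ η := by
  obtain ⟨B, hB⟩ := S.bd T
  have hB0 : 0 ≤ B := (integral_nonneg fun _ => sq_nonneg _).trans (hB T le_rfl).1
  set G := ∫ τ in Icc 0 T, ∫ x, (S.ht τ x / S.cv) ^ 2
  have hG : 0 ≤ G := integral_nonneg fun _ => integral_nonneg fun _ => sq_nonneg _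
  have mθt : Measurable (Function.uncurry fun t x => S.ht t x / S.cv) := S.mht.div_const _
  have Mθt : ∀ T, MemLp (Function.uncurry fun t x => S.ht t x / S.cv) 2 (slab T) := fun T => by
    refine (memLp_congr_ae (Eventually.of_forall fun p => ?_)).1 ((S.Mht T).const_mul S.cv⁻¹)
    simp only [Function.uncurry]; ring
  set a := η / (2 * (G + 4 * B + 1)) with ha
  have ha0 : 0 < a := by positivity
  have ha1 : a * (G + 4 * B) ≤ η / 2 := by
    have : a * (G + 4 * B + 1) = η / 2 := by rw [ha]; field_simp
    nlinarith
  refine ⟨a ^ 3 * η / (2 * (4 * B + 1)), by positivity, fun s t hs hst htT hε x => ?_⟩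
  have hsT : s ≤ T := hst.trans htT
  have bnd : ∀ τ ≤ T, ∫ x, (S.θ τ x - S.θ s x) ^ 2 ≤ 4 * B := fun τ hτ => by
    have i1 := sq_int (S.Lθ τ)
    have i2 := sq_int (S.Lθ s)
    calc ∫ x, (S.θ τ x - S.θ s x) ^ 2 ≤ ∫ x, (2 * (S.θ τ x - 1) ^ 2 + 2 * (S.θ s x - 1) ^ 2) := by
          refine integral_mono_of_nonneg (Eventually.of_forall fun x => sq_nonneg _)
            ((i1.const_mul 2).add (i2.const_mul 2)) (Eventually.of_forall fun x => ?_)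
          show _ ≤ _
          nlinarith [sq_nonneg (S.θ τ x - 1 + (S.θ s x - 1))]
      _ ≤ 4 * B := by
          rw [integral_add (i1.const_mul 2) (i2.const_mul 2), integral_const_mul, integral_const_mul]
          linarith [(hB τ hτ).2.2.1, (hB s hsT).2.2.1]
  have Lw : ∀ τ, MemLp (fun x => S.θ τ x - S.θ s x) 2 volume := fun τ => by
    refine (memLp_congr_ae (Eventually.of_forall fun x => ?_)).1 ((S.Lθ τ).sub (S.Lθ s))
    simp only [Pi.sub_apply]; ring
  have Lwx : MemLp (fun x => S.θx t x - S.θx s x) 2 volume := (S.Lθx t).sub (S.Lθx s)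
  have mw : Measurable (Function.uncurry fun τ x => S.θ τ x - S.θ s x) :=
    S.mθ.sub ((S.mθ.comp measurable_prodMk_left).comp measurable_snd)
  have Mw : MemLp (Function.uncurry fun τ x => S.θ τ x - S.θ s x) 2 (slab t) :=
    M2_of_slices mw Lw fun τ hτ => bnd τ (hτ.trans htT)
  have bx : ∫ x, (S.θx t x - S.θx s x) ^ 2 ≤ 4 * B := by
    have i1 := sq_int (S.Lθx t)
    have i2 := sq_int (S.Lθx s)
    calc ∫ x, (S.θx t x - S.θx s x) ^ 2 ≤ ∫ x, (2 * (S.θx t x) ^ 2 + 2 * (S.θx s x) ^ 2) := by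
          refine integral_mono_of_nonneg (Eventually.of_forall fun x => sq_nonneg _)
            ((i1.const_mul 2).add (i2.const_mul 2)) (Eventually.of_forall fun x => ?_)
          show _ ≤ _
          nlinarith [sq_nonneg (S.θx t x + (S.θx s x))]
      _ ≤ 4 * B := by
          rw [integral_add (i1.const_mul 2) (i2.const_mul 2), integral_const_mul, integral_const_mul]
          linarith [(hB t htT).2.2.2.2.2, (hB s hsT).2.2.2.2.2]
  obtain ⟨s1, i1⟩ := M2_slice mθt (Mθt T)
  have i1' : IntervalIntegrable (fun τ => ∫ x, (S.ht τ x / S.cv) ^ 2) volume s t := by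
    refine (intervalIntegrable_iff_integrableOn_Ioc_of_le hst).2 (IntegrableOn.mono_set i1 ?_)
    exact fun τ h => ⟨hs.trans h.1.le, h.2.trans htT⟩
  have key := evol_le (F := fun τ x => (S.θ τ x - S.θ s x) ^ 2)
    (F' := fun τ x => 2 * ((S.θ τ x - S.θ s x) * (S.ht τ x / S.cv)))
    (ρ := fun τ => (a ^ 2)⁻¹ * (4 * B) + a ^ 2 * ∫ x, (S.ht τ x / S.cv) ^ 2)
    hs hst ((mul_int Mw (Mθt t)).const_mul 2) (sq_int (Lw s)) (sq_int (Lw t))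
    (Eventually.of_forall fun x => by
      refine ftc_time (F := fun τ x => (S.θ τ x - S.θ s x) ^ 2)
        (F' := fun τ x => 2 * ((S.θ τ x - S.θ s x) * (S.ht τ x / S.cv))) hs hst x ?_ ?_
      · have := S.contθ x
        fun_prop
      · intro τ hτ
        refine (((S.tθ' τ x hτ).sub_const (S.θ s x)).fun_pow 2).congr_deriv ?_
        push_cast; ring)
    (intervalIntegrable_const.add (i1'.const_mul _))
    (by
      have s1' := ae_restrict_of_ae_restrict_of_subset (Icc_subset_Icc_right htT) s1
      filter_upwards [s1', ae_restrict_mem measurableSet_Icc] with τ h1 hτ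
      have k1 := sq_int (Lw τ)
      have k2 := sq_int h1
      calc ∫ x, 2 * ((S.θ τ x - S.θ s x) * (S.ht τ x / S.cv))
          ≤ ∫ x, ((a ^ 2)⁻¹ * (S.θ τ x - S.θ s x) ^ 2 + a ^ 2 * (S.ht τ x / S.cv) ^ 2) := by
            refine integral_mono ((mul_int (Lw τ) h1).const_mul 2)
              ((k1.const_mul _).add (k2.const_mul _)) fun x => ?_
            show _ ≤ _
            have : (a ^ 2)⁻¹ * (S.θ τ x - S.θ s x) ^ 2 + a ^ 2 * (S.ht τ x / S.cv) ^ 2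
                - 2 * ((S.θ τ x - S.θ s x) * (S.ht τ x / S.cv))
                = (a⁻¹ * (S.θ τ x - S.θ s x) - a * (S.ht τ x / S.cv)) ^ 2 := by
              field_simp
              ring
            nlinarith [sq_nonneg (a⁻¹ * (S.θ τ x - S.θ s x) - a * (S.ht τ x / S.cv))]
        _ ≤ _ := by
            rw [integral_add (k1.const_mul _) (k2.const_mul _), integral_const_mul,
              integral_const_mul]
            have := bnd τ (hτ.2.trans htT)
            gcongr)
  rw [intervalIntegral.integral_add intervalIntegrable_const (i1'.const_mul _),
    intervalIntegral.integral_const, intervalIntegral.integral_const_mul] at key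
  have hG' : ∫ τ in s..t, ∫ x, (S.ht τ x / S.cv) ^ 2 ≤ G := by
    rw [intervalIntegral.integral_of_le hst]
    refine setIntegral_mono_set i1 (Eventually.of_forall fun _ => integral_nonneg fun _ => sq_nonneg _)
      (Eventually.of_forall fun τ (h : τ ∈ Ioc s t) => (⟨hs.trans h.1.le, h.2.trans htT⟩ : τ ∈ Icc 0 T))
  simp only [sub_self, ne_eq, OfNat.ofNat_ne_zero, not_false_eq_true, zero_pow, integral_zero,
    zero_add, smul_eq_mul] at key
  have hsob := sobolev_eps (fun x => (S.dθ t x).fun_sub (S.dθ s x)) (Lw t) Lwx x ha0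
  have e1 : a⁻¹ * ∫ x, (S.θ t x - S.θ s x) ^ 2
      ≤ a⁻¹ * ((t - s) * ((a ^ 2)⁻¹ * (4 * B)) + a ^ 2 * G) := by
    have := mul_le_mul_of_nonneg_left hG' (sq_nonneg a)
    have h2 := key.trans (add_le_add_right this ((t - s) * ((a ^ 2)⁻¹ * (4 * B))))
    exact mul_le_mul_of_nonneg_left h2 (inv_pos.2 ha0).le
  have e2 : a⁻¹ * ((t - s) * ((a ^ 2)⁻¹ * (4 * B)) + a ^ 2 * G)
      = (t - s) * (4 * B) / a ^ 3 + a * G := by field_simp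
  have e3 : (t - s) * (4 * B) / a ^ 3 ≤ η / 2 := by
    rw [div_le_iff₀ (by positivity)]
    rw [le_div_iff₀ (by positivity)] at hε
    have : 0 ≤ t - s := by linarith
    nlinarith
  have e4 : a * ∫ x, (S.θx t x - S.θx s x) ^ 2 ≤ a * (4 * B) :=
    mul_le_mul_of_nonneg_left bx ha0.le
  nlinarith

/-- The far-field limit `1` and compactness bound the temperature from below at a fixed time. -/
theorem θ_low_slice (t : ℝ) : ∃ δ > 0, ∀ x, δ ≤ S.θ t x := by
  have h := (S.far t).eventually (lt_mem_nhds (show (1 / 2 : ℝ) < 1 by norm_num))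
  rw [Filter.Eventually, mem_cocompact] at h
  obtain ⟨C, hC, hsub⟩ := h
  rcases C.eq_empty_or_nonempty with he | hne
  · refine ⟨1 / 2, by norm_num, fun x => ?_⟩
    exact (show (1 / 2 : ℝ) < S.θ t x from hsub (by simp [he])).le
  · obtain ⟨y, hy, hmin⟩ := hC.exists_isMinOn hne (S.cθ_ t).continuousOn
    refine ⟨min (1 / 2) (S.θ t y), lt_min (by norm_num) (S.θpos t y), fun x => ?_⟩
    by_cases hx : x ∈ C
    · exact (min_le_right _ _).trans (hmin hx)
    · exact (min_le_left _ _).trans (show (1 / 2 : ℝ) < S.θ t x from hsub hx).le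

/-- On a compact time interval the temperature is bounded away from zero. The bound depends on `T`; it
serves only to justify the integrability of the terms in the balance laws. -/
theorem θ_low : ∃ δ > 0, ∀ t ∈ Icc 0 T, ∀ x, δ ≤ S.θ t x := by
  refine IsCompact.induction_on (isCompact_Icc (a := (0 : ℝ)) (b := T))
    (p := fun A => ∃ δ > 0, ∀ t ∈ A, t ∈ Icc 0 T → ∀ x, δ ≤ S.θ t x) ?_ ?_ ?_ ?_ |>.imp
      fun δ h => ⟨h.1, fun t ht => h.2 t ht ht⟩
  · exact ⟨1, one_pos, fun t ht => absurd ht (notMem_empty _)⟩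
  · rintro A A' hA ⟨δ, h0, h⟩
    exact ⟨δ, h0, fun t ht => h t (hA ht)⟩
  · rintro A A' ⟨δ, h0, h⟩ ⟨δ', h0', h'⟩
    refine ⟨min δ δ', lt_min h0 h0', fun t ht hT x => ?_⟩
    rcases ht with ht | ht
    · exact (min_le_left _ _).trans (h t ht hT x)
    · exact (min_le_right _ _).trans (h' t ht hT x)
  · intro t0 ht0
    obtain ⟨δ, h0, h⟩ := S.θ_low_slice t0
    obtain ⟨ε, hε, he⟩ := S.θ_modulus T (η := (δ / 2) ^ 2) (by positivity)
    refine ⟨Metric.ball t0 ε, mem_nhdsWithin_of_mem_nhds (Metric.ball_mem_nhds _ hε),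
      δ / 2, by positivity, fun t ht hT x => ?_⟩
    rw [Metric.mem_ball, Real.dist_eq, abs_lt] at ht
    have hsq : (S.θ t x - S.θ t0 x) ^ 2 ≤ (δ / 2) ^ 2 := by
      rcases le_total t0 t with hle | hle
      · exact he t0 t ht0.1 hle hT.2 (by linarith) x
      · have := he t t0 hT.1 hle ht0.2 (by linarith) x
        linarith [sq_nonneg (S.θ t x), show (S.θ t x - S.θ t0 x) ^ 2 = (S.θ t0 x - S.θ t x) ^ 2 by ring]
    have := abs_le.1 (abs_le_of_sq_le_sq hsq (by positivity))
    linarith [h x]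

end Flow
end NSDecay

namespace NSDecay

/-! ### Time evolution of the logarithmic gradient -/

theorem M2_ae_time {f : ℝ → ℝ → ℝ} (mf : Measurable (Function.uncurry f)) {s t : ℝ} (hs : 0 ≤ s)
    (hst : s ≤ t) (hf : MemLp (Function.uncurry f) 2 (slab t)) :
    ∀ᵐ x, IntervalIntegrable (fun τ => f τ x) volume s t := by
  have h := slab_restrict (F := fun t x => f t x ^ 2) hs hf.integrable_sq
  filter_upwards [h.prod_left_ae] with x hx
  rw [intervalIntegrable_iff_integrableOn_Ioc_of_le hst]
  have hm : AEStronglyMeasurable (fun τ => f τ x) (volume.restrict (Ioc s t)) :=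
    (mf.comp measurable_prodMk_right).aestronglyMeasurable
  exact ((memLp_two_iff_integrable_sq hm).2 hx).integrable (by norm_num)

/-- Local integrability in space of a time integral, needed to compare it with `v_x / v` by testing. -/
theorem locInt_prim {f : ℝ → ℝ → ℝ} {s t : ℝ} (hs : 0 ≤ s)
    (hst : s ≤ t) (hf : MemLp (Function.uncurry f) 2 (slab t)) :
    LocallyIntegrable (fun x => ∫ σ in s..t, f σ x) volume := by
  rw [locallyIntegrable_iff]
  intro C hC
  have : IsFiniteMeasure (volume.restrict C) := ⟨by
    rw [Measure.restrict_apply_univ]; exact hC.measure_lt_top⟩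
  have hle : (volume.restrict (Ioc s t)).prod (volume.restrict C) ≤ slab t :=
    Measure.prod_mono (Measure.restrict_mono
      (fun x (h : x ∈ Ioc s t) => (⟨hs.trans h.1.le, h.2⟩ : x ∈ Icc 0 t)) le_rfl)
      Measure.restrict_le_self
  have := ((hf.mono_measure hle).integrable (by norm_num)).integral_prod_right
  simp only [intervalIntegral.integral_of_le hst]
  exact this

theorem M2_const {g : ℝ → ℝ} (hc : Continuous g) (hg : MemLp g 2 volume) (T : ℝ) :
    MemLp (Function.uncurry fun _ x => g x) 2 (slab T) :=
  M2_of_slices (f := fun _ x => g x) (B := ∫ x, g x ^ 2) (hc.measurable.comp measurable_snd)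
    (fun _ => hg) fun _ _ => le_rfl

namespace Flow
variable (S : Flow)

theorem Lq (t : ℝ) : MemLp (S.q t) 2 volume := by
  refine MemLp.of_le_mul (c := S.K) (S.Lvx t)
    (S.mq.comp measurable_prodMk_left).aestronglyMeasurable (Eventually.of_forall fun x => ?_)
  simp only [q, div_eq_mul_inv, norm_mul, Real.norm_eq_abs]
  rw [mul_comm]
  exact mul_le_mul_of_nonneg_right (S.abs_inv_v t x) (abs_nonneg _)

theorem Ll (t : ℝ) : MemLp (fun x => Real.log (S.v t x)) 2 volume := by
  refine MemLp.of_le_mul (c := S.K) (S.Lv t)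
    ((S.cv_ t).measurable.log).aestronglyMeasurable (Eventually.of_forall fun x => ?_)
  simp only [Real.norm_eq_abs]
  exact abs_log_le S.hK (S.vlo t x)

theorem Mw : ∀ T, MemLp (Function.uncurry fun t x => S.ux t x / S.v t x) 2 (slab T) := fun T => by
  refine (memLp_congr_ae (Eventually.of_forall fun p => ?_)).1
    (M2_mul_bdd (S.Mux T) S.miv fun t _ x => S.abs_inv_v t x)
  simp only [Function.uncurry]; ring

theorem Lw (t : ℝ) : MemLp (fun x => S.ux t x / S.v t x) 2 volume := by
  refine MemLp.of_le_mul (c := S.K) (S.Lux t)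
    ((S.mux.div S.mv).comp measurable_prodMk_left).aestronglyMeasurable
    (Eventually.of_forall fun x => ?_)
  simp only [div_eq_mul_inv, norm_mul, Real.norm_eq_abs]
  rw [mul_comm]
  exact mul_le_mul_of_nonneg_right (S.abs_inv_v t x) (abs_nonneg _)

theorem tl (x t : ℝ) (h : 0 < t) :
    HasDerivAt (fun τ => Real.log (S.v τ x)) (S.ux t x / S.v t x) t :=
  (S.tv t x h).log (S.vpos t x).ne'

theorem contl (x : ℝ) : Continuous fun τ => Real.log (S.v τ x) :=
  (S.contv x).log fun t => ne_of_gt (S.vpos t x)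

/-- `(v_x / v)_t = (u_x / v)_x` in integrated form. No mixed derivative is available classically, so
the identity is obtained by testing against smooth functions. -/
theorem prim_q {s t : ℝ} (hs : 0 ≤ s) : Prim s t S.q S.r := by
  intro τ hτ
  have hsτ := hτ.1
  have hf : LocallyIntegrable (fun x => S.q τ x - S.q s x - ∫ σ in s..τ, S.r σ x) volume :=
    (((S.Lq τ).locallyIntegrable (by norm_num)).sub ((S.Lq s).locallyIntegrable (by norm_num))).sub
      (locInt_prim hs hsτ (S.Mr τ))
  have key := ae_eq_zero_of_integral_contDiff_smul_eq_zero hf ?_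
  · filter_upwards [key] with x hx
    linarith
  intro φ hφ hsupp
  have cφ := hφ.continuous
  have cφ' : Continuous (deriv φ) := hφ.continuous_deriv (by simp)
  have Lφ : MemLp φ 2 volume := cφ.memLp_of_hasCompactSupport hsupp
  have Lφ' : MemLp (deriv φ) 2 volume := cφ'.memLp_of_hasCompactSupport hsupp.deriv
  have dφ : ∀ x, HasDerivAt φ (deriv φ x) x := fun x =>
    ((hφ.differentiable (by simp)) x).hasDerivAt
  have p1 : ∀ t, ∫ x, φ x * S.q t x = - ∫ x, deriv φ x * Real.log (S.v t x) := fun t =>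
    integral_mul_deriv_eq_deriv_mul_of_integrable (fun x _ => dφ x) (fun x _ => S.dq t x) (mul_int Lφ (S.Lq t))
      (mul_int Lφ' (S.Ll t)) (mul_int Lφ (S.Ll t))
  have p2 : (∫ x, deriv φ x * Real.log (S.v τ x)) - ∫ x, deriv φ x * Real.log (S.v s x)
      = ∫ σ in s..τ, ∫ x, deriv φ x * (S.ux σ x / S.v σ x) := by
    refine evol (F := fun σ x => deriv φ x * Real.log (S.v σ x))
      (F' := fun σ x => deriv φ x * (S.ux σ x / S.v σ x)) hs hsτ
      (mul_int (M2_const cφ' Lφ' τ) (S.Mw τ)) (mul_int Lφ' (S.Ll s)) (mul_int Lφ' (S.Ll τ))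
      (Eventually.of_forall fun x => ?_)
    exact ftc_time (F := fun σ x => deriv φ x * Real.log (S.v σ x))
      (F' := fun σ x => deriv φ x * (S.ux σ x / S.v σ x)) hs hsτ x
      (continuous_const.mul (S.contl x)) fun σ hσ => (S.tl x σ hσ).const_mul _
  have iφr := slab_restrict hs (F := fun σ x => φ x * S.r σ x) (mul_int (M2_const cφ Lφ τ) (S.Mr τ))
  have p3 : ∫ σ in s..τ, ∫ x, deriv φ x * (S.ux σ x / S.v σ x)
      = - ∫ σ in s..τ, ∫ x, φ x * S.r σ x := by
    rw [← intervalIntegral.integral_neg]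
    simp only [intervalIntegral.integral_of_le hsτ]
    refine integral_congr_ae ?_
    have h1 := (M2_slice S.mr (S.Mr τ)).1
    have h2 := ae_restrict_of_ae_restrict_of_subset (s := Ioc s τ)
      (fun x (h : x ∈ Ioc s τ) => (⟨hs.trans h.1.le, h.2⟩ : x ∈ Icc 0 τ)) h1
    filter_upwards [h2] with σ hσ
    rw [integral_mul_deriv_eq_deriv_mul_of_integrable (fun x _ => dφ x) (fun x _ => S.dr σ x) (mul_int Lφ hσ)
      (mul_int Lφ' (S.Lw σ)) (mul_int Lφ (S.Lw σ)), neg_neg]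
  have p4 : ∫ σ in s..τ, ∫ x, φ x * S.r σ x = ∫ x, φ x * ∫ σ in s..τ, S.r σ x := by
    simp only [intervalIntegral.integral_of_le hsτ]
    rw [integral_integral_swap iφr]
    simp only [integral_const_mul]
  have i3 : Integrable fun x => φ x * ∫ σ in s..τ, S.r σ x := by
    have := iφr.integral_prod_right
    simpa only [Function.uncurry, integral_const_mul, intervalIntegral.integral_of_le hsτ] using this
  have e : ∀ x, φ x • (S.q τ x - S.q s x - ∫ σ in s..τ, S.r σ x)
      = φ x * S.q τ x - φ x * S.q s x - φ x * ∫ σ in s..τ, S.r σ x := fun x => by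
    rw [smul_eq_mul]; ring
  simp only [e]
  have i1 := mul_int Lφ (S.Lq τ)
  have i2 := mul_int Lφ (S.Lq s)
  rw [integral_sub (f := fun x => φ x * S.q τ x - φ x * S.q s x) (i1.sub i2) i3, integral_sub i1 i2, p1, p1, ← p4]
  linarith

theorem prim_u {s t : ℝ} (hs : 0 ≤ s) : Prim s t S.u S.ut := by
  intro τ hτ
  filter_upwards [M2_ae_time S.mut_ hs hτ.1 (S.Mut τ)] with x hx
  have := ftc_time (F := S.u) (F' := S.ut) hs hτ.1 x (S.contu x) (fun σ hσ => S.tu' σ x hσ) hx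
  linarith

theorem ftc_qq {s t : ℝ} (hs : 0 ≤ s) (hst : s ≤ t) : ∀ᵐ x,
    S.q t x * S.q t x - S.q s x * S.q s x
      = ∫ τ in s..t, (S.r τ x * S.q τ x + S.q τ x * S.r τ x) :=
  (S.prim_q hs).mul hst (S.prim_q hs) S.mq S.mr S.mq S.mr (M2_ae_time S.mr hs hst (S.Mr t))
    (M2_ae_time S.mr hs hst (S.Mr t))

theorem ftc_uq {s t : ℝ} (hs : 0 ≤ s) (hst : s ≤ t) : ∀ᵐ x,
    S.u t x * S.q t x - S.u s x * S.q s x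
      = ∫ τ in s..t, (S.ut τ x * S.q τ x + S.u τ x * S.r τ x) :=
  (S.prim_u hs).mul hst (S.prim_q hs) S.mu S.mut_ S.mq S.mr (M2_ae_time S.mut_ hs hst (S.Mut t))
    (M2_ae_time S.mr hs hst (S.Mr t))

end Flow
end NSDecay

namespace NSDecay

/-! ### Multipliers and the integrated balance laws -/

/-- Square integrability on `[0, T] × ℝ`. -/
abbrev M2 (T : ℝ) (f : ℝ → ℝ → ℝ) : Prop := MemLp (Function.uncurry f) 2 (slab T)

/-- Integrability on `[0, T] × ℝ`. -/
abbrev I1 (T : ℝ) (f : ℝ → ℝ → ℝ) : Prop := Integrable (Function.uncurry f) (slab T)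

/-- Bounded measurable functions on `[0, T] × ℝ`. -/
def Bd (T : ℝ) (g : ℝ → ℝ → ℝ) : Prop :=
  Measurable (Function.uncurry g) ∧ ∃ C : ℝ, ∀ t ∈ Icc 0 T, ∀ x, |g t x| ≤ C

/-- The integral of `f` over `(s, t] × ℝ`. -/
noncomputable def II (s t : ℝ) (f : ℝ → ℝ → ℝ) : ℝ :=
  ∫ p, Function.uncurry f p ∂((volume.restrict (Ioc s t)).prod volume)

variable {T : ℝ} {f g : ℝ → ℝ → ℝ}

theorem Bd.mul (hf : Bd T f) (hg : Bd T g) : Bd T fun t x => f t x * g t x := by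
  obtain ⟨mf, C, hC⟩ := hf
  obtain ⟨mg, D, hD⟩ := hg
  refine ⟨mf.mul mg, C * D, fun t ht x => ?_⟩
  rw [abs_mul]
  exact mul_le_mul (hC t ht x) (hD t ht x) (abs_nonneg _) ((abs_nonneg _).trans (hC t ht x))

theorem m2b (hg : Bd T g) (hf : M2 T f) : M2 T fun t x => g t x * f t x := by
  obtain ⟨mg, D, hD⟩ := hg
  exact M2_mul_bdd hf mg hD

theorem i1b (hg : Bd T g) (hf : I1 T f) : I1 T fun t x => g t x * f t x := by
  obtain ⟨mg, D, hD⟩ := hg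
  exact int_mul_bdd hf mg hD

theorem i1mm (hf : M2 T f) (hg : M2 T g) : I1 T fun t x => f t x * g t x := mul_int hf hg

theorem i1sq (hf : M2 T f) : I1 T fun t x => f t x ^ 2 := sq_int hf

theorem i1congr (hf : I1 T f) (h : ∀ t x, f t x = g t x) : I1 T g := by
  have : f = g := by funext t x; exact h t x
  rwa [← this]

theorem m2congr (hf : M2 T f) (h : ∀ t x, f t x = g t x) : M2 T g := by
  have : f = g := by funext t x; exact h t x
  rwa [← this]

theorem i1add (hf : I1 T f) (hg : I1 T g) : I1 T fun t x => f t x + g t x := Integrable.add hf hg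
theorem i1sub (hf : I1 T f) (hg : I1 T g) : I1 T fun t x => f t x - g t x := Integrable.sub hf hg
theorem i1neg (hf : I1 T f) : I1 T fun t x => - f t x := Integrable.neg hf
theorem i1c (c : ℝ) (hf : I1 T f) : I1 T fun t x => c * f t x := Integrable.const_mul hf c
theorem m2add (hf : M2 T f) (hg : M2 T g) : M2 T fun t x => f t x + g t x := MemLp.add hf hg
theorem m2sub (hf : M2 T f) (hg : M2 T g) : M2 T fun t x => f t x - g t x := MemLp.sub hf hg
theorem m2c (c : ℝ) (hf : M2 T f) : M2 T fun t x => c * f t x := MemLp.const_mul hf c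

theorem II_add {s t : ℝ} (hs : 0 ≤ s) (hf : I1 t f) (hg : I1 t g) :
    II s t (fun t x => f t x + g t x) = II s t f + II s t g :=
  integral_add (slab_restrict hs hf) (slab_restrict hs hg)

theorem II_mono {s t : ℝ} (hs : 0 ≤ s) (hf : I1 t f) (hg : I1 t g) (h : ∀ τ ∈ Icc 0 t, ∀ x, f τ x ≤ g τ x) :
    II s t f ≤ II s t g := by
  refine integral_mono_ae (slab_restrict hs hf) (slab_restrict hs hg) ?_
  have : ∀ᵐ p ∂((volume.restrict (Ioc s t)).prod (volume : Measure ℝ)), p.1 ∈ Ioc s t :=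
    Measure.quasiMeasurePreserving_fst.ae (ae_restrict_mem measurableSet_Ioc)
  filter_upwards [this] with p hp
  exact h p.1 ⟨hs.trans hp.1.le, hp.2⟩ p.2

theorem II_eq {s t : ℝ} (hs : 0 ≤ s) (hst : s ≤ t) (hf : I1 t f) : II s t f = ∫ τ in s..t, ∫ x, f τ x := by
  rw [intervalIntegral.integral_of_le hst]
  exact integral_prod _ (slab_restrict hs hf)

theorem II_ii {s t : ℝ} (hs : 0 ≤ s) (hst : s ≤ t) (hf : I1 t f) :
    IntervalIntegrable (fun τ => ∫ x, f τ x) volume s t :=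
  (intervalIntegrable_iff_integrableOn_Ioc_of_le hst).2 (slab_restrict hs hf).integral_prod_left

theorem II_const_mul {s t : ℝ} (c : ℝ) : II s t (fun t x => c * f t x) = c * II s t f :=
  integral_const_mul _ _

theorem II_nonneg {s t : ℝ} (hf : ∀ τ x, 0 ≤ f τ x) : 0 ≤ II s t f :=
  integral_nonneg fun p => hf p.1 p.2

/-- The integrated form of a balance law `F_t ≤ Φ_x + d`. -/
theorem balance {F F' Φ Φ' d : ℝ → ℝ → ℝ} {s t : ℝ} (hs : 0 ≤ s) (hst : s ≤ t)
    (iF' : I1 t F') (iΦ : I1 t Φ) (iΦ' : I1 t Φ') (id : I1 t d)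
    (h1 : Integrable (F s)) (h2 : Integrable (F t))
    (h : ∀ᵐ x, IntervalIntegrable (fun τ => F' τ x) volume s t →
      F t x - F s x = ∫ τ in s..t, F' τ x)
    (hΦ : ∀ τ x, HasDerivAt (Φ τ) (Φ' τ x) x)
    (hle : ∀ τ x, F' τ x ≤ Φ' τ x + d τ x) :
    ∫ x, F t x ≤ (∫ x, F s x) + II s t d := by
  rw [II_eq hs hst id]
  refine evol_le hs hst iF' h1 h2 h (II_ii hs hst id) ?_
  have j1 := Integrable.prod_right_ae iF'
  have j2 := Integrable.prod_right_ae iΦ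
  have j3 := Integrable.prod_right_ae iΦ'
  have j4 := Integrable.prod_right_ae id
  filter_upwards [j1, j2, j3, j4] with τ k1 k2 k3 k4
  exact integral_le_of_flux (hΦ τ) k2 k3 k1 k4 (hle τ)

theorem measurable_GG : Measurable GG := by
  unfold GG; have := continuous_sp.measurable; fun_prop
theorem measurable_gg : Measurable gg := by
  unfold gg; have := continuous_sp.measurable; fun_prop
theorem measurable_dgg : Measurable dgg := by
  unfold dgg; have := continuous_sp.measurable; fun_prop
theorem measurable_jj : Measurable jj := by unfold jj; fun_prop
theorem measurable_dHH : Measurable dHH := by unfold dHH; fun_prop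

namespace Flow
variable (S : Flow)

theorem Bu (T : ℝ) : Bd T S.u := by
  obtain ⟨N, -, h⟩ := S.local_bounds T
  exact ⟨S.mu, N, fun t ht x => (h t ht.2 x).1⟩

theorem Bθ (T : ℝ) : Bd T S.θ := by
  obtain ⟨N, -, h⟩ := S.local_bounds T
  exact ⟨S.mθ, N, fun t ht x => (h t ht.2 x).2.2⟩

theorem Biθ (T : ℝ) : Bd T fun t x => (S.θ t x)⁻¹ := by
  obtain ⟨δ, h0, h⟩ := S.θ_low T
  refine ⟨S.mθ.inv, δ⁻¹, fun t ht x => ?_⟩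
  rw [abs_of_pos (inv_pos.2 (S.θpos t x))]
  exact inv_anti₀ h0 (h t ht x)

theorem Biv (T : ℝ) : Bd T fun t x => (S.v t x)⁻¹ :=
  ⟨S.miv, S.K, fun t _ x => S.abs_inv_v t x⟩

theorem abs_v_sub_one (t x : ℝ) : |S.v t x - 1| ≤ S.K := by
  have := S.vpos t x
  have := S.vhi t x
  have := S.hK
  rw [abs_le]; constructor <;> linarith

theorem abs_log_v (t x : ℝ) : |Real.log (S.v t x)| ≤ S.K ^ 2 := by
  have h := abs_log_le S.hK (S.vlo t x)
  have := mul_le_mul_of_nonneg_left (S.abs_v_sub_one t x) S.Kpos.le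
  nlinarith

theorem Bl (T : ℝ) : Bd T fun t x => Real.log (S.v t x) :=
  ⟨S.mv.log, S.K ^ 2, fun t _ x => S.abs_log_v t x⟩

theorem abs_gg (t x : ℝ) : |gg (S.θ t x)| ≤ 1 := by
  rw [abs_of_nonneg (gg_nonneg (S.θpos t x))]; exact gg_le_one

theorem Bgg (T : ℝ) : Bd T fun t x => gg (S.θ t x) :=
  ⟨measurable_gg.comp S.mθ, 1, fun t _ x => S.abs_gg t x⟩

theorem Bdgg (T : ℝ) : Bd T fun t x => dgg (S.θ t x) := by
  obtain ⟨δ, h0, h⟩ := S.θ_low T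
  refine ⟨measurable_dgg.comp S.mθ, 12 / δ ^ 2, fun t ht x => ?_⟩
  rw [abs_of_nonneg (dgg_nonneg (S.θpos t x))]
  refine (dgg_le (S.θpos t x)).trans ?_
  have := h t ht x
  gcongr

theorem Msp (T : ℝ) : M2 T fun t x => sp (S.θ t x) := by
  refine MemLp.of_le_mul (c := 1) (S.Mθ T) (continuous_sp.measurable.comp S.mθ).aestronglyMeasurable
    (Eventually.of_forall fun p => ?_)
  simp only [Function.uncurry, Real.norm_eq_abs, one_mul]
  rw [abs_of_nonneg (sp_nonneg _)]
  exact sp_le_abs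

theorem MGG (T : ℝ) : M2 T fun t x => GG (S.θ t x) := by
  refine MemLp.of_le_mul (c := 1) (S.Mθ T) (measurable_GG.comp S.mθ).aestronglyMeasurable
    (Eventually.of_forall fun p => ?_)
  simp only [Function.uncurry, Real.norm_eq_abs, one_mul]
  rw [abs_of_nonneg GG_nonneg]
  exact (GG_le_sp (S.θpos _ _)).trans sp_le_abs

/-- The pressure deviation `θ / v - 1`. -/
noncomputable def pd (t x : ℝ) : ℝ := S.θ t x / S.v t x - 1

theorem Mpd (T : ℝ) : M2 T S.pd := by
  refine m2congr (m2b (S.Biv T) (m2sub (S.Mθ T) (S.Mv T))) fun t x => ?_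
  have := (S.vpos t x).ne'
  unfold pd; field_simp; ring

theorem dpd (t x : ℝ) : HasDerivAt (S.pd t) (S.px t x) x := (S.dpx t x).sub_const 1

theorem Mθc (T : ℝ) : M2 T fun t x => 1 - (S.θ t x)⁻¹ := by
  refine m2congr (m2b (S.Biθ T) (S.Mθ T)) fun t x => ?_
  have := (S.θpos t x).ne'
  field_simp

theorem Mvc (T : ℝ) : M2 T fun t x => 1 - (S.v t x)⁻¹ := by
  refine m2congr (m2b (S.Biv T) (S.Mv T)) fun t x => ?_
  have := (S.vpos t x).ne'
  field_simp

theorem Mθw (T : ℝ) : M2 T fun t x => S.θx t x / S.v t x := by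
  refine m2congr (m2b (S.Biv T) (S.Mθx T)) fun t x => ?_
  ring

theorem dggθ (t x : ℝ) : HasDerivAt (fun y => gg (S.θ t y)) (dgg (S.θ t x) * S.θx t x) x :=
  (hasDerivAt_gg (S.θpos t x)).comp x (S.dθ t x)

theorem tGG (x t : ℝ) (h : 0 < t) :
    HasDerivAt (fun τ => GG (S.θ τ x)) (gg (S.θ t x) * (S.ht t x / S.cv)) t :=
  HasDerivAt.comp (h₂ := GG) t (hasDerivAt_GG (S.θpos t x)) (S.tθ' t x h)

theorem contGG (x : ℝ) : Continuous fun τ => GG (S.θ τ x) := by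
  have h1 := (continuous_sp.comp (S.contθ x)).pow 3
  have h2 := (S.contθ x).pow 2
  exact h1.div h2 fun t => ne_of_gt (pow_pos (S.θpos t x) 2)

/-- The viscous part of the entropy dissipation. -/
noncomputable def dA (t x : ℝ) : ℝ := (S.θ t x)⁻¹ * S.ux t x ^ 2
/-- The heat-conduction part of the entropy dissipation, `(θ_x / θ)²`. -/
noncomputable def dB (t x : ℝ) : ℝ := ((S.θ t x)⁻¹ * S.θx t x) ^ 2
/-- The density `u_x²` restricted, by the weight `gg θ`, to high temperatures. -/
noncomputable def dC (t x : ℝ) : ℝ := gg (S.θ t x) * S.ux t x ^ 2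
/-- The density `θ v_x²`, dissipated by the gradient functional. -/
noncomputable def dV (t x : ℝ) : ℝ := S.θ t x * S.vx t x ^ 2
/-- The squared excess of the temperature over `2`. -/
noncomputable def dS (t x : ℝ) : ℝ := sp (S.θ t x) ^ 2
/-- The density `u_x²`. -/
noncomputable def dU (t x : ℝ) : ℝ := S.ux t x ^ 2

theorem idA (T : ℝ) : I1 T S.dA := i1b (S.Biθ T) (i1sq (S.Mux T))
theorem idB (T : ℝ) : I1 T S.dB := i1sq (m2b (S.Biθ T) (S.Mθx T))
theorem idC (T : ℝ) : I1 T S.dC := i1b (S.Bgg T) (i1sq (S.Mux T))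
theorem idV (T : ℝ) : I1 T S.dV := i1b (S.Bθ T) (i1sq (S.Mvx T))
theorem idS (T : ℝ) : I1 T S.dS := i1sq (S.Msp T)
theorem idU (T : ℝ) : I1 T S.dU := i1sq (S.Mux T)

end Flow
end NSDecay

namespace NSDecay

/-! ### Pointwise estimates of the production terms -/

theorem abs_mul_le {a b c d : ℝ} (h1 : |a| ≤ c) (h2 : |b| ≤ d) : a * b ≤ c * d :=
  (le_abs_self _).trans (by
    rw [abs_mul]; exact mul_le_mul h1 h2 (abs_nonneg _) ((abs_nonneg _).trans h1))

theorem gg_mul_le {θ X : ℝ} (hθ : 0 < θ) : gg θ * θ * |X| ≤ (X ^ 2 + 3 * sp θ ^ 2) / 2 := by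
  have h0 := gg_nonneg hθ
  have h1 := gg_le_one (a := θ)
  have h2 := gg_mul_sq_le hθ
  have h3 : gg θ * θ * |X| ≤ gg θ * (θ ^ 2 + X ^ 2) / 2 := by
    nlinarith [mul_nonneg h0 (sq_nonneg (θ - |X|)), sq_abs X]
  nlinarith [mul_le_mul_of_nonneg_right h1 (sq_nonneg X)]

/-- The production of `GG θ` bounded from below. The letters `i`, `X`, `Y` stand for `1 / v`, `u_x`,
`θ_x`. -/
theorem prod_gg_lower {μ R κ K i θ X Y : ℝ} (hμ : 0 < μ) (hκ : 0 < κ) (hR : 0 < R) (hK : 1 ≤ K)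
    (hi : K⁻¹ ≤ i) (hi' : i ≤ K) (hθ : 0 < θ) :
    κ * dgg θ * i * Y ^ 2 - μ * gg θ * i * X ^ 2 + gg θ * R * θ * i * X ≤
      12 * κ * K * (θ⁻¹ * Y) ^ 2 - μ / (2 * K) * (gg θ * X ^ 2)
        + 3 * R ^ 2 * K ^ 3 / (2 * μ) * sp θ ^ 2 := by
  have hK0 : 0 < K := by linarith
  have hi0 : 0 < i := (inv_pos.2 hK0).trans_le hi
  have g0 := gg_nonneg hθ
  have h1 : κ * dgg θ * i * Y ^ 2 ≤ 12 * κ * K * (θ⁻¹ * Y) ^ 2 := by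
    have e : 12 * κ * K * (θ⁻¹ * Y) ^ 2 = κ * (12 / θ ^ 2) * K * Y ^ 2 := by field_simp
    rw [e]
    have := dgg_le hθ
    have := dgg_nonneg hθ
    gcongr
  have h2 : μ / K * (gg θ * X ^ 2) ≤ μ * gg θ * i * X ^ 2 := by
    have : μ / K * (gg θ * X ^ 2) = μ * gg θ * K⁻¹ * X ^ 2 := by ring
    rw [this]; gcongr
  have h3 : gg θ * R * θ * i * X ≤ μ / (2 * K) * (gg θ * X ^ 2)
      + R ^ 2 * K ^ 3 / (2 * μ) * (gg θ * θ ^ 2) := by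
    have e : μ / (2 * K) * (gg θ * X ^ 2) + R ^ 2 * K * i ^ 2 / (2 * μ) * (gg θ * θ ^ 2)
        - gg θ * R * θ * i * X = gg θ * (μ * X - K * R * i * θ) ^ 2 / (2 * μ * K) := by
      field_simp; ring
    have e2 : 0 ≤ gg θ * (μ * X - K * R * i * θ) ^ 2 / (2 * μ * K) := by positivity
    have e3 : R ^ 2 * K * i ^ 2 / (2 * μ) * (gg θ * θ ^ 2)
        ≤ R ^ 2 * K * K ^ 2 / (2 * μ) * (gg θ * θ ^ 2) := by gcongr
    have e4 : R ^ 2 * K * K ^ 2 / (2 * μ) = R ^ 2 * K ^ 3 / (2 * μ) := by ring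
    rw [e4] at e3
    linarith
  have h4 : R ^ 2 * K ^ 3 / (2 * μ) * (gg θ * θ ^ 2)
      ≤ R ^ 2 * K ^ 3 / (2 * μ) * (3 * sp θ ^ 2) := by
    have := gg_mul_sq_le hθ
    gcongr
  have e1 : μ / K * (gg θ * X ^ 2) = μ / (2 * K) * (gg θ * X ^ 2) + μ / (2 * K) * (gg θ * X ^ 2) := by
    field_simp; ring
  have e2 : R ^ 2 * K ^ 3 / (2 * μ) * (3 * sp θ ^ 2) = 3 * R ^ 2 * K ^ 3 / (2 * μ) * sp θ ^ 2 := by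
    ring
  linarith

theorem gg_press {R K i θ X l L : ℝ} (hR : 0 < R) (hK : 0 < K) (hi : 0 < i) (hi' : i ≤ K)
    (hθ : 0 < θ) (hl : |l| ≤ L) :
    l * (gg θ * R * θ * i * X) ≤ L * R * K * ((X ^ 2 + 3 * sp θ ^ 2) / 2) := by
  have h1 := gg_mul_le (X := X) hθ
  have g0 := gg_nonneg hθ
  have e : |gg θ * R * θ * i * X| = R * i * (gg θ * θ * |X|) := by
    rw [abs_mul, abs_of_nonneg (show 0 ≤ gg θ * R * θ * i by positivity)]; ring
  have h2 : |gg θ * R * θ * i * X| ≤ R * K * ((X ^ 2 + 3 * sp θ ^ 2) / 2) := by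
    rw [e]
    have : 0 ≤ gg θ * θ * |X| := by positivity
    gcongr
  calc _ ≤ L * (R * K * ((X ^ 2 + 3 * sp θ ^ 2) / 2)) := abs_mul_le hl h2
    _ = _ := by ring

/-- The production of `GG θ` bounded from above; heat conduction only helps. -/
theorem prod_gg_upper {μ R κ K i θ X Y : ℝ} (hμ : 0 < μ) (hκ : 0 < κ) (hR : 0 < R) (hK : 1 ≤ K)
    (hi : K⁻¹ ≤ i) (hi' : i ≤ K) (hθ : 0 < θ) :
    -(κ * dgg θ * i * Y ^ 2 - μ * gg θ * i * X ^ 2 + gg θ * R * θ * i * X) ≤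
      (μ * K + R * K / 2) * X ^ 2 + 3 * R * K / 2 * sp θ ^ 2 := by
  have hK0 : 0 < K := by linarith
  have hi0 : 0 < i := (inv_pos.2 hK0).trans_le hi
  have g0 := gg_nonneg hθ
  have g1 := gg_le_one (a := θ)
  have h1 : 0 ≤ κ * dgg θ * i * Y ^ 2 := by have := dgg_nonneg hθ; positivity
  have h2 : μ * gg θ * i * X ^ 2 ≤ μ * 1 * K * X ^ 2 := by gcongr
  have h3 := gg_press (X := X) (l := -1) (L := 1) hR hK0 hi0 hi' hθ (by simp)
  linarith

/-- The coefficient of `(θ_x / θ)²` in `prod_grad`. -/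
noncomputable def C1 (R K : ℝ) : ℝ := 9 * R * K ^ 7 + 12 * R * K ^ 3
/-- The coefficient of `u_x²` in `prod_grad`. -/
noncomputable def C2 (μ κ R cv K : ℝ) : ℝ := K + R / κ * (μ * K ^ 3 + R * K ^ 3 / 2 + cv * K / 2)
/-- The coefficient of `(θ - 2)₊²` in `prod_grad`. -/
noncomputable def C3 (κ R cv K : ℝ) : ℝ := R / κ * (3 * R * K ^ 3 / 2 + cv * K / 2)

/-- The production of the gradient functional. The letters `i`, `X`, `Y`, `Z`, `l` stand for `1 / v`,
`u_x`, `θ_x`, `v_x`, `log v`. The cross term `θ_x v_x` keeps only the factor `1 - gg θ`, whose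
decay at high temperatures (`one_sub_gg_sq_le`) allows its absorption into `θ v_x²` and `(θ_x / θ)²`. -/
theorem prod_grad {μ R κ cv K i θ X Y Z l : ℝ} (hμ : 0 < μ) (hκ : 0 < κ) (hR : 0 < R)
    (hcv : 0 < cv) (hK : 1 ≤ K)
    (hi : K⁻¹ ≤ i) (hi' : i ≤ K) (hθ : 0 < θ) (hl : |l| ≤ K ^ 2) :
    -(R * θ * i ^ 3 * Z ^ 2) + R * (1 - gg θ) * i ^ 2 * Y * Z + i * X ^ 2 - R * l * dgg θ * i * Y ^ 2
      + R / κ * (l * gg θ * (μ * i * X ^ 2 - R * θ * i * X) + cv * GG θ * i * X) ≤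
    -(R / (2 * K ^ 3)) * (θ * Z ^ 2) + C1 R K * (θ⁻¹ * Y) ^ 2 + C2 μ κ R cv K * X ^ 2
      + C3 κ R cv K * sp θ ^ 2 := by
  have hK0 : 0 < K := by linarith
  have hi0 : 0 < i := (inv_pos.2 hK0).trans_le hi
  have g0 := gg_nonneg hθ
  have g1 := gg_le_one (a := θ)
  have t1 : R / K ^ 3 * (θ * Z ^ 2) ≤ R * θ * i ^ 3 * Z ^ 2 := by
    have e : R / K ^ 3 * (θ * Z ^ 2) = R * θ * K⁻¹ ^ 3 * Z ^ 2 := by field_simp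
    rw [e]; gcongr
  have t2 : R * (1 - gg θ) * i ^ 2 * Y * Z
      ≤ R / (2 * K ^ 3) * (θ * Z ^ 2) + 9 * R * K ^ 7 * (θ⁻¹ * Y) ^ 2 := by
    obtain ⟨y, rfl⟩ : ∃ y, Y = θ * y := ⟨θ⁻¹ * Y, by field_simp⟩
    have ey : θ⁻¹ * (θ * y) = y := by field_simp
    rw [ey]
    have e : R / (2 * K ^ 3) * (θ * Z ^ 2) + R * K ^ 3 / 2 * i ^ 4 * ((1 - gg θ) ^ 2 * θ) * y ^ 2
        - R * (1 - gg θ) * i ^ 2 * (θ * y) * Z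
        = R / (2 * K ^ 3) * θ * (Z - K ^ 3 * i ^ 2 * (1 - gg θ) * y) ^ 2 := by
      field_simp; ring
    have e2 : 0 ≤ R / (2 * K ^ 3) * θ * (Z - K ^ 3 * i ^ 2 * (1 - gg θ) * y) ^ 2 := by positivity
    have e3 : R * K ^ 3 / 2 * i ^ 4 * ((1 - gg θ) ^ 2 * θ) * y ^ 2
        ≤ R * K ^ 3 / 2 * K ^ 4 * 18 * y ^ 2 := by
      have := one_sub_gg_sq_le hθ
      gcongr
    have e4 : R * K ^ 3 / 2 * K ^ 4 * 18 * y ^ 2 = 9 * R * K ^ 7 * y ^ 2 := by ring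
    linarith
  have t3 : i * X ^ 2 ≤ K * X ^ 2 := by gcongr
  have t4 : -(R * l * dgg θ * i * Y ^ 2) ≤ 12 * R * K ^ 3 * (θ⁻¹ * Y) ^ 2 := by
    have d0 := dgg_nonneg hθ
    have h : |R * dgg θ * i * Y ^ 2| ≤ R * (12 / θ ^ 2) * K * Y ^ 2 := by
      rw [abs_of_nonneg (by positivity)]
      have := dgg_le hθ
      gcongr
    have h2 := abs_mul_le (a := -l) (c := K ^ 2) (by rwa [abs_neg]) h
    have e : K ^ 2 * (R * (12 / θ ^ 2) * K * Y ^ 2) = 12 * R * K ^ 3 * (θ⁻¹ * Y) ^ 2 := by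
      field_simp
    linarith
  have t5 : l * gg θ * (μ * i * X ^ 2) ≤ μ * K ^ 3 * X ^ 2 := by
    have h : |gg θ * (μ * i * X ^ 2)| ≤ 1 * (μ * K * X ^ 2) := by
      rw [abs_of_nonneg (by positivity)]
      gcongr
    have h2 := abs_mul_le hl h
    linarith
  have t6 := gg_press (X := X) (l := -l) (L := K ^ 2) hR hK0 hi0 hi' hθ (by rwa [abs_neg])
  have t7 : cv * GG θ * i * X ≤ cv * K * ((X ^ 2 + sp θ ^ 2) / 2) := by
    have h := GG_le_sp hθ
    have h0 := GG_nonneg (a := θ)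
    have s0 := sp_nonneg θ
    have : cv * GG θ * i * X ≤ cv * sp θ * K * |X| := by
      calc cv * GG θ * i * X ≤ cv * GG θ * i * |X| :=
            mul_le_mul_of_nonneg_left (le_abs_self _) (by positivity)
        _ ≤ _ := by gcongr
    have h2 : sp θ * |X| ≤ (X ^ 2 + sp θ ^ 2) / 2 := by nlinarith [sq_nonneg (sp θ - |X|), sq_abs X]
    have h3 := mul_le_mul_of_nonneg_left h2 (show 0 ≤ cv * K by positivity)
    linarith
  have t8 : l * gg θ * (μ * i * X ^ 2 - R * θ * i * X) + cv * GG θ * i * X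
      ≤ μ * K ^ 3 * X ^ 2 + K ^ 2 * R * K * ((X ^ 2 + 3 * sp θ ^ 2) / 2)
        + cv * K * ((X ^ 2 + sp θ ^ 2) / 2) := by linarith
  have t9 := mul_le_mul_of_nonneg_left t8 (show 0 ≤ R / κ by positivity)
  have e1 : R / K ^ 3 * (θ * Z ^ 2) = R / (2 * K ^ 3) * (θ * Z ^ 2) + R / (2 * K ^ 3) * (θ * Z ^ 2) := by
    field_simp; ring
  unfold C1 C2 C3
  linarith

/-- The production of `(u - u_s)² / 2`, where `u_s` is the velocity at an earlier time. The letters `i`,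
`X`, `W`, `P` stand for `1 / v`, `u_x`, the derivative of `u_s`, and `θ / v - 1`. -/
theorem prod_vel {μ R K i X W P η : ℝ} (hμ : 0 < μ) (hK : 1 ≤ K) (hη : 0 < η)
    (hi : K⁻¹ ≤ i) (hi' : i ≤ K) :
    -((X - W) * (μ * (X * i) - R * P)) ≤
      (μ * K + η⁻¹) * W ^ 2 + η⁻¹ * X ^ 2 + η * (R ^ 2 * P ^ 2) := by
  have hK0 : 0 < K := by linarith
  have hi0 : 0 < i := (inv_pos.2 hK0).trans_le hi
  have h1 : -(μ * i * X ^ 2) + μ * i * (X * W) ≤ μ * K * W ^ 2 := by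
    have : μ * i * W ^ 2 ≤ μ * K * W ^ 2 := by gcongr
    nlinarith [mul_nonneg (mul_pos hμ hi0).le (sq_nonneg (X - W)),
      mul_nonneg (mul_pos hμ hi0).le (sq_nonneg X), mul_nonneg (mul_pos hμ hi0).le (sq_nonneg W)]
  have h2 : (X - W) * (R * P) ≤ η⁻¹ * W ^ 2 + η⁻¹ * X ^ 2 + η * (R ^ 2 * P ^ 2) := by
    have e : η⁻¹ * W ^ 2 + η⁻¹ * X ^ 2 + η * (R ^ 2 * P ^ 2) - (X - W) * (R * P)
        = η⁻¹ * ((X + W) ^ 2 / 2 + (X - W - η * (R * P)) ^ 2 / 2) + η * (R ^ 2 * P ^ 2) / 2 := by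
      field_simp; ring
    have : 0 ≤ η⁻¹ * ((X + W) ^ 2 / 2 + (X - W - η * (R * P)) ^ 2 / 2) + η * (R ^ 2 * P ^ 2) / 2 := by
      positivity
    linarith
  nlinarith

end NSDecay

namespace NSDecay
namespace Flow
variable (S : Flow)

/-! ### The four balance laws -/

/-- The relative entropy density. -/
noncomputable def en (t x : ℝ) : ℝ :=
  S.u t x ^ 2 / 2 + S.R * (S.v t x - Real.log (S.v t x) - 1)
    + S.cv * (S.θ t x - Real.log (S.θ t x) - 1)

theorem ent_int {f : ℝ → ℝ} {δ : ℝ} (hδ : 0 < δ) (hf : Measurable f) (h : ∀ x, δ ≤ f x)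
    (hL : MemLp (fun x => f x - 1) 2 volume) :
    Integrable fun x => f x - Real.log (f x) - 1 := by
  refine (((sq_int hL).const_mul δ⁻¹)).mono' ?_ (Eventually.of_forall fun x => ?_)
  · exact ((hf.sub hf.log).sub_const 1).aestronglyMeasurable
  · have h0 := hδ.trans_le (h x)
    rw [Real.norm_eq_abs, abs_of_nonneg (ent_nonneg h0)]
    refine (ent_upper h0).trans ?_
    rw [div_eq_inv_mul]
    have := inv_anti₀ hδ (h x)
    gcongr

theorem i_entv (t : ℝ) : Integrable fun x => S.v t x - Real.log (S.v t x) - 1 :=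
  ent_int (inv_pos.2 S.Kpos) (S.cv_ t).measurable (S.vlo t) (S.Lv t)

theorem i_entθ (t : ℝ) : Integrable fun x => S.θ t x - Real.log (S.θ t x) - 1 := by
  obtain ⟨δ, h0, h⟩ := S.θ_low_slice t
  exact ent_int h0 (S.cθ_ t).measurable h (S.Lθ t)

theorem i_en (t : ℝ) : Integrable (S.en t) :=
  (((sq_int (S.Lu t)).div_const 2).add ((S.i_entv t).const_mul S.R)).add
    ((S.i_entθ t).const_mul S.cv)

theorem iGG (t : ℝ) : Integrable fun x => GG (S.θ t x) := by
  refine (sq_int (S.Lθ t)).mono' (measurable_GG.comp (S.cθ_ t).measurable).aestronglyMeasurable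
    (Eventually.of_forall fun x => ?_)
  rw [Real.norm_eq_abs, abs_of_nonneg GG_nonneg, ← sq_abs]
  have h1 := GG_le_sp_sq (S.θpos t x)
  have h2 := sp_le_abs (a := S.θ t x)
  have h3 := sp_nonneg (S.θ t x)
  nlinarith

/-- Dissipation of the relative entropy. -/
theorem balance_en {s t : ℝ} (hs : 0 ≤ s) (hst : s ≤ t) :
    ∫ x, S.en t x ≤ (∫ x, S.en s x)
      + II s t (fun t x => -(S.μ / S.K) * S.dA t x + -(S.κ / S.K) * S.dB t x) := by
  refine balance (F := S.en)
    (F' := fun t x => S.u t x * S.ut t x + S.R * ((1 - (S.v t x)⁻¹) * S.ux t x)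
      + (1 - (S.θ t x)⁻¹) * S.ht t x)
    (Φ := fun t x => S.u t x * (S.μ * (S.ux t x / S.v t x) - S.R * S.pd t x)
      + S.κ * ((1 - (S.θ t x)⁻¹) * (S.θx t x / S.v t x)))
    (Φ' := fun t x => (S.ux t x * (S.μ * (S.ux t x / S.v t x) - S.R * S.pd t x) + S.u t x * S.ut t x)
      + S.κ * ((((S.θ t x)⁻¹ * (S.θ t x)⁻¹) * (S.θx t x * (S.θx t x / S.v t x)))
        + (1 - (S.θ t x)⁻¹) * S.hh t x)) hs hst ?_ ?_ ?_ ?_ (S.i_en s) (S.i_en t) ?_ ?_ ?_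
  · exact i1add (i1add (i1mm (S.Mu t) (S.Mut t)) (i1c _ (i1mm (S.Mvc t) (S.Mux t))))
      (i1mm (S.Mθc t) (S.Mht t))
  · exact i1add (i1mm (S.Mu t) (m2sub (m2c _ (S.Mw t)) (m2c _ (S.Mpd t))))
      (i1c _ (i1mm (S.Mθc t) (S.Mθw t)))
  · exact i1add (i1add (i1mm (S.Mux t) (m2sub (m2c _ (S.Mw t)) (m2c _ (S.Mpd t))))
      (i1mm (S.Mu t) (S.Mut t)))
      (i1c _ (i1add (i1b ((S.Biθ t).mul (S.Biθ t)) (i1mm (S.Mθx t) (S.Mθw t)))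
        (i1mm (S.Mθc t) (S.Mhh t))))
  · exact i1add (i1c _ (S.idA t)) (i1c _ (S.idB t))
  · refine Eventually.of_forall fun x hx => ?_
    refine ftc_time (F' := fun t x => S.u t x * S.ut t x + S.R * ((1 - (S.v t x)⁻¹) * S.ux t x)
      + (1 - (S.θ t x)⁻¹) * S.ht t x) hs hst x ?_ ?_ hx
    · exact ((((S.contu x).pow 2).div_const 2).add
        ((((S.contv x).sub (S.contl x)).sub continuous_const).const_smul S.R)).add
        ((((S.contθ x).sub ((S.contθ x).log fun t => (S.θpos t x).ne')).sub
          continuous_const).const_smul S.cv)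
    · intro τ hτ
      have h1 := (((S.tu' τ x hτ).fun_pow 2).div_const 2)
      have h2 := (((S.tv τ x hτ).fun_sub (S.tl x τ hτ)).sub_const 1).const_mul S.R
      have h3 := (((S.tθ' τ x hτ).fun_sub ((S.tθ' τ x hτ).log (S.θpos τ x).ne')).sub_const 1).const_mul S.cv
      refine ((h1.fun_add h2).fun_add h3).congr_deriv ?_
      have := S.hcv.ne'
      have := (S.θpos τ x).ne'
      have := (S.vpos τ x).ne'
      field_simp; ring
  · intro τ x
    have h1 := (S.du τ x).fun_mul (((S.dr τ x).const_mul S.μ).fun_sub ((S.dpd τ x).const_mul S.R))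
    have h2 := ((((S.dθ τ x).fun_inv (S.θpos τ x).ne').const_sub 1).fun_mul (S.dhh τ x)).const_mul S.κ
    refine (h1.fun_add h2).congr_deriv ?_
    have := (S.θpos τ x).ne'
    have := (S.vpos τ x).ne'
    unfold ut
    field_simp
  · intro τ x
    have hθ := S.θpos τ x
    have hv := S.vpos τ x
    have e : (S.u τ x * S.ut τ x + S.R * ((1 - (S.v τ x)⁻¹) * S.ux τ x)
      + (1 - (S.θ τ x)⁻¹) * S.ht τ x)
      = (S.ux τ x * (S.μ * (S.ux τ x / S.v τ x) - S.R * S.pd τ x) + S.u τ x * S.ut τ x)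
      + S.κ * ((((S.θ τ x)⁻¹ * (S.θ τ x)⁻¹) * (S.θx τ x * (S.θx τ x / S.v τ x)))
        + (1 - (S.θ τ x)⁻¹) * S.hh τ x)
      - (S.μ * (S.v τ x)⁻¹ * S.dA τ x + S.κ * (S.v τ x)⁻¹ * S.dB τ x) := by
      unfold ht pd dA dB
      field_simp; ring
    rw [e]
    have hA : 0 ≤ S.dA τ x := by unfold dA; positivity
    have hB : 0 ≤ S.dB τ x := by unfold dB; positivity
    have h1 : S.μ / S.K * S.dA τ x ≤ S.μ * (S.v τ x)⁻¹ * S.dA τ x := by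
      have := S.hμ
      rw [div_eq_mul_inv]; have := S.le_inv_v τ x; gcongr
    have h2 : S.κ / S.K * S.dB τ x ≤ S.κ * (S.v τ x)⁻¹ * S.dB τ x := by
      have := S.hκ
      rw [div_eq_mul_inv]; have := S.le_inv_v τ x; gcongr
    linarith

theorem Mgg (T : ℝ) : M2 T fun t x => gg (S.θ t x) := by
  refine MemLp.of_le_mul (c := 1) (S.Mθ T) (measurable_gg.comp S.mθ).aestronglyMeasurable
    (Eventually.of_forall fun p => ?_)
  simp only [Function.uncurry, Real.norm_eq_abs, one_mul]
  rw [abs_of_nonneg (gg_nonneg (S.θpos _ _))]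
  rcases sp_cases (S.θ p.1 p.2) with ⟨h, e⟩ | ⟨h, e⟩
  · simp [gg, e]
  · exact gg_le_one.trans ((by linarith : 1 ≤ S.θ p.1 p.2 - 1).trans (le_abs_self _))

/-- The energy equation multiplied by `gg θ`, in divergence form. -/
theorem gg_identity (τ x : ℝ) : gg (S.θ τ x) * S.ht τ x
    = S.κ * (dgg (S.θ τ x) * S.θx τ x * (S.θx τ x / S.v τ x) + gg (S.θ τ x) * S.hh τ x)
      - (S.κ * dgg (S.θ τ x) * (S.v τ x)⁻¹ * S.θx τ x ^ 2
        - S.μ * gg (S.θ τ x) * (S.v τ x)⁻¹ * S.ux τ x ^ 2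
        + gg (S.θ τ x) * S.R * S.θ τ x * (S.v τ x)⁻¹ * S.ux τ x) := by
  unfold ht; ring

/-- The balance of `c * cv * GG θ` with an arbitrary majorant `d` of the production; `c = 1` and `c = -1`
give bounds from above and below. -/
theorem balance_gg {s t c : ℝ} (hs : 0 ≤ s) (hst : s ≤ t) {d : ℝ → ℝ → ℝ} (id : I1 t d)
    (hd : ∀ τ x, -(c * (S.κ * dgg (S.θ τ x) * (S.v τ x)⁻¹ * S.θx τ x ^ 2
        - S.μ * gg (S.θ τ x) * (S.v τ x)⁻¹ * S.ux τ x ^ 2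
        + gg (S.θ τ x) * S.R * S.θ τ x * (S.v τ x)⁻¹ * S.ux τ x)) ≤ d τ x) :
    c * S.cv * ∫ x, GG (S.θ t x) ≤ (c * S.cv * ∫ x, GG (S.θ s x)) + II s t d := by
  rw [← integral_const_mul, ← integral_const_mul]
  refine balance (F := fun t x => c * S.cv * GG (S.θ t x))
    (F' := fun t x => c * (gg (S.θ t x) * S.ht t x))
    (Φ := fun t x => c * (S.κ * (gg (S.θ t x) * (S.θx t x / S.v t x))))
    (Φ' := fun t x => c * (S.κ * (dgg (S.θ t x) * (S.θx t x * (S.θx t x / S.v t x))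
      + gg (S.θ t x) * S.hh t x))) hs hst ?_ ?_ ?_ id ((S.iGG s).const_mul _)
    ((S.iGG t).const_mul _) ?_ ?_ ?_
  · exact i1c _ (i1mm (S.Mgg t) (S.Mht t))
  · exact i1c _ (i1c _ (i1mm (S.Mgg t) (S.Mθw t)))
  · exact i1c _ (i1c _ (i1add (i1b (S.Bdgg t) (i1mm (S.Mθx t) (S.Mθw t))) (i1mm (S.Mgg t) (S.Mhh t))))
  · refine Eventually.of_forall fun x hx => ?_
    refine ftc_time (F := fun t x => c * S.cv * GG (S.θ t x))
      (F' := fun t x => c * (gg (S.θ t x) * S.ht t x)) hs hst x ?_ ?_ hx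
    · exact (S.contGG x).const_smul (c * S.cv)
    · intro τ hτ
      refine ((S.tGG x τ hτ).const_mul (c * S.cv)).congr_deriv ?_
      have := S.hcv.ne'
      field_simp
  · intro τ x
    refine ((((S.dggθ τ x).fun_mul (S.dhh τ x)).const_mul S.κ).const_mul c).congr_deriv ?_
    ring
  · intro τ x
    have h1 := hd τ x
    have h2 := S.gg_identity τ x
    rw [h2]
    linarith

/-- The heat created by viscosity at high temperatures is bounded by the heat stored there. -/
theorem balance_gg_lower {s t : ℝ} (hs : 0 ≤ s) (hst : s ≤ t) :
    S.μ / (2 * S.K) * II s t S.dC ≤ (S.cv * ∫ x, GG (S.θ t x))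
      + 12 * S.κ * S.K * II s t S.dB + 3 * S.R ^ 2 * S.K ^ 3 / (2 * S.μ) * II s t S.dS := by
  have i1 := i1c (12 * S.κ * S.K) (S.idB t)
  have i2 := i1c (-(S.μ / (2 * S.K))) (S.idC t)
  have i3 := i1c (3 * S.R ^ 2 * S.K ^ 3 / (2 * S.μ)) (S.idS t)
  have h := S.balance_gg (c := -1) hs hst (i1add (i1add i1 i2) i3) fun τ x => by
    have := prod_gg_lower (X := S.ux τ x) (Y := S.θx τ x) S.hμ S.hκ S.hR S.hK (S.le_inv_v τ x)
      (S.inv_v_le τ x) (S.θpos τ x)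
    unfold dB dC dS
    linarith
  rw [II_add hs (i1add i1 i2) i3, II_add hs i1 i2, II_const_mul, II_const_mul, II_const_mul] at h
  have h0 : 0 ≤ S.cv * ∫ x, GG (S.θ s x) :=
    mul_nonneg S.hcv.le (integral_nonneg fun _ => GG_nonneg)
  linarith

theorem balance_gg_upper {s t : ℝ} (hs : 0 ≤ s) (hst : s ≤ t) :
    S.cv * ∫ x, GG (S.θ t x) ≤ (S.cv * ∫ x, GG (S.θ s x))
      + (S.μ * S.K + S.R * S.K / 2) * II s t S.dU + 3 * S.R * S.K / 2 * II s t S.dS := by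
  have i2 := i1c (S.μ * S.K + S.R * S.K / 2) (S.idU t)
  have i3 := i1c (3 * S.R * S.K / 2) (S.idS t)
  have h := S.balance_gg (c := 1) hs hst (i1add i2 i3) fun τ x => by
    have := prod_gg_upper (X := S.ux τ x) (Y := S.θx τ x) S.hμ S.hκ S.hR S.hK (S.le_inv_v τ x)
      (S.inv_v_le τ x) (S.θpos τ x)
    unfold dU dS
    linarith
  rw [II_add hs i2 i3, II_const_mul, II_const_mul] at h
  linarith

/-- The gradient functional. Its last term compensates the part of `θ_x v_x` that is not controlled
by the entropy dissipation at high temperatures. -/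
noncomputable def fv (t x : ℝ) : ℝ :=
  S.μ / 2 * (S.q t x * S.q t x) - S.u t x * S.q t x
    + S.R * S.cv / S.κ * (GG (S.θ t x) * Real.log (S.v t x))

theorem i_GGl (t : ℝ) : Integrable fun x => GG (S.θ t x) * Real.log (S.v t x) := by
  refine ((S.iGG t).mul_const (S.K ^ 2)).mono'
    ((measurable_GG.comp (S.cθ_ t).measurable).mul (S.cv_ t).measurable.log).aestronglyMeasurable
    (Eventually.of_forall fun x => ?_)
  rw [Real.norm_eq_abs, abs_mul, abs_of_nonneg GG_nonneg]
  exact mul_le_mul_of_nonneg_left (S.abs_log_v t x) GG_nonneg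

theorem i_fv (t : ℝ) : Integrable (S.fv t) :=
  (((mul_int (S.Lq t) (S.Lq t)).const_mul (S.μ / 2)).sub (mul_int (S.Lu t) (S.Lq t))).add
    ((S.i_GGl t).const_mul (S.R * S.cv / S.κ))

theorem Ml (T : ℝ) : M2 T fun t x => Real.log (S.v t x) := by
  refine MemLp.of_le_mul (c := S.K) (S.Mv T) S.mv.log.aestronglyMeasurable
    (Eventually.of_forall fun p => ?_)
  simp only [Function.uncurry, Real.norm_eq_abs]
  exact abs_log_le S.hK (S.vlo _ _)

/-- The gradient functional decreases up to terms controlled by the entropy dissipation, and it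
dissipates `θ v_x²`. -/
theorem balance_fv {s t : ℝ} (hs : 0 ≤ s) (hst : s ≤ t) :
    (∫ x, S.fv t x) + S.R / (2 * S.K ^ 3) * II s t S.dV ≤ (∫ x, S.fv s x)
      + C1 S.R S.K * II s t S.dB + C2 S.μ S.κ S.R S.cv S.K * II s t S.dU
      + C3 S.κ S.R S.cv S.K * II s t S.dS := by
  have j1 := i1c (-(S.R / (2 * S.K ^ 3))) (S.idV t)
  have j2 := i1c (C1 S.R S.K) (S.idB t)
  have j3 := i1c (C2 S.μ S.κ S.R S.cv S.K) (S.idU t)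
  have j4 := i1c (C3 S.κ S.R S.cv S.K) (S.idS t)
  have p1 : I1 t fun τ x => S.r τ x * S.q τ x + S.q τ x * S.r τ x :=
    i1add (i1mm (S.Mr t) (S.Mq t)) (i1mm (S.Mq t) (S.Mr t))
  have p2 : I1 t fun τ x => S.ut τ x * S.q τ x + S.u τ x * S.r τ x :=
    i1add (i1mm (S.Mut t) (S.Mq t)) (i1mm (S.Mu t) (S.Mr t))
  have p3 : I1 t fun τ x => gg (S.θ τ x) * (S.ht τ x / S.cv) * Real.log (S.v τ x)
      + GG (S.θ τ x) * (S.ux τ x / S.v τ x) := by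
    refine i1congr (i1add (i1c S.cv⁻¹ (i1b (S.Bgg t) (i1mm (S.Mht t) (S.Ml t))))
      (i1mm (S.MGG t) (S.Mw t))) fun τ x => ?_
    ring
  have h : ∫ x, S.fv t x ≤ (∫ x, S.fv s x) + II s t (fun t x =>
      -(S.R / (2 * S.K ^ 3)) * S.dV t x + C1 S.R S.K * S.dB t x
        + C2 S.μ S.κ S.R S.cv S.K * S.dU t x + C3 S.κ S.R S.cv S.K * S.dS t x) := by
    refine balance (F := S.fv)
      (F' := fun t x => S.μ / 2 * (S.r t x * S.q t x + S.q t x * S.r t x)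
        - (S.ut t x * S.q t x + S.u t x * S.r t x)
        + S.R * S.cv / S.κ * (gg (S.θ t x) * (S.ht t x / S.cv) * Real.log (S.v t x)
          + GG (S.θ t x) * (S.ux t x / S.v t x)))
      (Φ := fun t x => -(S.u t x * (S.ux t x / S.v t x))
        + S.R * (Real.log (S.v t x) * gg (S.θ t x) * (S.θx t x / S.v t x)))
      (Φ' := fun t x => -(S.ux t x * (S.ux t x / S.v t x) + S.u t x * S.r t x)
        + S.R * (gg (S.θ t x) * (S.q t x * (S.θx t x / S.v t x))
          + Real.log (S.v t x) * (dgg (S.θ t x) * (S.θx t x * (S.θx t x / S.v t x))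
          + gg (S.θ t x) * S.hh t x)))
      hs hst ?_ ?_ ?_ (i1add (i1add (i1add j1 j2) j3) j4) (S.i_fv s) (S.i_fv t) ?_ ?_ ?_
    · exact i1add (i1sub (i1c _ p1) p2) (i1c _ p3)
    · refine i1add (i1neg (i1mm (S.Mu t) (S.Mw t))) (i1c _ ?_)
      exact i1congr (i1b (S.Bl t) (i1mm (S.Mgg t) (S.Mθw t))) fun τ x => by ring
    · exact i1add (i1neg (i1add (i1mm (S.Mux t) (S.Mw t)) (i1mm (S.Mu t) (S.Mr t))))
        (i1c _ (i1add (i1b (S.Bgg t) (i1mm (S.Mq t) (S.Mθw t)))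
          (i1b (S.Bl t) (i1add (i1b (S.Bdgg t) (i1mm (S.Mθx t) (S.Mθw t))) (i1mm (S.Mgg t) (S.Mhh t))))))
    · filter_upwards [S.ftc_qq hs hst, S.ftc_uq hs hst, slab_ae_time hs hst p1,
        slab_ae_time hs hst p2, slab_ae_time hs hst p3] with x h1 h2 k1 k2 k3 _
      have h3 := ftc_time (F := fun t x => GG (S.θ t x) * Real.log (S.v t x))
        (F' := fun τ x => gg (S.θ τ x) * (S.ht τ x / S.cv) * Real.log (S.v τ x)
          + GG (S.θ τ x) * (S.ux τ x / S.v τ x)) hs hst x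
        ((S.contGG x).mul (S.contl x)) (fun τ hτ => (S.tGG x τ hτ).fun_mul (S.tl x τ hτ)) k3
      rw [intervalIntegral.integral_add ((k1.const_mul _).sub k2) (k3.const_mul _),
        intervalIntegral.integral_sub (k1.const_mul _) k2, intervalIntegral.integral_const_mul,
        intervalIntegral.integral_const_mul, ← h1, ← h2, ← h3]
      unfold fv
      ring
    · intro τ x
      have h1 := ((S.du τ x).fun_mul (S.dr τ x)).fun_neg
      have h2 := (((S.dq τ x).fun_mul (S.dggθ τ x)).fun_mul (S.dhh τ x)).const_mul S.R
      refine (h1.fun_add h2).congr_deriv ?_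
      ring
    · intro τ x
      have := prod_grad (X := S.ux τ x) (Y := S.θx τ x) (Z := S.vx τ x) S.hμ S.hκ S.hR S.hcv S.hK
        (S.le_inv_v τ x) (S.inv_v_le τ x) (S.θpos τ x) (S.abs_log_v τ x)
      have e : S.μ / 2 * (S.r τ x * S.q τ x + S.q τ x * S.r τ x)
        - (S.ut τ x * S.q τ x + S.u τ x * S.r τ x)
        + S.R * S.cv / S.κ * (gg (S.θ τ x) * (S.ht τ x / S.cv) * Real.log (S.v τ x)
          + GG (S.θ τ x) * (S.ux τ x / S.v τ x))
        = (-(S.ux τ x * (S.ux τ x / S.v τ x) + S.u τ x * S.r τ x)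
        + S.R * (gg (S.θ τ x) * (S.q τ x * (S.θx τ x / S.v τ x))
          + Real.log (S.v τ x) * (dgg (S.θ τ x) * (S.θx τ x * (S.θx τ x / S.v τ x))
          + gg (S.θ τ x) * S.hh τ x)))
        + (-(S.R * S.θ τ x * (S.v τ x)⁻¹ ^ 3 * S.vx τ x ^ 2)
          + S.R * (1 - gg (S.θ τ x)) * (S.v τ x)⁻¹ ^ 2 * S.θx τ x * S.vx τ x
          + (S.v τ x)⁻¹ * S.ux τ x ^ 2
          - S.R * Real.log (S.v τ x) * dgg (S.θ τ x) * (S.v τ x)⁻¹ * S.θx τ x ^ 2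
          + S.R / S.κ * (Real.log (S.v τ x) * gg (S.θ τ x) * (S.μ * (S.v τ x)⁻¹ * S.ux τ x ^ 2
            - S.R * S.θ τ x * (S.v τ x)⁻¹ * S.ux τ x)
            + S.cv * GG (S.θ τ x) * (S.v τ x)⁻¹ * S.ux τ x)) := by
        have := S.hcv.ne'
        have := S.hκ.ne'
        have := (S.vpos τ x).ne'
        unfold ht ut px q
        generalize S.r τ x = r
        generalize S.hh τ x = h
        generalize Real.log (S.v τ x) = l
        generalize gg (S.θ τ x) = g
        generalize dgg (S.θ τ x) = dg
        generalize GG (S.θ τ x) = G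
        field_simp; ring
      rw [e]
      refine add_le_add le_rfl (this.trans (le_of_eq ?_))
      rfl
  rw [II_add hs (i1add (i1add j1 j2) j3) j4, II_add hs (i1add j1 j2) j3, II_add hs j1 j2,
    II_const_mul, II_const_mul, II_const_mul, II_const_mul] at h
  linarith

theorem pd_sq_le (t x : ℝ) :
    S.pd t x ^ 2 ≤ 2 * S.K ^ 2 * ((S.θ t x - 1) ^ 2 + (S.v t x - 1) ^ 2) := by
  have e : S.pd t x = (S.v t x)⁻¹ * ((S.θ t x - 1) - (S.v t x - 1)) := by
    have := (S.vpos t x).ne'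
    unfold pd; field_simp; ring
  rw [e, mul_pow]
  have h1 : (S.v t x)⁻¹ ^ 2 ≤ S.K ^ 2 :=
    pow_le_pow_left₀ (inv_pos.2 (S.vpos t x)).le (S.inv_v_le t x) 2
  have h2 : ((S.θ t x - 1) - (S.v t x - 1)) ^ 2 ≤ 2 * ((S.θ t x - 1) ^ 2 + (S.v t x - 1) ^ 2) := by
    nlinarith [sq_nonneg ((S.θ t x - 1) + (S.v t x - 1))]
  calc _ ≤ S.K ^ 2 * (2 * ((S.θ t x - 1) ^ 2 + (S.v t x - 1) ^ 2)) := by gcongr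
    _ = _ := by ring

theorem cux_ (t : ℝ) : Continuous (S.ux t) :=
  continuous_iff_continuousAt.2 fun x => (S.dux t x).continuousAt

/-- The velocity changes little in `L²` over short times. -/
theorem balance_vel {s t η : ℝ} (hs : 0 ≤ s) (hst : s ≤ t) (hη : 0 < η) :
    (∫ x, (S.u t x - S.u s x) ^ 2 / 2) ≤
      (S.μ * S.K + η⁻¹) * II s t (fun _ x => S.ux s x ^ 2) + η⁻¹ * II s t S.dU
        + η * (2 * S.R ^ 2 * S.K ^ 2) *
          II s t (fun t x => (S.θ t x - 1) ^ 2 + (S.v t x - 1) ^ 2) := by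
  have Mus : M2 t fun _ x => S.u s x := M2_const (S.cu_ s) (S.Lu s) t
  have Muxs : M2 t fun _ x => S.ux s x := M2_const (S.cux_ s) (S.Lux s) t
  have M1 : M2 t fun τ x => S.u τ x - S.u s x := m2sub (S.Mu t) Mus
  have M2' : M2 t fun τ x => S.μ * (S.ux τ x / S.v τ x) - S.R * S.pd τ x :=
    m2sub (m2c _ (S.Mw t)) (m2c _ (S.Mpd t))
  have j1 := i1c (S.μ * S.K + η⁻¹) (i1sq Muxs)
  have j2 := i1c η⁻¹ (S.idU t)
  have j3 := i1c (η * (2 * S.R ^ 2 * S.K ^ 2)) (i1add (i1sq (S.Mθ t)) (i1sq (S.Mv t)))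
  have h : ∫ x, (S.u t x - S.u s x) ^ 2 / 2 ≤ (∫ x, (S.u s x - S.u s x) ^ 2 / 2)
      + II s t (fun t x => (S.μ * S.K + η⁻¹) * S.ux s x ^ 2 + η⁻¹ * S.dU t x
        + η * (2 * S.R ^ 2 * S.K ^ 2) * ((S.θ t x - 1) ^ 2 + (S.v t x - 1) ^ 2)) := by
    refine balance (F := fun τ x => (S.u τ x - S.u s x) ^ 2 / 2)
      (F' := fun τ x => (S.u τ x - S.u s x) * S.ut τ x)
      (Φ := fun τ x => (S.u τ x - S.u s x) * (S.μ * (S.ux τ x / S.v τ x) - S.R * S.pd τ x))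
      (Φ' := fun τ x => (S.ux τ x - S.ux s x) * (S.μ * (S.ux τ x / S.v τ x) - S.R * S.pd τ x)
        + (S.u τ x - S.u s x) * S.ut τ x)
      hs hst ?_ ?_ ?_ (i1add (i1add j1 j2) j3) ?_ ?_ ?_ ?_ ?_
    · exact i1mm M1 (S.Mut t)
    · exact i1mm M1 M2'
    · exact i1add (i1mm (m2sub (S.Mux t) Muxs) M2') (i1mm M1 (S.Mut t))
    · simp
    · exact (sq_int ((S.Lu t).sub (S.Lu s))).div_const 2
    · refine Eventually.of_forall fun x hx => ?_
      refine ftc_time (F := fun τ x => (S.u τ x - S.u s x) ^ 2 / 2)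
        (F' := fun τ x => (S.u τ x - S.u s x) * S.ut τ x) hs hst x ?_ ?_ hx
      · exact (((S.contu x).sub continuous_const).pow 2).div_const 2
      · intro τ hτ
        refine ((((S.tu' τ x hτ).sub_const (S.u s x)).fun_pow 2).div_const 2).congr_deriv ?_
        norm_num; ring
    · intro τ x
      exact ((S.du τ x).fun_sub (S.du s x)).fun_mul
        (((S.dr τ x).const_mul S.μ).fun_sub ((S.dpd τ x).const_mul S.R))
    · intro τ x
      have h1 := prod_vel (R := S.R) (X := S.ux τ x) (W := S.ux s x) (P := S.pd τ x) S.hμ S.hK hη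
        (S.le_inv_v τ x) (S.inv_v_le τ x)
      have h2 := mul_le_mul_of_nonneg_left (S.pd_sq_le τ x)
        (show 0 ≤ η * S.R ^ 2 by positivity)
      unfold dU
      rw [div_eq_mul_inv]
      linarith
  rw [II_add hs (i1add j1 j2) j3, II_add hs j1 j2, II_const_mul, II_const_mul, II_const_mul] at h
  simp only [sub_self, ne_eq, OfNat.ofNat_ne_zero, not_false_eq_true, zero_pow, zero_div,
    integral_zero, zero_add] at h
  exact h

end Flow
end NSDecay

namespace NSDecay

theorem II_le_of_slices {f g : ℝ → ℝ → ℝ} {s t : ℝ} (hs : 0 ≤ s) (hst : s ≤ t) (hf : I1 t f)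
    (hg : I1 t g) (h : ∀ τ ∈ Icc s t, ∫ x, f τ x ≤ ∫ x, g τ x) : II s t f ≤ II s t g := by
  rw [II_eq hs hst hf, II_eq hs hst hg]
  exact intervalIntegral.integral_mono_on hst (II_ii hs hst hf) (II_ii hs hst hg) h

theorem II_split {f : ℝ → ℝ → ℝ} {s t : ℝ} (hs : 0 ≤ s) (hst : s ≤ t) (hf : I1 s f) (hf' : I1 t f) :
    II 0 t f = II 0 s f + II s t f := by
  rw [II_eq le_rfl (hs.trans hst) hf', II_eq le_rfl hs hf, II_eq hs hst hf',
    intervalIntegral.integral_add_adjacent_intervals (II_ii le_rfl hs hf) (II_ii hs hst hf')]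

theorem II_mono_left {f : ℝ → ℝ → ℝ} {r s t : ℝ} (hr : 0 ≤ r) (hrs : r ≤ s)
    (h0 : ∀ τ x, 0 ≤ f τ x) (hf : I1 t f) : II s t f ≤ II r t f :=
  integral_mono_measure (Measure.prod_mono (Measure.restrict_mono (Ioc_subset_Ioc_left hrs) le_rfl)
    le_rfl) (Eventually.of_forall fun p => h0 p.1 p.2) (slab_restrict hr hf)

namespace Flow
variable (S : Flow)

/-! ### Control of the temperature deviation by the heat dissipation -/

theorem abs_sub_one_le {a : ℝ} (ha : 0 < a) : (a - 1) ^ 2 ≤ (1 + a) ^ 2 := by nlinarith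

theorem ent2_le {a : ℝ} (ha : 0 < a) : (a - 1) ^ 2 / (1 + a) ≤ (a - 1) ^ 2 :=
  div_le_self (sq_nonneg _) (by linarith)

theorem HH_le {a : ℝ} (ha : 0 < a) : HH a ≤ (a - 1) ^ 2 := by
  unfold HH
  rw [div_le_iff₀ (by positivity)]
  have h1 := abs_sub_one_le ha
  have h2 : (1 + a) ^ 2 ≤ (1 + a) ^ 3 := by nlinarith [sq_nonneg (1 + a)]
  nlinarith [mul_le_mul_of_nonneg_left (h1.trans h2) (sq_nonneg (a - 1))]

theorem jj_le {a : ℝ} (ha : 0 < a) : jj a ≤ (a - 1) ^ 2 := by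
  unfold jj
  rw [div_le_iff₀ (by positivity)]
  have h1 := pow_le_pow_left₀ (sq_nonneg _) (abs_sub_one_le ha) 2
  nlinarith [mul_le_mul_of_nonneg_left h1 (sq_nonneg (a - 1))]

theorem int_of_le_sq {f : ℝ → ℝ} (hf : Measurable f) {t : ℝ} (h0 : ∀ a, 0 < a → 0 ≤ f a)
    (h : ∀ a, 0 < a → f a ≤ (a - 1) ^ 2) : Integrable fun x => f (S.θ t x) := by
  refine (sq_int (S.Lθ t)).mono' (hf.comp (S.cθ_ t).measurable).aestronglyMeasurable
    (Eventually.of_forall fun x => ?_)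
  rw [Real.norm_eq_abs, abs_of_nonneg (h0 _ (S.θpos t x))]
  exact h _ (S.θpos t x)

theorem i_ent2 (t : ℝ) : Integrable fun x => (S.θ t x - 1) ^ 2 / (1 + S.θ t x) :=
  S.int_of_le_sq (f := fun a => (a - 1) ^ 2 / (1 + a)) (by fun_prop)
    (fun a ha => by positivity) fun _ => ent2_le

theorem i_HH (t : ℝ) : Integrable fun x => HH (S.θ t x) :=
  S.int_of_le_sq (by unfold HH; fun_prop) (fun _ => HH_nonneg) fun _ => HH_le

theorem i_jj (t : ℝ) : Integrable fun x => jj (S.θ t x) :=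
  S.int_of_le_sq measurable_jj (fun _ _ => jj_nonneg) fun _ => jj_le

theorem i_sp2 (t : ℝ) : Integrable fun x => sp (S.θ t x) ^ 2 :=
  S.int_of_le_sq (f := fun a => sp a ^ 2) (continuous_sp.measurable.pow_const 2)
    (fun a _ => sq_nonneg _) fun a _ => by
      rw [← sq_abs (a - 1)]; exact pow_le_pow_left₀ (sp_nonneg a) sp_le_abs 2

theorem LB (t : ℝ) : MemLp (fun x => (S.θ t x)⁻¹ * S.θx t x) 2 volume := by
  obtain ⟨δ, h0, h⟩ := S.θ_low_slice t
  refine MemLp.of_le_mul (c := δ⁻¹) (S.Lθx t)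
    (((S.mθ.inv).mul S.mθx).comp measurable_prodMk_left).aestronglyMeasurable
    (Eventually.of_forall fun x => ?_)
  simp only [norm_mul, Real.norm_eq_abs]
  rw [abs_of_pos (inv_pos.2 (S.θpos t x))]
  have := inv_anti₀ h0 (h x)
  gcongr

theorem i_dB (t : ℝ) : Integrable (S.dB t) := sq_int (S.LB t)
theorem i_dU (t : ℝ) : Integrable (S.dU t) := sq_int (S.Lux t)
theorem i_vx2 (t : ℝ) : Integrable fun x => S.vx t x ^ 2 := sq_int (S.Lvx t)

theorem LdHH (t : ℝ) : MemLp (fun x => dHH (S.θ t x) * S.θ t x) 2 volume := by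
  refine (memLp_two_iff_integrable_sq ?_).2 ?_
  · exact ((measurable_dHH.comp (S.cθ_ t).measurable).mul (S.cθ_ t).measurable).aestronglyMeasurable
  · refine ((S.i_jj t).const_mul 49).mono' ?_ (Eventually.of_forall fun x => ?_)
    · exact (((measurable_dHH.comp (S.cθ_ t).measurable).mul
        (S.cθ_ t).measurable).pow_const 2).aestronglyMeasurable
    · rw [Real.norm_eq_abs, abs_of_nonneg (sq_nonneg _)]
      exact dHH_sq_le (S.θpos t x)

/-- A Poincaré-type inequality with the constant depending only on the entropy. -/
theorem temp_bound (t : ℝ) {C : ℝ} (hC : 0 < C)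
    (h : ∫ x, (S.θ t x - 1) ^ 2 / (1 + S.θ t x) ≤ C) :
    (∫ x, jj (S.θ t x) ≤ 49 * C ^ 2 * ∫ x, S.dB t x) ∧
      ∀ x, HH (S.θ t x) ≤ 49 * C * ∫ x, S.dB t x := by
  set J := ∫ x, jj (S.θ t x) with hJ
  set a := ∫ x, S.dB t x with ha
  have key : ∀ x, HH (S.θ t x) ≤ J / (2 * C) + 49 * C / 2 * a := by
    intro x
    have i1 : Integrable fun x => (dHH (S.θ t x) * S.θ t x) * ((S.θ t x)⁻¹ * S.θx t x) :=
      mul_int (S.LdHH t) (S.LB t)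
    have h1 := sup_bound (F := fun x => HH (S.θ t x))
      (F' := fun x => (dHH (S.θ t x) * S.θ t x) * ((S.θ t x)⁻¹ * S.θx t x))
      (fun y => by
        refine ((hasDerivAt_HH (S.θpos t y)).comp y (S.dθ t y)).congr_deriv ?_
        have := (S.θpos t y).ne'
        field_simp) (S.i_HH t) i1 x
    refine (le_abs_self _).trans (h1.trans ?_)
    have e : J / (2 * C) + 49 * C / 2 * a
        = ∫ y, (jj (S.θ t y) / (2 * C) + 49 * C / 2 * S.dB t y) := by
      rw [integral_add ((S.i_jj t).div_const _) ((S.i_dB t).const_mul _), integral_div,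
        integral_const_mul]
    rw [e]
    refine integral_mono i1.abs (((S.i_jj t).div_const _).add ((S.i_dB t).const_mul _)) fun y => ?_
    simp only [dB]
    have h2 := dHH_sq_le (S.θpos t y)
    set b := (S.θ t y)⁻¹ * S.θx t y
    set c := dHH (S.θ t y) * S.θ t y
    have h3 : |c * b| ≤ c ^ 2 / (98 * C) + 49 * C / 2 * b ^ 2 := by
      rw [abs_mul]
      have : c ^ 2 / (98 * C) + 49 * C / 2 * b ^ 2 - |c| * |b| = (|c| - 49 * C * |b|) ^ 2 / (98 * C) := by
        rw [← sq_abs c, ← sq_abs b]; field_simp; ring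
      have : 0 ≤ (|c| - 49 * C * |b|) ^ 2 / (98 * C) := by positivity
      linarith
    have h4 : c ^ 2 / (98 * C) ≤ 49 * jj (S.θ t y) / (98 * C) := by gcongr
    have h5 : 49 * jj (S.θ t y) / (98 * C) = jj (S.θ t y) / (2 * C) := by
      field_simp; ring
    linarith
  have a0 : 0 ≤ a := integral_nonneg fun x => sq_nonneg _
  have J0 : 0 ≤ J := integral_nonneg fun x => jj_nonneg
  have hJle : J ≤ 49 * C ^ 2 * a := by
    have h1 : J ≤ (J / (2 * C) + 49 * C / 2 * a) * C := by
      calc J ≤ ∫ x, (J / (2 * C) + 49 * C / 2 * a) * ((S.θ t x - 1) ^ 2 / (1 + S.θ t x)) := by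
            refine integral_mono (S.i_jj t) ((S.i_ent2 t).const_mul _) fun x => ?_
            simp only
            have := S.θpos t x
            rw [jj_eq this]
            exact mul_le_mul_of_nonneg_right (key x) (by positivity)
        _ = (J / (2 * C) + 49 * C / 2 * a) * ∫ x, ((S.θ t x - 1) ^ 2 / (1 + S.θ t x)) :=
            integral_const_mul _ _
        _ ≤ _ := by gcongr
    have e : (J / (2 * C) + 49 * C / 2 * a) * C = J / 2 + 49 * C ^ 2 / 2 * a := by field_simp
    linarith
  refine ⟨hJle, fun x => (key x).trans ?_⟩
  have : J / (2 * C) ≤ 49 * C ^ 2 * a / (2 * C) := by gcongr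
  have e : 49 * C ^ 2 * a / (2 * C) = 49 * C / 2 * a := by field_simp
  linarith

theorem dS_bound (t : ℝ) {C : ℝ} (hC : 0 < C)
    (h : ∫ x, (S.θ t x - 1) ^ 2 / (1 + S.θ t x) ≤ C) :
    ∫ x, S.dS t x ≤ 729 * 49 * C ^ 2 * ∫ x, S.dB t x := by
  have h1 := (S.temp_bound t hC h).1
  have h2 : ∫ x, S.dS t x ≤ ∫ x, 729 * jj (S.θ t x) :=
    integral_mono (S.i_sp2 t) ((S.i_jj t).const_mul _) fun x => sp_sq_le_jj (S.θpos t x)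
  rw [integral_const_mul] at h2
  linarith

theorem θ_sq_bound (t : ℝ) {C : ℝ} (hC : 0 < C)
    (h : ∫ x, (S.θ t x - 1) ^ 2 / (1 + S.θ t x) ≤ C) :
    ∫ x, (S.θ t x - 1) ^ 2 ≤ 3 * C + 81 * 49 * C ^ 2 * ∫ x, S.dB t x := by
  have h1 := (S.temp_bound t hC h).1
  have h2 : ∫ x, (S.θ t x - 1) ^ 2
      ≤ ∫ x, (3 * ((S.θ t x - 1) ^ 2 / (1 + S.θ t x)) + 81 * jj (S.θ t x)) :=
    integral_mono (sq_int (S.Lθ t)) (((S.i_ent2 t).const_mul _).add ((S.i_jj t).const_mul _))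
      fun x => sq_le_ent_jj (S.θpos t x)
  rw [integral_add ((S.i_ent2 t).const_mul _) ((S.i_jj t).const_mul _), integral_const_mul,
    integral_const_mul] at h2
  linarith

/-! ### Uniform-in-time estimates -/

theorem dA_nonneg (t x : ℝ) : 0 ≤ S.dA t x := by have := S.θpos t x; unfold dA; positivity
theorem dB_nonneg (t x : ℝ) : 0 ≤ S.dB t x := sq_nonneg _
theorem dU_nonneg (t x : ℝ) : 0 ≤ S.dU t x := sq_nonneg _
theorem dS_nonneg (t x : ℝ) : 0 ≤ S.dS t x := sq_nonneg _
theorem dV_nonneg (t x : ℝ) : 0 ≤ S.dV t x := by have := S.θpos t x; unfold dV; positivity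

/-- Consequences of the entropy balance that are uniform in time. -/
theorem en_bounds : ∃ C : ℝ, 1 ≤ C ∧ ∀ t, 0 ≤ t →
    ∫ x, S.u t x ^ 2 ≤ C ∧ ∫ x, (S.v t x - 1) ^ 2 ≤ C ∧
    ∫ x, (S.θ t x - 1) ^ 2 / (1 + S.θ t x) ≤ C ∧ II 0 t S.dA ≤ C ∧ II 0 t S.dB ≤ C := by
  have hR := S.hR
  have hcv := S.hcv
  have hK := S.Kpos
  have hμ := S.hμ
  have hκ := S.hκ
  set E := ∫ x, S.en 0 x with hE
  have en0 : ∀ t x, 0 ≤ S.en t x := fun t x => by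
    have h1 := ent_nonneg (S.vpos t x)
    have h2 := ent_nonneg (S.θpos t x)
    unfold en; positivity
  have E0 : 0 ≤ E := integral_nonneg fun x => en0 0 x
  have q1 : 0 ≤ 2 * (1 + S.K) / S.R * E := by positivity
  have q2 : 0 ≤ 2 / S.cv * E := by positivity
  have q3 : 0 ≤ S.K / S.μ * E := by positivity
  have q4 : 0 ≤ S.K / S.κ * E := by positivity
  refine ⟨1 + 2 * E + 2 * (1 + S.K) / S.R * E + 2 / S.cv * E + S.K / S.μ * E + S.K / S.κ * E,
    by linarith, fun t ht => ?_⟩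
  have hb := S.balance_en le_rfl ht
  rw [II_add le_rfl (i1c _ (S.idA t)) (i1c _ (S.idB t)), II_const_mul, II_const_mul] at hb
  have hA : 0 ≤ S.μ / S.K * II 0 t S.dA := mul_nonneg (by positivity) (II_nonneg S.dA_nonneg)
  have hB : 0 ≤ S.κ / S.K * II 0 t S.dB := mul_nonneg (by positivity) (II_nonneg S.dB_nonneg)
  have hen0 : 0 ≤ ∫ x, S.en t x := integral_nonneg fun x => en0 t x
  have hen : ∫ x, S.en t x ≤ E := by linarith
  have hA' : S.μ / S.K * II 0 t S.dA ≤ E := by linarith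
  have hB' : S.κ / S.K * II 0 t S.dB ≤ E := by linarith
  refine ⟨?_, ?_, ?_, ?_, ?_⟩
  · have : ∫ x, S.u t x ^ 2 ≤ ∫ x, 2 * S.en t x :=
      integral_mono (sq_int (S.Lu t)) ((S.i_en t).const_mul 2) fun x => by
        have h1 := ent_nonneg (S.vpos t x)
        have h2 := ent_nonneg (S.θpos t x)
        simp only [en]
        have : 0 ≤ S.R * (S.v t x - Real.log (S.v t x) - 1) := by positivity
        have : 0 ≤ S.cv * (S.θ t x - Real.log (S.θ t x) - 1) := by positivity
        linarith
    rw [integral_const_mul] at this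
    linarith
  · have : ∫ x, (S.v t x - 1) ^ 2 ≤ ∫ x, 2 * (1 + S.K) / S.R * S.en t x :=
      integral_mono (sq_int (S.Lv t)) ((S.i_en t).const_mul _) fun x => by
        have h1 := ent_lower (S.vpos t x)
        have h2 := ent_nonneg (S.θpos t x)
        have hv := S.vpos t x
        have hv' := S.vhi t x
        have h3 : (S.v t x - 1) ^ 2 / (2 * (1 + S.K)) ≤ (S.v t x - 1) ^ 2 / (2 * (1 + S.v t x)) := by
          gcongr
        have h4 : S.R * ((S.v t x - 1) ^ 2 / (2 * (1 + S.K))) ≤ S.en t x := by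
          have := mul_le_mul_of_nonneg_left (h3.trans h1) hR.le
          have : 0 ≤ S.cv * (S.θ t x - Real.log (S.θ t x) - 1) := by positivity
          unfold en
          nlinarith [sq_nonneg (S.u t x)]
        calc (S.v t x - 1) ^ 2 = 2 * (1 + S.K) / S.R * (S.R * ((S.v t x - 1) ^ 2 / (2 * (1 + S.K)))) := by
              field_simp
          _ ≤ _ := by gcongr
    rw [integral_const_mul] at this
    have : 2 * (1 + S.K) / S.R * ∫ x, S.en t x ≤ 2 * (1 + S.K) / S.R * E := by gcongr
    linarith
  · have : ∫ x, (S.θ t x - 1) ^ 2 / (1 + S.θ t x) ≤ ∫ x, 2 / S.cv * S.en t x :=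
      integral_mono (S.i_ent2 t) ((S.i_en t).const_mul _) fun x => by
        have h1 := ent_nonneg (S.vpos t x)
        have h2 := ent_lower (S.θpos t x)
        have hθ := S.θpos t x
        have h4 : S.cv * ((S.θ t x - 1) ^ 2 / (2 * (1 + S.θ t x))) ≤ S.en t x := by
          have := mul_le_mul_of_nonneg_left h2 hcv.le
          have : 0 ≤ S.R * (S.v t x - Real.log (S.v t x) - 1) := by positivity
          unfold en
          nlinarith [sq_nonneg (S.u t x)]
        calc (S.θ t x - 1) ^ 2 / (1 + S.θ t x)
            = 2 / S.cv * (S.cv * ((S.θ t x - 1) ^ 2 / (2 * (1 + S.θ t x)))) := by field_simp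
          _ ≤ _ := by gcongr
    rw [integral_const_mul] at this
    have : 2 / S.cv * ∫ x, S.en t x ≤ 2 / S.cv * E := by gcongr
    linarith
  · have : II 0 t S.dA = S.K / S.μ * (S.μ / S.K * II 0 t S.dA) := by field_simp
    have : S.K / S.μ * (S.μ / S.K * II 0 t S.dA) ≤ S.K / S.μ * E := by gcongr
    linarith
  · have : II 0 t S.dB = S.K / S.κ * (S.κ / S.K * II 0 t S.dB) := by field_simp
    have : S.K / S.κ * (S.κ / S.K * II 0 t S.dB) ≤ S.K / S.κ * E := by gcongr
    linarith

theorem GG_bound (t : ℝ) : ∫ x, GG (S.θ t x) ≤ 3 * ∫ x, (S.θ t x - 1) ^ 2 / (1 + S.θ t x) := by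
  rw [← integral_const_mul]
  exact integral_mono (S.iGG t) ((S.i_ent2 t).const_mul _) fun x =>
    (GG_le_sp (S.θpos t x)).trans (sp_le (S.θpos t x))

theorem II_dS_le {s t C : ℝ} (hs : 0 ≤ s) (hst : s ≤ t) (hC : 0 < C)
    (h : ∀ τ, 0 ≤ τ → ∫ x, (S.θ τ x - 1) ^ 2 / (1 + S.θ τ x) ≤ C) :
    II s t S.dS ≤ 729 * 49 * C ^ 2 * II s t S.dB := by
  rw [← II_const_mul]
  refine II_le_of_slices hs hst (S.idS t) (i1c _ (S.idB t)) fun τ hτ => ?_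
  rw [integral_const_mul]
  exact S.dS_bound τ hC (h τ (hs.trans hτ.1))

/-- `u_x²` is integrable over space-time: the entropy dissipation controls it at low temperatures
and `balance_gg_lower` at high ones. -/
theorem dU_bound : ∃ C : ℝ, ∀ t, 0 ≤ t → II 0 t S.dU ≤ C := by
  obtain ⟨C, hC1, hC⟩ := S.en_bounds
  have hC0 : 0 < C := by linarith
  have hR := S.hR
  have hcv := S.hcv
  have hK := S.Kpos
  have hμ := S.hμ
  have hκ := S.hκ
  set N := S.cv * (3 * C) + 12 * S.κ * S.K * C
    + 3 * S.R ^ 2 * S.K ^ 3 / (2 * S.μ) * (729 * 49 * C ^ 2 * C) with hN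
  refine ⟨4 * C + 2 * (2 * S.K / S.μ * N), fun t ht => ?_⟩
  obtain ⟨-, -, h3, h4, h5⟩ := hC t ht
  have hg := S.balance_gg_lower le_rfl ht
  have hS := S.II_dS_le le_rfl ht hC0 fun τ hτ => (hC τ hτ).2.2.1
  have hG : ∫ x, GG (S.θ t x) ≤ 3 * C := (S.GG_bound t).trans (by linarith)
  have hS' : II 0 t S.dS ≤ 729 * 49 * C ^ 2 * C := hS.trans (by gcongr)
  have hCC : S.μ / (2 * S.K) * II 0 t S.dC ≤ N := by
    refine hg.trans ?_
    rw [hN]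
    gcongr
  have hC' : II 0 t S.dC ≤ 2 * S.K / S.μ * N := by
    have e : II 0 t S.dC = 2 * S.K / S.μ * (S.μ / (2 * S.K) * II 0 t S.dC) := by field_simp
    rw [e]; gcongr
  have hU : II 0 t S.dU ≤ II 0 t fun t x => 4 * S.dA t x + 2 * S.dC t x := by
    refine II_mono le_rfl (S.idU t) (i1add (i1c _ (S.idA t)) (i1c _ (S.idC t))) fun τ _ x => ?_
    have h := mul_le_mul_of_nonneg_right (one_le_inv_gg (S.θpos τ x)) (sq_nonneg (S.ux τ x))
    unfold dU dA dC
    have e : (4 / S.θ τ x + 2 * gg (S.θ τ x)) * S.ux τ x ^ 2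
      = 4 * ((S.θ τ x)⁻¹ * S.ux τ x ^ 2) + 2 * (gg (S.θ τ x) * S.ux τ x ^ 2) := by ring
    linarith
  rw [II_add le_rfl (i1c _ (S.idA t)) (i1c _ (S.idC t)), II_const_mul, II_const_mul] at hU
  linarith

theorem i_q2 (t : ℝ) : Integrable fun x => S.q t x ^ 2 := sq_int (S.Lq t)

theorem q_sq_le (t x : ℝ) : S.q t x ^ 2 ≤ S.K ^ 2 * S.vx t x ^ 2 := by
  have h1 : (S.v t x)⁻¹ ^ 2 ≤ S.K ^ 2 :=
    pow_le_pow_left₀ (inv_pos.2 (S.vpos t x)).le (S.inv_v_le t x) 2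
  have e : S.q t x ^ 2 = (S.v t x)⁻¹ ^ 2 * S.vx t x ^ 2 := by unfold q; ring
  rw [e]; gcongr

theorem vx_sq_le (t x : ℝ) : S.vx t x ^ 2 ≤ S.K ^ 2 * S.q t x ^ 2 := by
  have hv := S.vpos t x
  have h1 : S.v t x ^ 2 ≤ S.K ^ 2 := pow_le_pow_left₀ hv.le (S.vhi t x) 2
  have e : S.vx t x ^ 2 = S.v t x ^ 2 * S.q t x ^ 2 := by unfold q; field_simp
  rw [e]; gcongr

theorem int_q_le (t : ℝ) : ∫ x, S.q t x ^ 2 ≤ S.K ^ 2 * ∫ x, S.vx t x ^ 2 := by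
  rw [← integral_const_mul]
  exact integral_mono (S.i_q2 t) ((S.i_vx2 t).const_mul _) (S.q_sq_le t)

theorem int_vx_le (t : ℝ) : ∫ x, S.vx t x ^ 2 ≤ S.K ^ 2 * ∫ x, S.q t x ^ 2 := by
  rw [← integral_const_mul]
  exact integral_mono (S.i_vx2 t) ((S.i_q2 t).const_mul _) (S.vx_sq_le t)

theorem int_fv (t : ℝ) : ∫ x, S.fv t x = S.μ / 2 * (∫ x, S.q t x ^ 2) - (∫ x, S.u t x * S.q t x)
    + S.R * S.cv / S.κ * ∫ x, GG (S.θ t x) * Real.log (S.v t x) := by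
  have i1 := (mul_int (S.Lq t) (S.Lq t)).const_mul (S.μ / 2)
  have i2 := mul_int (S.Lu t) (S.Lq t)
  have i3 := (S.i_GGl t).const_mul (S.R * S.cv / S.κ)
  have h1 : ∫ x, S.fv t x = (∫ x, S.μ / 2 * (S.q t x * S.q t x) - S.u t x * S.q t x)
      + ∫ x, S.R * S.cv / S.κ * (GG (S.θ t x) * Real.log (S.v t x)) := integral_add (i1.sub i2) i3
  rw [h1, integral_sub i1 i2, integral_const_mul, integral_const_mul]
  simp only [sq]

theorem abs_int_GGl (t : ℝ) :
    |∫ x, GG (S.θ t x) * Real.log (S.v t x)| ≤ S.K ^ 2 * ∫ x, GG (S.θ t x) := by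
  rw [← integral_const_mul]
  refine (abs_integral_le_integral_abs).trans (integral_mono (S.i_GGl t).abs
    ((S.iGG t).const_mul _) fun x => ?_)
  simp only
  rw [abs_mul, abs_of_nonneg GG_nonneg, mul_comm]
  exact mul_le_mul_of_nonneg_right (S.abs_log_v t x) GG_nonneg

/-- Young's inequality for the integral of a product. -/
theorem _root_.NSDecay.abs_int_mul_le {f g : ℝ → ℝ} (hf : MemLp f 2 volume) (hg : MemLp g 2 volume) {l : ℝ}
    (hl : 0 < l) : |∫ x, f x * g x| ≤ l⁻¹ / 2 * (∫ x, f x ^ 2) + l / 2 * ∫ x, g x ^ 2 := by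
  have i1 := (sq_int hf).const_mul (l⁻¹ / 2)
  have i2 := (sq_int hg).const_mul (l / 2)
  rw [← integral_const_mul, ← integral_const_mul, ← integral_add i1 i2]
  refine abs_integral_le_integral_abs.trans (integral_mono (mul_int hf hg).abs (i1.add i2) fun x => ?_)
  simp only
  rw [abs_mul, ← sq_abs (f x), ← sq_abs (g x)]
  have e : l⁻¹ / 2 * |f x| ^ 2 + l / 2 * |g x| ^ 2 - |f x| * |g x|
      = l⁻¹ / 2 * (|f x| - l * |g x|) ^ 2 := by field_simp; ring
  have : 0 ≤ l⁻¹ / 2 * (|f x| - l * |g x|) ^ 2 := by positivity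
  linarith

theorem C1_nonneg : 0 ≤ C1 S.R S.K := by
  have := S.hR; have := S.Kpos; unfold C1; positivity
theorem C2_nonneg : 0 ≤ C2 S.μ S.κ S.R S.cv S.K := by
  have := S.hR; have := S.Kpos; have := S.hμ; have := S.hκ; have := S.hcv; unfold C2; positivity
theorem C3_nonneg : 0 ≤ C3 S.κ S.R S.cv S.K := by
  have := S.hR; have := S.Kpos; have := S.hμ; have := S.hκ; have := S.hcv; unfold C3; positivity

/-- `v_x` is bounded in `L²` uniformly in time and square integrable over space-time. The weight `θ` in
`dV` is removed by `one_le_HH`, since the sup norm of `HH θ` is integrable in time by `temp_bound`. -/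
theorem vx_bound : ∃ C : ℝ, 0 ≤ C ∧ ∀ t, 0 ≤ t → ∫ x, S.vx t x ^ 2 ≤ C ∧
    II 0 t (fun t x => S.vx t x ^ 2) ≤ C := by
  obtain ⟨C, hC1, hC⟩ := S.en_bounds
  obtain ⟨D, hD⟩ := S.dU_bound
  have hC0 : 0 < C := by linarith
  have hR := S.hR
  have hcv := S.hcv
  have hK := S.Kpos
  have hμ := S.hμ
  have hκ := S.hκ
  set N := |∫ x, S.fv 0 x| + C1 S.R S.K * C + C2 S.μ S.κ S.R S.cv S.K * |D|
    + C3 S.κ S.R S.cv S.K * (729 * 49 * C ^ 2 * C) with hN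
  set P := (S.μ / 2)⁻¹ / 2 * C + S.R * S.cv / S.κ * (S.K ^ 2 * (3 * C)) with hP
  have hN0 : 0 ≤ N := by
    have := S.C1_nonneg; have := S.C2_nonneg; have := S.C3_nonneg; positivity
  have hP0 : 0 ≤ P := by positivity
  have low : ∀ t, 0 ≤ t → S.μ / 4 * (∫ x, S.q t x ^ 2) ≤ (∫ x, S.fv t x) + P := by
    intro t ht
    obtain ⟨h1, -, h3, -, -⟩ := hC t ht
    have k1 := abs_int_mul_le (S.Lu t) (S.Lq t) (l := S.μ / 2) (by positivity)
    have k2 := S.abs_int_GGl t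
    have hG : ∫ x, GG (S.θ t x) ≤ 3 * C := (S.GG_bound t).trans (by linarith)
    have k3 : |∫ x, GG (S.θ t x) * Real.log (S.v t x)| ≤ S.K ^ 2 * (3 * C) := k2.trans (by gcongr)
    have k4 : S.R * S.cv / S.κ * |∫ x, GG (S.θ t x) * Real.log (S.v t x)|
      ≤ S.R * S.cv / S.κ * (S.K ^ 2 * (3 * C)) := by gcongr
    have k5 : (S.μ / 2)⁻¹ / 2 * (∫ x, S.u t x ^ 2) ≤ (S.μ / 2)⁻¹ / 2 * C := by gcongr
    have k6 := mul_le_mul_of_nonneg_left (neg_abs_le (∫ x, GG (S.θ t x) * Real.log (S.v t x)))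
      (show 0 ≤ S.R * S.cv / S.κ by positivity)
    have k7 := le_abs_self (∫ x, S.u t x * S.q t x)
    rw [S.int_fv t, hP]
    linarith
  have up : ∀ t, 0 ≤ t → (∫ x, S.fv t x) + S.R / (2 * S.K ^ 3) * II 0 t S.dV ≤ N := by
    intro t ht
    obtain ⟨-, -, h3, h4, h5⟩ := hC t ht
    have hb := S.balance_fv le_rfl ht
    have hS := S.II_dS_le le_rfl ht hC0 fun τ hτ => (hC τ hτ).2.2.1
    have hS' : II 0 t S.dS ≤ 729 * 49 * C ^ 2 * C := hS.trans (by gcongr)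
    have hU : II 0 t S.dU ≤ |D| := (hD t ht).trans (le_abs_self _)
    have k1 := mul_le_mul_of_nonneg_left h5 S.C1_nonneg
    have k2 := mul_le_mul_of_nonneg_left hU S.C2_nonneg
    have k3 := mul_le_mul_of_nonneg_left hS' S.C3_nonneg
    have k4 := le_abs_self (∫ x, S.fv 0 x)
    rw [hN]
    linarith
  have hdV : ∀ t, 0 ≤ S.R / (2 * S.K ^ 3) * II 0 t S.dV := fun t =>
    mul_nonneg (by positivity) (II_nonneg S.dV_nonneg)
  set Q := S.K ^ 2 * (4 / S.μ * (N + P)) with hQ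
  have hQ0 : 0 ≤ Q := by positivity
  have hvx : ∀ t, 0 ≤ t → ∫ x, S.vx t x ^ 2 ≤ Q := by
    intro t ht
    have h1 := low t ht
    have h2 := up t ht
    have h3 := hdV t
    have h4 : ∫ x, S.q t x ^ 2 ≤ 4 / S.μ * (N + P) := by
      have e : ∫ x, S.q t x ^ 2 = 4 / S.μ * (S.μ / 4 * ∫ x, S.q t x ^ 2) := by field_simp
      rw [e]
      have : S.μ / 4 * (∫ x, S.q t x ^ 2) ≤ N + P := by linarith
      gcongr
    exact (S.int_vx_le t).trans (by rw [hQ]; gcongr)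
  have hV : ∀ t, 0 ≤ t → II 0 t S.dV ≤ 2 * S.K ^ 3 / S.R * (N + P) := by
    intro t ht
    have h1 := low t ht
    have h2 := up t ht
    have h4 : 0 ≤ S.μ / 4 * (∫ x, S.q t x ^ 2) :=
      mul_nonneg (by positivity) (integral_nonneg fun _ => sq_nonneg _)
    have e : II 0 t S.dV = 2 * S.K ^ 3 / S.R * (S.R / (2 * S.K ^ 3) * II 0 t S.dV) := by field_simp
    rw [e]
    have : S.R / (2 * S.K ^ 3) * II 0 t S.dV ≤ N + P := by linarith
    gcongr
  set Z := 2 * (2 * S.K ^ 3 / S.R * (N + P)) + 54 * (49 * C) * Q * C with hZ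
  have hZ0 : 0 ≤ Z := by positivity
  refine ⟨Q + Z, by positivity, fun t ht => ⟨(hvx t ht).trans (by linarith), ?_⟩⟩
  have i0 : I1 t fun t x => S.vx t x ^ 2 := i1sq (S.Mvx t)
  have i1 := i1c 2 (S.idV t)
  have i2 := i1c (54 * (49 * C) * Q) (S.idB t)
  have hle : II 0 t (fun t x => S.vx t x ^ 2)
      ≤ II 0 t (fun t x => 2 * S.dV t x + 54 * (49 * C) * Q * S.dB t x) := by
    refine II_le_of_slices le_rfl ht i0 (i1add i1 i2) fun τ hτ => ?_
    have hB := (S.temp_bound τ hC0 (hC τ hτ.1).2.2.1).2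
    set a := ∫ x, S.dB τ x with ha
    have a0 : 0 ≤ a := integral_nonneg fun _ => sq_nonneg _
    obtain ⟨Nθ, -, hNθ⟩ := S.local_bounds τ
    have idV' : Integrable (S.dV τ) := by
      refine ((S.i_vx2 τ).const_mul Nθ).mono' ?_ (Eventually.of_forall fun x => ?_)
      · exact ((S.mθ.mul (S.mvx.pow_const 2)).comp measurable_prodMk_left).aestronglyMeasurable
      · rw [Real.norm_eq_abs, abs_of_nonneg (S.dV_nonneg _ _)]
        exact mul_le_mul_of_nonneg_right ((le_abs_self _).trans (hNθ τ le_rfl x).2.2) (sq_nonneg _)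
    have h1 : ∫ x, S.vx τ x ^ 2 ≤ ∫ x, (2 * S.dV τ x + 54 * (49 * C * a) * S.vx τ x ^ 2) := by
      refine integral_mono (S.i_vx2 τ) ((idV'.const_mul _).add ((S.i_vx2 τ).const_mul _)) fun x => ?_
      have e1 := mul_le_mul_of_nonneg_right (one_le_HH (S.θpos τ x)) (sq_nonneg (S.vx τ x))
      have e2 := mul_le_mul_of_nonneg_right (hB x) (sq_nonneg (S.vx τ x))
      simp only [dV]
      linarith
    rw [integral_add (idV'.const_mul _) ((S.i_vx2 τ).const_mul _), integral_const_mul,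
      integral_const_mul] at h1
    rw [integral_add (idV'.const_mul _) ((S.i_dB τ).const_mul _), integral_const_mul,
      integral_const_mul, ← ha]
    have h2 : 54 * (49 * C * a) * ∫ x, S.vx τ x ^ 2 ≤ 54 * (49 * C * a) * Q := by
      have := hvx τ hτ.1
      gcongr
    linarith
  rw [II_add le_rfl i1 i2, II_const_mul, II_const_mul] at hle
  have k1 := hV t ht
  have k2 : 54 * (49 * C) * Q * II 0 t S.dB ≤ 54 * (49 * C) * Q * C := by
    have := (hC t ht).2.2.2.2
    gcongr
  rw [hZ]
  linarith

/-- The sum of the densities whose space-time integrals are finite. -/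
noncomputable def dD (t x : ℝ) : ℝ := S.dB t x + S.dU t x + S.vx t x ^ 2

theorem idD (T : ℝ) : I1 T S.dD := i1add (i1add (S.idB T) (S.idU T)) (i1sq (S.Mvx T))

theorem dD_nonneg (t x : ℝ) : 0 ≤ S.dD t x :=
  add_nonneg (add_nonneg (S.dB_nonneg t x) (S.dU_nonneg t x)) (sq_nonneg _)

theorem uniform_bounds : ∃ C : ℝ, 1 ≤ C ∧ ∀ t, 0 ≤ t →
    ∫ x, S.u t x ^ 2 ≤ C ∧ ∫ x, (S.v t x - 1) ^ 2 ≤ C ∧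
    ∫ x, (S.θ t x - 1) ^ 2 / (1 + S.θ t x) ≤ C ∧ ∫ x, S.vx t x ^ 2 ≤ C ∧ II 0 t S.dD ≤ C := by
  obtain ⟨A, hA1, hA⟩ := S.en_bounds
  obtain ⟨B, hB⟩ := S.dU_bound
  obtain ⟨D, hD0, hD⟩ := S.vx_bound
  refine ⟨A + |B| + D, by linarith [abs_nonneg B], fun t ht => ?_⟩
  obtain ⟨h1, h2, h3, -, h5⟩ := hA t ht
  obtain ⟨h6, h7⟩ := hD t ht
  have h8 := (hB t ht).trans (le_abs_self B)
  have h9 := abs_nonneg B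
  refine ⟨by linarith, by linarith, by linarith, by linarith, ?_⟩
  have e : II 0 t S.dD = II 0 t S.dB + II 0 t S.dU + II 0 t (fun t x => S.vx t x ^ 2) := by
    rw [← II_add le_rfl (S.idB t) (S.idU t),
      ← II_add le_rfl (i1add (S.idB t) (S.idU t)) (i1sq (S.Mvx t))]
    rfl
  linarith

end Flow
end NSDecay

namespace NSDecay
namespace Flow
variable (S : Flow)

/-! ### Decay -/

/-- The dissipation over the last unit of time tends to zero. -/
theorem dD_tail {ε : ℝ} (hε : 0 < ε) : ∃ T : ℝ, 1 ≤ T ∧ ∀ t, T ≤ t → II (t - 1) t S.dD ≤ ε := by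
  obtain ⟨C, -, hC⟩ := S.uniform_bounds
  have hne : ((fun t => II 0 t S.dD) '' Ici 0).Nonempty := ⟨_, 0, mem_Ici.2 le_rfl, rfl⟩
  have hbd : BddAbove ((fun t => II 0 t S.dD) '' Ici 0) :=
    ⟨C, by rintro _ ⟨t, ht, rfl⟩; exact (hC t ht).2.2.2.2⟩
  obtain ⟨_, ⟨T, hT, rfl⟩, hlt⟩ := exists_lt_of_lt_csSup hne
    (show sSup ((fun t => II 0 t S.dD) '' Ici 0) - ε < _ by linarith)
  have hT : 0 ≤ T := hT
  refine ⟨T + 1, by linarith, fun t ht => ?_⟩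
  have h1 := II_split (f := S.dD) (s := t - 1) (t := t) (by linarith) (by linarith) (S.idD _) (S.idD _)
  have h2 := II_split (f := S.dD) (s := T) (t := t - 1) hT (by linarith) (S.idD _) (S.idD _)
  have h3 : 0 ≤ II T (t - 1) S.dD := II_nonneg S.dD_nonneg
  have h4 : II 0 t S.dD ≤ sSup ((fun t => II 0 t S.dD) '' Ici 0) :=
    le_csSup hbd ⟨t, mem_Ici.2 (by linarith), rfl⟩
  simp only at hlt
  linarith

/-- By averaging, some time in the last unit interval has small instantaneous dissipation. -/
theorem exists_slice {t e : ℝ} (ht : 1 ≤ t) (he : 0 < e) (h : II (t - 1) t S.dD ≤ e) :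
    ∃ s ∈ Icc (t - 1) t, ∫ x, S.dD s x ≤ 2 * e := by
  by_contra! hcon
  rw [II_eq (by linarith) (by linarith) (S.idD t)] at h
  have h1 : ∫ _ in (t - 1)..t, 2 * e ≤ ∫ τ in (t - 1)..t, ∫ x, S.dD τ x :=
    intervalIntegral.integral_mono_on (by linarith) intervalIntegrable_const
      (II_ii (by linarith) (by linarith) (S.idD t)) fun τ hτ => (hcon τ hτ).le
  simp at h1
  linarith

theorem int_uq (s t : ℝ) : ∫ x, S.u s x * S.q t x = - ∫ x, S.ux s x * Real.log (S.v t x) :=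
  integral_mul_deriv_eq_deriv_mul_of_integrable (fun x _ => S.du s x) (fun x _ => S.dq t x)
    (mul_int (S.Lu s) (S.Lq t)) (mul_int (S.Lux s) (S.Ll t)) (mul_int (S.Lu s) (S.Ll t))

theorem int_log_sq (t : ℝ) :
    ∫ x, Real.log (S.v t x) ^ 2 ≤ S.K ^ 2 * ∫ x, (S.v t x - 1) ^ 2 := by
  rw [← integral_const_mul]
  refine integral_mono (sq_int (S.Ll t)) ((sq_int (S.Lv t)).const_mul _) fun x => ?_
  have h := pow_le_pow_left₀ (abs_nonneg _) (abs_log_le S.hK (S.vlo t x)) 2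
  rw [mul_pow, sq_abs, sq_abs] at h
  exact h

theorem II_const_slice {f : ℝ → ℝ} {s t : ℝ} (hs : 0 ≤ s) (hst : s ≤ t)
    (hf : I1 t fun _ x => f x) : II s t (fun _ x => f x) = (t - s) * ∫ x, f x := by
  rw [II_eq hs hst hf]; simp

set_option maxHeartbeats 4000000 in
/-- Smallness of the dissipation on `[t - 1, t]` forces smallness of `v_x` at time `t`. -/
theorem vx_small : ∃ C : ℝ, ∀ η : ℝ, 0 < η → η ≤ 1 → ∀ t : ℝ, 1 ≤ t →
    II (t - 1) t S.dD ≤ η ^ 4 → ∫ x, S.vx t x ^ 2 ≤ C * η := by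
  obtain ⟨C, hC1, hC⟩ := S.uniform_bounds
  have hC0 : 0 < C := by linarith
  have hR := S.hR
  have hcv := S.hcv
  have hK := S.Kpos
  have hμ := S.hμ
  have hκ := S.hκ
  have c1 := S.C1_nonneg
  have c2 := S.C2_nonneg
  have c3 := S.C3_nonneg
  -- constants for the square of the truncated temperature, for `∫ GG` and for the velocity increment
  obtain ⟨cS, hcS⟩ : ∃ c, c = 729 * 49 * C ^ 2 := ⟨_, rfl⟩
  obtain ⟨cG, hcG⟩ : ∃ c, c = 2 * cS
    + (S.μ * S.K + S.R * S.K / 2 + 3 * S.R * S.K / 2 * cS) / S.cv := ⟨_, rfl⟩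
  obtain ⟨cW, hcW⟩ : ∃ c, c = 2 * ((S.μ * S.K + 1) * 2 + 1
    + 2 * S.R ^ 2 * S.K ^ 2 * (4 * C + 81 * 49 * C ^ 2)) := ⟨_, rfl⟩
  obtain ⟨cF, hcF⟩ : ∃ c, c = S.μ / 2 * (2 * S.K ^ 2) + (C / 2 + S.K ^ 2)
    + S.R * S.cv / S.κ * (S.K ^ 2 * (2 * cS)) + C1 S.R S.K + C2 S.μ S.κ S.R S.cv S.K
    + C3 S.κ S.R S.cv S.K * cS := ⟨_, rfl⟩
  obtain ⟨cQ, hcQ⟩ : ∃ c, c = cF + (cW / 2 + S.K ^ 2 * C / 2 + 1 + S.K ^ 2 * C / 2)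
    + S.R * S.cv / S.κ * (S.K ^ 2 * cG) := ⟨_, rfl⟩
  have pS : 0 ≤ cS := by rw [hcS]; positivity
  have pG : 0 ≤ cG := by rw [hcG]; positivity
  refine ⟨S.K ^ 2 * (2 / S.μ * cQ), fun η hη hη1 t ht hsmall => ?_⟩
  have t0 : 0 ≤ t := by linarith
  have e4 : 0 < η ^ 4 := by positivity
  have e2 : 0 < η ^ 2 := by positivity
  have e42 : η ^ 4 ≤ η ^ 2 := pow_le_pow_of_le_one hη.le hη1 (by norm_num)
  have e21 : η ^ 2 ≤ η := by nlinarith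
  have e41 : η ^ 4 ≤ η := e42.trans e21
  obtain ⟨s, hs, hDs⟩ := S.exists_slice ht e4 hsmall
  have s0 : 0 ≤ s := by linarith [hs.1]
  have hst := hs.2
  obtain ⟨us, -, θs, vxs, -⟩ := hC s s0
  obtain ⟨-, vt, -, vxt, -⟩ := hC t t0
  have eD : ∫ x, S.dD s x = (∫ x, S.dB s x) + (∫ x, S.dU s x) + ∫ x, S.vx s x ^ 2 := by
    have := integral_add ((S.i_dB s).add (S.i_dU s)) (S.i_vx2 s)
    rw [integral_add' (S.i_dB s) (S.i_dU s)] at this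
    exact this
  have n1 : 0 ≤ ∫ x, S.dB s x := integral_nonneg fun _ => sq_nonneg _
  have n2 : 0 ≤ ∫ x, S.dU s x := integral_nonneg fun _ => sq_nonneg _
  have n3 : 0 ≤ ∫ x, S.vx s x ^ 2 := integral_nonneg fun _ => sq_nonneg _
  have bB : ∫ x, S.dB s x ≤ 2 * η ^ 4 := by linarith
  have bU : ∫ x, S.dU s x ≤ 2 * η ^ 4 := by linarith
  have bV : ∫ x, S.vx s x ^ 2 ≤ 2 * η ^ 4 := by linarith
  have hsm : II s t S.dD ≤ η ^ 4 :=
    (II_mono_left (by linarith) hs.1 S.dD_nonneg (S.idD t)).trans hsmall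
  have IB : II s t S.dB ≤ η ^ 4 :=
    (II_mono s0 (S.idB t) (S.idD t) fun τ _ x => by
      have := S.dU_nonneg τ x; unfold dD; nlinarith [sq_nonneg (S.vx τ x)]).trans hsm
  have IU : II s t S.dU ≤ η ^ 4 :=
    (II_mono s0 (S.idU t) (S.idD t) fun τ _ x => by
      have := S.dB_nonneg τ x; unfold dD; nlinarith [sq_nonneg (S.vx τ x)]).trans hsm
  have IS : II s t S.dS ≤ cS * η ^ 4 :=
    (S.II_dS_le s0 hst hC0 fun τ hτ => (hC τ hτ).2.2.1).trans (by rw [hcS]; gcongr)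
  have Gs : ∫ x, GG (S.θ s x) ≤ 2 * cS * η ^ 4 := by
    have h1 : ∫ x, GG (S.θ s x) ≤ ∫ x, S.dS s x :=
      integral_mono (S.iGG s) (S.i_sp2 s) fun x => GG_le_sp_sq (S.θpos s x)
    have h2 := S.dS_bound s hC0 θs
    have h3 : 729 * 49 * C ^ 2 * (∫ x, S.dB s x) ≤ cS * (2 * η ^ 4) := by rw [hcS]; gcongr
    linarith
  have Gt : ∫ x, GG (S.θ t x) ≤ cG * η ^ 4 := by
    have h := S.balance_gg_upper s0 hst
    have k1 : (S.μ * S.K + S.R * S.K / 2) * II s t S.dU ≤ (S.μ * S.K + S.R * S.K / 2) * η ^ 4 := by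
      gcongr
    have k2 : 3 * S.R * S.K / 2 * II s t S.dS ≤ 3 * S.R * S.K / 2 * (cS * η ^ 4) := by gcongr
    have k3 : S.cv * ∫ x, GG (S.θ s x) ≤ S.cv * (2 * cS * η ^ 4) := by gcongr
    have e : cG * η ^ 4 = S.cv⁻¹ * (S.cv * (2 * cS * η ^ 4)
        + (S.μ * S.K + S.R * S.K / 2) * η ^ 4 + 3 * S.R * S.K / 2 * (cS * η ^ 4)) := by
      rw [hcG]; field_simp; ring
    rw [e, le_inv_mul_iff₀ hcv]
    linarith
  -- `η ^ 2` balances the slice of size `η ^ 4` against the merely bounded temperature deviation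
  have W : ∫ x, (S.u t x - S.u s x) ^ 2 ≤ cW * η ^ 2 := by
    have h := S.balance_vel s0 hst e2
    rw [integral_div] at h
    have i0 : I1 t fun _ x => S.ux s x ^ 2 := i1sq (M2_const (S.cux_ s) (S.Lux s) t)
    rw [II_const_slice s0 hst i0] at h
    have k0 : (t - s) * (∫ x, S.ux s x ^ 2) ≤ 1 * (2 * η ^ 4) :=
      mul_le_mul (by linarith [hs.1]) bU n2 (by norm_num)
    have k1 : (S.μ * S.K + (η ^ 2)⁻¹) * ((t - s) * ∫ x, S.ux s x ^ 2)
        ≤ (S.μ * S.K + 1) * 2 * η ^ 2 := by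
      calc _ ≤ (S.μ * S.K + (η ^ 2)⁻¹) * (1 * (2 * η ^ 4)) := by gcongr
        _ = S.μ * S.K * 2 * η ^ 4 + 2 * η ^ 2 := by field_simp
        _ ≤ S.μ * S.K * 2 * η ^ 2 + 2 * η ^ 2 := by gcongr
        _ = _ := by ring
    have k2 : (η ^ 2)⁻¹ * II s t S.dU ≤ η ^ 2 := by
      calc _ ≤ (η ^ 2)⁻¹ * η ^ 4 := by gcongr
        _ = η ^ 2 := by field_simp
    have k3 : II s t (fun t x => (S.θ t x - 1) ^ 2 + (S.v t x - 1) ^ 2)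
        ≤ 4 * C + 81 * 49 * C ^ 2 := by
      have ii := (II_ii s0 hst (S.idB t)).const_mul (81 * 49 * C ^ 2)
      have j1 : ∫ τ in s..t, ∫ x, ((S.θ τ x - 1) ^ 2 + (S.v τ x - 1) ^ 2)
          ≤ ∫ τ in s..t, (4 * C + 81 * 49 * C ^ 2 * ∫ x, S.dB τ x) := by
        refine intervalIntegral.integral_mono_on hst
          (II_ii s0 hst (i1add (i1sq (S.Mθ t)) (i1sq (S.Mv t))))
          (intervalIntegrable_const.add ii) fun τ hτ => ?_
        obtain ⟨-, hv, hθ, -, -⟩ := hC τ (s0.trans hτ.1)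
        rw [integral_add (sq_int (S.Lθ τ)) (sq_int (S.Lv τ))]
        have := S.θ_sq_bound τ hC0 hθ
        linarith
      rw [II_eq s0 hst (i1add (i1sq (S.Mθ t)) (i1sq (S.Mv t)))]
      rw [intervalIntegral.integral_add intervalIntegrable_const ii,
        intervalIntegral.integral_const, smul_eq_mul,
        intervalIntegral.integral_const_mul, ← II_eq s0 hst (S.idB t)] at j1
      have j2 : (t - s) * (4 * C) ≤ 1 * (4 * C) := by
        have := hs.1
        have : t - s ≤ 1 := by linarith
        gcongr
      have j3 : 81 * 49 * C ^ 2 * II s t S.dB ≤ 81 * 49 * C ^ 2 * 1 := by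
        have : II s t S.dB ≤ 1 := IB.trans (e41.trans hη1)
        gcongr
      linarith
    have k4 : η ^ 2 * (2 * S.R ^ 2 * S.K ^ 2) *
          II s t (fun t x => (S.θ t x - 1) ^ 2 + (S.v t x - 1) ^ 2)
        ≤ η ^ 2 * (2 * S.R ^ 2 * S.K ^ 2) * (4 * C + 81 * 49 * C ^ 2) := by gcongr
    rw [hcW]
    linarith
  have qs : ∫ x, S.q s x ^ 2 ≤ 2 * S.K ^ 2 * η ^ 4 :=
    (S.int_q_le s).trans (by
      calc _ ≤ S.K ^ 2 * (2 * η ^ 4) := by gcongr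
        _ = _ := by ring)
  have qt : ∫ x, S.q t x ^ 2 ≤ S.K ^ 2 * C := (S.int_q_le t).trans (by gcongr)
  -- at time `s` every term of the gradient functional is small because the dissipation is
  have Fs : ∫ x, S.fv s x ≤ S.μ / 2 * (2 * S.K ^ 2) * η ^ 4 + (C / 2 + S.K ^ 2) * η ^ 2
      + S.R * S.cv / S.κ * (S.K ^ 2 * (2 * cS)) * η ^ 4 := by
    rw [S.int_fv s]
    have k1 : S.μ / 2 * (∫ x, S.q s x ^ 2) ≤ S.μ / 2 * (2 * S.K ^ 2 * η ^ 4) := by gcongr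
    have k2 := abs_int_mul_le (S.Lu s) (S.Lq s) (l := (η ^ 2)⁻¹) (by positivity)
    rw [inv_inv] at k2
    have k3 : η ^ 2 / 2 * (∫ x, S.u s x ^ 2) ≤ η ^ 2 / 2 * C := by gcongr
    have k4 : (η ^ 2)⁻¹ / 2 * (∫ x, S.q s x ^ 2) ≤ S.K ^ 2 * η ^ 2 := by
      calc _ ≤ (η ^ 2)⁻¹ / 2 * (2 * S.K ^ 2 * η ^ 4) := by gcongr
        _ = _ := by field_simp
    have k5 := neg_abs_le (∫ x, S.u s x * S.q s x)
    have k6 : S.R * S.cv / S.κ * (∫ x, GG (S.θ s x) * Real.log (S.v s x))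
        ≤ S.R * S.cv / S.κ * (S.K ^ 2 * (2 * cS * η ^ 4)) := by
      have : ∫ x, GG (S.θ s x) * Real.log (S.v s x) ≤ S.K ^ 2 * (2 * cS * η ^ 4) :=
        (le_abs_self _).trans ((S.abs_int_GGl s).trans (by gcongr))
      gcongr
    linarith
  have Ft : ∫ x, S.fv t x ≤ cF * η := by
    have h := S.balance_fv s0 hst
    have k0 : 0 ≤ S.R / (2 * S.K ^ 3) * II s t S.dV :=
      mul_nonneg (by positivity) (II_nonneg S.dV_nonneg)
    have k1 : C1 S.R S.K * II s t S.dB ≤ C1 S.R S.K * η := by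
      have := IB.trans e41
      gcongr
    have k2 : C2 S.μ S.κ S.R S.cv S.K * II s t S.dU ≤ C2 S.μ S.κ S.R S.cv S.K * η := by
      have := IU.trans e41
      gcongr
    have k3 : C3 S.κ S.R S.cv S.K * II s t S.dS ≤ C3 S.κ S.R S.cv S.K * (cS * η) := by
      have : II s t S.dS ≤ cS * η := IS.trans (by gcongr)
      gcongr
    have k4 : S.μ / 2 * (2 * S.K ^ 2) * η ^ 4 ≤ S.μ / 2 * (2 * S.K ^ 2) * η := by gcongr
    have k5 : (C / 2 + S.K ^ 2) * η ^ 2 ≤ (C / 2 + S.K ^ 2) * η := by gcongr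
    have k6 : S.R * S.cv / S.κ * (S.K ^ 2 * (2 * cS)) * η ^ 4
        ≤ S.R * S.cv / S.κ * (S.K ^ 2 * (2 * cS)) * η := by gcongr
    rw [hcF]
    linarith
  -- at time `t` the increment of `u` is small, and integration by parts moves the derivative from
  -- `log v` to `u` at time `s`, where `u_x` is small
  have uq : ∫ x, S.u t x * S.q t x ≤ (cW / 2 + S.K ^ 2 * C / 2 + 1 + S.K ^ 2 * C / 2) * η := by
    have e : ∫ x, S.u t x * S.q t x
        = (∫ x, (S.u t x - S.u s x) * S.q t x) + ∫ x, S.u s x * S.q t x := by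
      have i1 : Integrable fun x => (S.u t x - S.u s x) * S.q t x :=
        mul_int ((S.Lu t).sub (S.Lu s)) (S.Lq t)
      rw [← integral_add i1 (mul_int (S.Lu s) (S.Lq t))]
      congr 1; funext x; ring
    rw [e, S.int_uq s t]
    have k1 := abs_int_mul_le (f := fun x => S.u t x - S.u s x) ((S.Lu t).sub (S.Lu s)) (S.Lq t) hη
    have k2 := abs_int_mul_le (S.Lux s) (S.Ll t) e2
    have k3 : η⁻¹ / 2 * (∫ x, (S.u t x - S.u s x) ^ 2) ≤ cW / 2 * η := by
      calc _ ≤ η⁻¹ / 2 * (cW * η ^ 2) := by gcongr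
        _ = _ := by field_simp
    have k4 : η / 2 * (∫ x, S.q t x ^ 2) ≤ η / 2 * (S.K ^ 2 * C) := by gcongr
    have k5 : (η ^ 2)⁻¹ / 2 * (∫ x, S.ux s x ^ 2) ≤ η := by
      calc _ ≤ (η ^ 2)⁻¹ / 2 * (2 * η ^ 4) := mul_le_mul_of_nonneg_left bU (by positivity)
        _ = η ^ 2 := by field_simp
        _ ≤ η := e21
    have k6 : η ^ 2 / 2 * (∫ x, Real.log (S.v t x) ^ 2) ≤ η / 2 * (S.K ^ 2 * C) := by
      have : ∫ x, Real.log (S.v t x) ^ 2 ≤ S.K ^ 2 * C := (S.int_log_sq t).trans (by gcongr)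
      gcongr
    have k7 := le_abs_self (∫ x, (S.u t x - S.u s x) * S.q t x)
    have k8 := neg_abs_le (∫ x, S.ux s x * Real.log (S.v t x))
    linarith
  have fin : S.μ / 2 * (∫ x, S.q t x ^ 2) ≤ cQ * η := by
    have h := S.int_fv t
    have k6 : -(S.R * S.cv / S.κ * (∫ x, GG (S.θ t x) * Real.log (S.v t x)))
        ≤ S.R * S.cv / S.κ * (S.K ^ 2 * (cG * η)) := by
      have : -(∫ x, GG (S.θ t x) * Real.log (S.v t x)) ≤ S.K ^ 2 * (cG * η) :=
        (neg_le_abs _).trans ((S.abs_int_GGl t).trans (by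
          have : ∫ x, GG (S.θ t x) ≤ cG * η := Gt.trans (by gcongr)
          gcongr))
      rw [← mul_neg]
      gcongr
    rw [hcQ]
    linarith
  refine (S.int_vx_le t).trans ?_
  have : ∫ x, S.q t x ^ 2 ≤ 2 / S.μ * (cQ * η) := by
    calc ∫ x, S.q t x ^ 2 = 2 / S.μ * (S.μ / 2 * ∫ x, S.q t x ^ 2) := by field_simp
      _ ≤ _ := by gcongr
  calc _ ≤ S.K ^ 2 * (2 / S.μ * (cQ * η)) := by gcongr
    _ = _ := by ring

theorem vx_tendsto : Tendsto (fun t => ∫ x, S.vx t x ^ 2) atTop (nhds 0) := by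
  obtain ⟨C, hC⟩ := S.vx_small
  rw [Metric.tendsto_atTop]
  intro ε hε
  set η := min 1 (ε / (2 * (|C| + 1))) with hη
  have hη0 : 0 < η := by rw [hη]; positivity
  obtain ⟨T, hT1, hT⟩ := S.dD_tail (show 0 < η ^ 4 by positivity)
  refine ⟨T, fun t ht => ?_⟩
  have h := hC η hη0 (min_le_left _ _) t (hT1.trans ht) (hT t ht)
  rw [Real.dist_eq, sub_zero, abs_of_nonneg (integral_nonneg fun _ => sq_nonneg _)]
  have h1 : η * (2 * (|C| + 1)) ≤ ε := by
    have : η ≤ ε / (2 * (|C| + 1)) := min_le_right _ _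
    rwa [le_div_iff₀ (by positivity)] at this
  nlinarith [le_abs_self C, abs_nonneg C]

end Flow
end NSDecay

/-- decay of `‖v_x‖_{L²}` as `t → ∞`. -/
theorem vx_decay
    (μ κ R cv M m K : ℝ) (hμ : 0 < μ) (hκ : 0 < κ) (hR : 0 < R) (hcv : 0 < cv)
    (hM : 0 < M) (hm : 0 < m) (hK : 1 ≤ K)
    (v u θ : ℝ → ℝ → ℝ)
    (hsol : IsClassicalSolution μ κ R cv v u θ)
    (hinit : InitBounded M m v u θ)
    (hvol : VolBounded K v) :
    Tendsto (fun t => L2 (fun x => pdx v x t)) atTop (nhds 0) := by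
  obtain ⟨S, hS⟩ := NSDecay.exists_flow hμ hκ hR hcv hK hsol hvol
  have h0 : Tendsto (fun t => ENNReal.ofReal ((∫ x, S.vx t x ^ 2) ^ (2 : ℝ)⁻¹)) atTop (nhds 0) := by
    have h1 := S.vx_tendsto.rpow_const (p := (2 : ℝ)⁻¹) (Or.inr (by norm_num))
    rw [Real.zero_rpow (by norm_num)] at h1
    simpa using ENNReal.tendsto_ofReal h1
  refine h0.congr' ?_
  filter_upwards [eventually_ge_atTop 0] with t ht
  have e : (fun x => pdx v x t) = S.vx t := by funext x; exact (hS t x ht).symm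
  rw [e]
  unfold L2
  rw [(S.Lvx t).eLpNorm_eq_integral_rpow_norm (by norm_num) (by norm_num)]
  simp only [ENNReal.toReal_ofNat, Real.rpow_ofNat, Real.norm_eq_abs, sq_abs]
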